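/- arXiv:math/0609310 — 2 statements merged into one kernel-verified Lean document; each statement's English description precedes it below -/
import Mathlib

section
/- Let X be a geodesic metric space. Suppose that for every ν>0 there exists s₀>0 such that every Lipschitz loop γ in X with length(γ) ≥ s₀ bounds a singular Lipschitz disc of area at most ν·length(γ)² in L^∞(X). Then X is Gromov hyperbolic. (No further assumption, such as admissibility, is made on X.) -/
open scoped NNReal ENNReal
open MeasureTheory Filter

universe u v

namespace SharpIsop

/-- The closed unit disc `D² ⊂ ℝ²`. -/
def D2 : Set (ℝ × ℝ) := {p | p.1 ^ 2 + p.2 ^ 2 ≤ 1}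

/-- The length (total variation over `[0,1]`) of a curve `γ : [0,1] → X`. -/
noncomputable def loopLength {X : Type u} [PseudoEMetricSpace X] (γ : ℝ → X) : ℝ :=
  (eVariationOn γ (Set.Icc 0 1)).toReal

/-- A Lipschitz loop in `X`: a Lipschitz map `γ : [0,1] → X` with `γ 0 = γ 1`. -/
def IsLipLoop {X : Type u} [PseudoEMetricSpace X] (γ : ℝ → X) : Prop :=
  (∃ K : ℝ≥0, LipschitzOnWith K γ (Set.Icc 0 1)) ∧ γ 0 = γ 1

/-- The metric (directional) derivative of `φ : ℝ² → X` at `x` in direction `v`,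
defined via a `limsup` so that it is everywhere defined (and agrees a.e. with the
limit when the latter exists). -/
noncomputable def mder {X : Type u} [PseudoMetricSpace X] (φ : ℝ × ℝ → X)
    (x v : ℝ × ℝ) : ℝ :=
  Filter.limsup (fun r : ℝ => dist (φ (x + r • v)) (φ x) / r) (nhdsWithin 0 (Set.Ioi 0))

/-- The Jacobian of a (semi)norm `s` on `ℝ²`:  `π / Leb²({v : s v ≤ 1})` if this set
has finite measure, `0` otherwise. -/
noncomputable def jac2 (s : ℝ × ℝ → ℝ) : ℝ :=
  if volume {v : ℝ × ℝ | s v ≤ 1} < ⊤ then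
    Real.pi / (volume {v : ℝ × ℝ | s v ≤ 1}).toReal
  else 0

/-- The parametrized (Hausdorff) area of a map `φ : D² → X`. -/
noncomputable def lipArea {X : Type u} [PseudoMetricSpace X] (φ : ℝ × ℝ → X) : ℝ :=
  ∫ x in D2, jac2 (mder φ x)

/-- `φ : D² → X` is a singular Lipschitz disc bounding the loop `γ : [0,1] → X`. -/
def BoundsLoop {X : Type u} [PseudoMetricSpace X] (φ : ℝ × ℝ → X) (γ : ℝ → X) : Prop :=
  (∃ K : ℝ≥0, LipschitzOnWith K φ D2) ∧
    ∀ s ∈ Set.Icc (0:ℝ) 1, φ (Real.cos (2 * Real.pi * s), Real.sin (2 * Real.pi * s)) = γ s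

/-- `g : [0, d x y] → X` is a geodesic from `x` to `y`. -/
def IsGeodesicSeg {X : Type u} [MetricSpace X] (x y : X) (g : ℝ → X) : Prop :=
  g 0 = x ∧ g (dist x y) = y ∧
    ∀ s ∈ Set.Icc (0:ℝ) (dist x y), ∀ t ∈ Set.Icc (0:ℝ) (dist x y),
      dist (g s) (g t) = |s - t|

/-- A geodesic metric space: any two points are joined by a geodesic. -/
def GeodesicSpace (X : Type u) [MetricSpace X] : Prop :=
  ∀ x y : X, ∃ g : ℝ → X, IsGeodesicSeg x y g

/-- Gromov hyperbolicity via δ-slim geodesic triangles. -/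
def GromovHyperbolic (X : Type u) [MetricSpace X] : Prop :=
  ∃ δ : ℝ, 0 ≤ δ ∧
    ∀ x y z : X, ∀ gxy gyz gzx : ℝ → X,
      IsGeodesicSeg x y gxy → IsGeodesicSeg y z gyz → IsGeodesicSeg z x gzx →
      ∀ s ∈ Set.Icc (0:ℝ) (dist x y),
        ∃ p ∈ gyz '' Set.Icc (0:ℝ) (dist y z) ∪ gzx '' Set.Icc (0:ℝ) (dist z x),
          dist (gxy s) p ≤ δ

/-- `L^∞(X)`: the Banach space of bounded real functions on `X` with sup norm. -/
abbrev Linfty (X : Type u) : Type u := lp (fun _ : X => ℝ) ⊤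

/-- The Kuratowski embedding `x ↦ d(x,·) − d(x₀,·)` of `X` into `L^∞(X)`. -/
noncomputable def kuratowski (X : Type u) [MetricSpace X] (x₀ : X) (x : X) : Linfty X :=
  ⟨fun y => dist x y - dist x₀ y, memℓp_infty ⟨dist x x₀, by
    rintro t ⟨y, rfl⟩
    simpa [Real.norm_eq_abs] using abs_dist_sub_le x x₀ y⟩⟩

/-- `Y` admits a quadratic isoperimetric inequality for curves (with singular
Lipschitz discs as fillings). -/
def QuadIsopSpace (Y : Type u) [MetricSpace Y] : Prop :=
  ∃ C > (0:ℝ), ∀ c : ℝ → Y, IsLipLoop c →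
    ∃ φ : ℝ × ℝ → Y, BoundsLoop φ c ∧ lipArea φ ≤ C * (loopLength c) ^ 2

/-- `X` admits a disc-thickening with a quadratic isoperimetric inequality. -/
def HasDiscThickeningQII (X : Type u) [MetricSpace X] : Prop :=
  ∃ (X' : Type u) (m : MetricSpace X') (ι : X → X'),
    letI := m
    CompleteSpace X' ∧ Isometry ι ∧
      EMetric.hausdorffEdist (Set.range ι) (Set.univ : Set X') ≠ ⊤ ∧
      QuadIsopSpace X'


def Side {X : Type u} [MetricSpace X] (x y : X) (S : Set X) : Prop :=
  ∃ g : ℝ → X, IsGeodesicSeg x y g ∧ S = g '' Set.Icc (0:ℝ) (dist x y)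

def Conn {X : Type u} [MetricSpace X] (K : ℝ) (S : Set X) (a b : X) : Prop :=
  ∃ β : ℝ → X, (∀ s t, dist (β s) (β t) ≤ K * |s - t|) ∧ β 0 = a ∧ β 1 = b ∧
    (∀ t ≤ 0, β t = a) ∧ (∀ t, 1 ≤ t → β t = b) ∧ ∀ t, β t ∈ S

section comb
variable {X : Type u} [MetricSpace X]

lemma Side.symm {x y : X} {S : Set X} (h : Side x y S) : Side y x S := by
  obtain ⟨g, ⟨h0, h1, h2⟩, rfl⟩ := h
  refine ⟨fun t => g (dist x y - t), ⟨by simpa using h1, by simp [dist_comm y x, h0], ?_⟩, ?_⟩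
  · intro s hs t ht
    rw [dist_comm y x] at hs ht
    rw [h2 _ ⟨by linarith [hs.2], by linarith [hs.1]⟩ _ ⟨by linarith [ht.2], by linarith [ht.1]⟩]
    rw [abs_sub_comm s t]; congr 1; ring
  · ext p
    constructor
    · rintro ⟨t, ht, rfl⟩
      refine ⟨dist x y - t, ⟨by linarith [ht.2], by rw [dist_comm y x]; linarith [ht.1]⟩, by simp⟩
    · rintro ⟨t, ht, rfl⟩
      rw [dist_comm y x] at ht
      exact ⟨dist x y - t, ⟨by linarith [ht.2], by linarith [ht.1]⟩, rfl⟩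

lemma Side.left_mem {x y : X} {S : Set X} (h : Side x y S) : x ∈ S := by
  obtain ⟨g, ⟨h0, h1, h2⟩, rfl⟩ := h
  exact ⟨0, ⟨le_refl _, dist_nonneg⟩, h0⟩

lemma Side.right_mem {x y : X} {S : Set X} (h : Side x y S) : y ∈ S := h.symm.left_mem

lemma Side.dist_add {x y a : X} {S : Set X} (h : Side x y S) (ha : a ∈ S) :
    dist x a + dist a y = dist x y := by
  obtain ⟨g, ⟨h0, h1, h2⟩, rfl⟩ := h
  obtain ⟨t, ht, rfl⟩ := ha
  have e1 := h2 0 ⟨le_refl _, dist_nonneg⟩ t ht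
  have e2 := h2 t ht _ ⟨dist_nonneg, le_refl _⟩
  rw [h0] at e1
  rw [h1] at e2
  rw [e1, e2, abs_of_nonpos (by linarith [ht.1]), abs_of_nonpos (by linarith [ht.2])]
  ring

lemma geod_sub {x y : X} {g : ℝ → X} (h : IsGeodesicSeg x y g) {s t : ℝ} (hs : 0 ≤ s)
    (hst : s ≤ t) (ht : t ≤ dist x y) :
    Side (g s) (g t) (g '' Set.Icc s t) := by
  obtain ⟨h0, h1, h2⟩ := h
  have hd : dist (g s) (g t) = t - s := by
    rw [h2 s ⟨hs, by linarith⟩ t ⟨by linarith, ht⟩, abs_of_nonpos (by linarith)]; ring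
  refine ⟨fun τ => g (s + τ), ⟨by simp, by rw [hd]; simp, ?_⟩, ?_⟩
  · intro a ha b hb
    rw [hd] at ha hb
    rw [h2 _ ⟨by linarith [ha.1], by linarith [ha.2]⟩ _ ⟨by linarith [hb.1], by linarith [hb.2]⟩]
    congr 1; ring
  · rw [hd]
    ext p
    constructor
    · rintro ⟨a, ha, rfl⟩
      exact ⟨a - s, ⟨by linarith [ha.1], by linarith [ha.2]⟩, by simp⟩
    · rintro ⟨a, ha, rfl⟩
      exact ⟨s + a, ⟨by linarith [ha.1], by linarith [ha.2]⟩, rfl⟩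

lemma Side.sub {x y a b : X} {S : Set X} (h : Side x y S) (ha : a ∈ S) (hb : b ∈ S) :
    ∃ T, Side a b T ∧ T ⊆ S := by
  obtain ⟨g, hg, rfl⟩ := h
  obtain ⟨s, hs, rfl⟩ := ha
  obtain ⟨t, ht, rfl⟩ := hb
  rcases le_total s t with hst | hst
  · exact ⟨_, geod_sub hg hs.1 hst ht.2, Set.image_mono (Set.Icc_subset_Icc hs.1 ht.2)⟩
  · exact ⟨_, (geod_sub hg ht.1 hst hs.2).symm, Set.image_mono (Set.Icc_subset_Icc ht.1 hs.2)⟩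

lemma Side.around {x y p : X} {S : Set X} (h : Side x y S) (hp : p ∈ S) {r₁ r₂ : ℝ}
    (h1 : 0 ≤ r₁) (h2 : 0 ≤ r₂) (h1' : r₁ ≤ dist x p) (h2' : r₂ ≤ dist p y) :
    ∃ a b T, a ∈ S ∧ b ∈ S ∧ Side a b T ∧ p ∈ T ∧ dist a p = r₁ ∧ dist p b = r₂ ∧
      dist x a + r₁ = dist x p ∧ r₂ + dist b y = dist p y := by
  obtain ⟨g, hg, rfl⟩ := h
  obtain ⟨s, hs, rfl⟩ := hp
  have e1 := hg.2.2 0 ⟨le_refl _, dist_nonneg⟩ s hs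
  have e2 := hg.2.2 s hs _ ⟨dist_nonneg, le_refl _⟩
  rw [hg.1, abs_of_nonpos (by linarith [hs.1])] at e1
  rw [hg.2.1, abs_of_nonpos (by linarith [hs.2])] at e2
  have m1 : s - r₁ ∈ Set.Icc 0 (dist x y) := ⟨by linarith, by linarith [hs.2]⟩
  have m2 : s + r₂ ∈ Set.Icc 0 (dist x y) := ⟨by linarith [hs.1], by linarith⟩
  refine ⟨g (s - r₁), g (s + r₂), _, ⟨_, m1, rfl⟩, ⟨_, m2, rfl⟩,
    geod_sub hg m1.1 (by linarith) m2.2, ⟨s, ⟨by linarith, by linarith⟩, rfl⟩, ?_, ?_, ?_, ?_⟩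
  · rw [hg.2.2 _ m1 _ hs, abs_of_nonpos (by linarith)]; ring
  · rw [hg.2.2 _ hs _ m2, abs_of_nonpos (by linarith)]; ring
  · have e3 := hg.2.2 0 ⟨le_refl _, dist_nonneg⟩ _ m1
    rw [hg.1, abs_of_nonpos (by linarith [m1.1])] at e3
    linarith
  · have e3 := hg.2.2 _ m2 _ ⟨dist_nonneg, le_refl _⟩
    rw [hg.2.1, abs_of_nonpos (by linarith [m2.2])] at e3
    linarith

lemma Side.conn {x y : X} {S : Set X} (h : Side x y S) : Conn (dist x y) S x y := by
  obtain ⟨g, ⟨h0, h1, h2⟩, rfl⟩ := h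
  have hd : 0 ≤ dist x y := dist_nonneg
  set c : ℝ → ℝ := fun t => max 0 (min 1 t) with hc
  have c0 : ∀ t, 0 ≤ c t := fun t => le_max_left _ _
  have c1 : ∀ t, c t ≤ 1 := fun t => max_le zero_le_one (min_le_left _ _)
  have m : ∀ t, dist x y * c t ∈ Set.Icc (0:ℝ) (dist x y) := fun t =>
    ⟨mul_nonneg hd (c0 t), by nlinarith [c1 t]⟩
  refine ⟨fun t => g (dist x y * c t), ?_, by simp [hc, h0], by simp [hc, h1], ?_, ?_, ?_⟩
  · intro s t
    rw [h2 _ (m s) _ (m t), ← mul_sub, abs_mul, abs_of_nonneg hd]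
    refine mul_le_mul_of_nonneg_left ?_ hd
    simp only [hc]
    refine (abs_max_sub_max_le_max 0 (min 1 s) 0 (min 1 t)).trans ?_
    rw [sub_self, abs_zero]
    refine max_le (abs_nonneg _) ?_
    exact abs_min_sub_min_le_max 1 s 1 t |>.trans (by simp)
  · intro t ht
    have : c t = 0 := by simp only [hc]; rw [max_eq_left]; exact (min_le_right _ _).trans ht
    simp [this, h0]
  · intro t ht
    have : c t = 1 := by simp only [hc]; rw [min_eq_left ht]; simp
    simp [this, h1]
  · intro t
    exact ⟨_, m t, rfl⟩

lemma Conn.mono {K K' : ℝ} {S S' : Set X} {a b : X} (h : Conn K S a b) (hK : K ≤ K')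
    (hS : S ⊆ S') : Conn K' S' a b := by
  obtain ⟨β, h1, h2, h3, h4, h5, h6⟩ := h
  exact ⟨β, fun s t => (h1 s t).trans (by gcongr), h2, h3, h4, h5, fun t => hS (h6 t)⟩

lemma Conn.trans {K : ℝ} {S : Set X} {a b c : X} (h : Conn K S a b) (h' : Conn K S b c) :
    Conn (2 * K) S a c := by
  obtain ⟨β, h1, h2, h3, h4, h5, h6⟩ := h
  obtain ⟨β', h1', h2', h3', h4', h5', h6'⟩ := h'
  have key : ∀ s t, s ≤ 1/2 → 1/2 ≤ t →
      dist (β (2 * s)) (β' (2 * t - 1)) ≤ 2 * K * |s - t| := by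
    intro s t hs ht
    have e1 := h1 (2 * s) 1
    have e2 := h1' 0 (2 * t - 1)
    rw [h3] at e1
    rw [h2'] at e2
    rw [abs_of_nonpos (by linarith)] at e1 e2 ⊢
    have := dist_triangle (β (2 * s)) b (β' (2 * t - 1))
    linarith
  refine ⟨fun t => if t ≤ 1/2 then β (2 * t) else β' (2 * t - 1), ?_, ?_, ?_, ?_, ?_, ?_⟩
  · intro s t
    by_cases hs : s ≤ 1/2 <;> by_cases ht : t ≤ 1/2 <;> simp only [hs, ht, if_true, if_false]
    · refine (h1 _ _).trans_eq ?_
      rw [← mul_sub, abs_mul, abs_two]; ring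
    · exact key s t hs (by linarith)
    · rw [dist_comm, abs_sub_comm]; exact key t s ht (by linarith)
    · refine (h1' _ _).trans_eq ?_
      rw [show 2 * s - 1 - (2 * t - 1) = 2 * (s - t) by ring, abs_mul, abs_two]; ring
  · norm_num [h2]
  · norm_num [h3']
  · intro t ht
    dsimp only
    rw [if_pos (by linarith)]; exact h4 _ (by linarith)
  · intro t ht
    dsimp only
    rw [if_neg (by linarith)]; exact h5' _ (by linarith)
  · intro t
    dsimp only
    split_ifs
    · exact h6 _
    · exact h6' _

/-- No fat triangles of perimeter at most `R`. -/
def NonFat (X : Type u) [MetricSpace X] (R E : ℝ) : Prop :=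
  ∀ (x y z : X) (S₁ S₂ S₃ : Set X), Side x y S₁ → Side y z S₂ → Side z x S₃ →
    dist x y + dist y z + dist z x ≤ R → ∀ p ∈ S₁, ∃ q ∈ S₂ ∪ S₃, dist p q ≤ E

/-- A fat configuration at scale `D`. -/
def Good (X : Type u) [MetricSpace X] (D : ℝ) : Prop :=
  ∃ (a b : X) (H : Set X) (p : X), Side a b H ∧ p ∈ H ∧ dist a b ≤ 60 * D ∧
    Conn (240 * D) {x | D / 2 ≤ dist p x} b a

lemma conn3 {D : ℝ} (hD : 0 < D) {S : Set X} {a b c d : X} (h1 : Conn (60 * D) S a b)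
    (h2 : Conn (60 * D) S b c) (h3 : Conn (60 * D) S c d) : Conn (240 * D) S a d := by
  have := (h1.trans h2).trans (h3.mono (K' := 2 * (60 * D)) (by linarith) subset_rfl)
  exact this.mono (by linarith) subset_rfl

lemma side_exists (hX : GeodesicSpace X) (a b : X) : ∃ S, Side a b S := by
  obtain ⟨g, hg⟩ := hX a b
  exact ⟨_, g, hg, rfl⟩

lemma corner (hX : GeodesicSpace X) {R D : ℝ} (hD : 0 < D) (hR : NonFat X R (3 * D)) {z a b q : X}
    {S₁ S₂ H : Set X} (h1 : Side z a S₁) (h2 : Side z b S₂) (hH : Side a b H)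
    (hab : dist a b ≤ 22 * D) (hq : q ∈ H) (hp : dist z a + dist a b + dist b z ≤ R)
    (f1 : ∀ x ∈ S₁, D / 2 ≤ dist q x) (f2 : ∀ x ∈ S₂, D / 2 ≤ dist q x) : Good X D := by
  refine ⟨a, b, H, q, hH, hq, by linarith, ?_⟩
  by_cases hz : dist z a ≤ 30 * D
  · have hbz : dist b z ≤ 60 * D := by
      have := dist_triangle b a z
      rw [dist_comm b a, dist_comm a z] at this
      linarith
    have c1 := h2.symm.conn.mono hbz f2
    have c2 := h1.conn.mono (K' := 60 * D) (by linarith) f1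
    exact (c1.trans c2).mono (by linarith) subset_rfl
  · push Not at hz
    obtain ⟨w, _, T, hw, -, -, -, hwa, -, -, -⟩ := h1.around h1.right_mem (r₁ := 30 * D) (r₂ := 0)
      (by positivity) le_rfl hz.le dist_nonneg
    obtain ⟨w', hw', hww⟩ := hR z a b S₁ H S₂ h1 hH h2.symm hp w hw
    have hqa : dist a q ≤ 22 * D := by
      have := hH.dist_add hq
      have := dist_nonneg (x := q) (y := b)
      linarith
    rcases hw' with hw' | hw'
    · exfalso
      have e1 := hH.dist_add hw'
      have e2 := dist_nonneg (x := w') (y := b)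
      have e3 := dist_triangle w w' a
      rw [dist_comm w' a] at e3
      linarith
    · obtain ⟨T1, hT1, sT1⟩ := h2.sub h2.right_mem hw'
      obtain ⟨T2, hT2⟩ := side_exists hX w' w
      obtain ⟨T3, hT3, sT3⟩ := h1.sub hw h1.right_mem
      refine conn3 hD (hT1.conn.mono ?_ (sT1.trans f2)) (hT2.conn.mono ?_ ?_)
        (hT3.conn.mono ?_ (sT3.trans f1))
      · have e1 := dist_triangle4 b a w w'
        rw [dist_comm b a, dist_comm a w] at e1
        linarith
      · rw [dist_comm]; linarith
      · intro x hx
        have e1 := hT2.dist_add hx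
        have e2 := dist_nonneg (x := w') (y := x)
        have e3 := dist_triangle4 w x q a
        rw [dist_comm w x, dist_comm x q, dist_comm q a] at e3
        rw [dist_comm] at hww
        show D / 2 ≤ dist q x
        linarith
      · linarith

lemma exists_good (hX : GeodesicSpace X) {R D : ℝ} (hD : 0 < D) (hR : NonFat X R (3 * D))
    {x y z p : X} {S₁ S₂ S₃ : Set X} (h1 : Side x y S₁) (h2 : Side y z S₂) (h3 : Side z x S₃)
    (hp : dist x y + dist y z + dist z x ≤ R) (hpS : p ∈ S₁)
    (f2 : ∀ q ∈ S₂, D ≤ dist p q) (f3 : ∀ q ∈ S₃, D ≤ dist p q) : Good X D := by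
  obtain ⟨x', y', T, hx', hy', hT, hpT, dx, dy, dx', dy'⟩ := h1.around hpS
    (r₁ := min (8 * D) (dist x p)) (r₂ := min (8 * D) (dist p y))
    (le_min (by positivity) dist_nonneg) (le_min (by positivity) dist_nonneg)
    (min_le_right _ _) (min_le_right _ _)
  have f23 : ∀ q ∈ S₂ ∪ S₃, D ≤ dist p q := fun q hq => hq.elim (f2 q) (f3 q)
  have dx8 : dist x' p ≤ 8 * D := dx ▸ min_le_left _ _
  have dy8 : dist p y' ≤ 8 * D := dy ▸ min_le_left _ _
  have weak : ∀ q, D ≤ dist p q → D / 2 ≤ dist p q := fun q hq => by linarith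
  -- left transversal
  have left : ∃ x'' ∈ S₂ ∪ S₃, ∃ U, Side x' x'' U ∧ dist x' x'' ≤ 3 * D ∧
      ∀ q ∈ U, D ≤ dist p q := by
    rcases le_total (8 * D) (dist x p) with h | h
    · rw [min_eq_left h] at dx dx'
      obtain ⟨q, hq, hd⟩ := hR x y z S₁ S₂ S₃ h1 h2 h3 hp x' hx'
      obtain ⟨U, hU⟩ := side_exists hX x' q
      refine ⟨q, hq, U, hU, hd, fun w hw => ?_⟩
      have e1 := hU.dist_add hw
      have e2 := dist_nonneg (x := w) (y := q)
      have e3 := dist_triangle x' w p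
      rw [dist_comm w p] at e3
      linarith
    · rw [min_eq_right h] at dx dx'
      have e := h1.dist_add hx'
      have e' := h1.dist_add hpS
      have : x' = x := by
        have e3 : dist x x' ≤ 0 := by linarith
        exact (dist_le_zero.1 e3).symm
      subst this
      obtain ⟨U, hU, sU⟩ := h3.sub h3.right_mem h3.right_mem
      exact ⟨x', Or.inr h3.right_mem, U, hU, by simp; positivity, fun w hw => f3 w (sU hw)⟩
  have right : ∃ y'' ∈ S₂ ∪ S₃, ∃ U, Side y' y'' U ∧ dist y' y'' ≤ 3 * D ∧
      ∀ q ∈ U, D ≤ dist p q := by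
    rcases le_total (8 * D) (dist p y) with h | h
    · rw [min_eq_left h] at dy dy'
      obtain ⟨q, hq, hd⟩ := hR x y z S₁ S₂ S₃ h1 h2 h3 hp y' hy'
      obtain ⟨U, hU⟩ := side_exists hX y' q
      refine ⟨q, hq, U, hU, hd, fun w hw => ?_⟩
      have e1 := hU.dist_add hw
      have e2 := dist_nonneg (x := w) (y := q)
      have e3 := dist_triangle p w y'
      rw [dist_comm w y'] at e3
      linarith
    · rw [min_eq_right h] at dy dy'
      have e := h1.dist_add hy'
      have e' := h1.dist_add hpS
      have : y' = y := by
        have e3 : dist y' y ≤ 0 := by linarith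
        exact (dist_le_zero.1 e3)
      subst this
      obtain ⟨U, hU, sU⟩ := h2.sub h2.left_mem h2.left_mem
      exact ⟨y', Or.inl h2.left_mem, U, hU, by simp; positivity, fun w hw => f2 w (sU hw)⟩
  obtain ⟨x'', mx, U, hU, dU, fU⟩ := left
  obtain ⟨y'', my, V, hV, dV, fV⟩ := right
  have dxy : dist x'' y'' ≤ 22 * D := by
    have e1 := dist_triangle4 x'' x' y' y''
    have e2 := dist_triangle x' p y'
    rw [dist_comm x'' x'] at e1
    linarith
  -- if some side between `y''` and `x''` is far from `p` then done
  have fin : ∀ H, Side x'' y'' H → (∀ q ∈ H, D / 2 ≤ dist p q) → Good X D := by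
    intro H hH fH
    refine ⟨x', y', T, p, hT, hpT, ?_, conn3 hD (hV.conn.mono (by linarith) ?_)
      (hH.symm.conn.mono ?_ fH) (hU.symm.conn.mono ?_ ?_)⟩
    · have e2 := dist_triangle x' p y'
      linarith
    · exact fun q hq => weak q (fV q hq)
    · rw [dist_comm]; linarith
    · rw [dist_comm]; linarith
    · exact fun q hq => weak q (fU q hq)
  -- the corner case
  have cor : ∀ S S', Side z x'' S → Side z y'' S' → (∀ q ∈ S, D ≤ dist p q) →
      (∀ q ∈ S', D ≤ dist p q) → dist z x'' + dist x'' y'' + dist y'' z ≤ R → Good X D := by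
    intro S S' hS hS' fS fS' hper
    obtain ⟨H, hH⟩ := side_exists hX x'' y''
    by_cases hc : ∀ q ∈ H, D / 2 ≤ dist p q
    · exact fin H hH hc
    · push Not at hc
      obtain ⟨q, hq, hpq⟩ := hc
      refine corner hX hD hR hS hS' hH dxy hq hper ?_ ?_
      · intro w hw
        have := dist_triangle p q w
        linarith [fS w hw]
      · intro w hw
        have := dist_triangle p q w
        linarith [fS' w hw]
  rcases mx with mx | mx <;> rcases my with my | my
  · obtain ⟨H, hH, sH⟩ := h2.sub mx my
    exact fin H hH fun q hq => weak q (f2 q (sH hq))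
  · obtain ⟨S, hS, sS⟩ := h2.sub h2.right_mem mx
    obtain ⟨S', hS', sS'⟩ := h3.sub h3.left_mem my
    refine cor S S' hS hS' (fun q hq => f2 q (sS hq)) (fun q hq => f3 q (sS' hq)) ?_
    have e1 := h2.dist_add mx
    have e2 := h3.dist_add my
    have e3 := dist_triangle4 x'' y x y''
    rw [dist_comm x'' y, dist_comm y x, dist_comm x y''] at e3
    rw [dist_comm z x'', dist_comm y'' z]
    linarith
  · obtain ⟨S, hS, sS⟩ := h3.sub h3.left_mem mx
    obtain ⟨S', hS', sS'⟩ := h2.sub h2.right_mem my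
    refine cor S S' hS hS' (fun q hq => f3 q (sS hq)) (fun q hq => f2 q (sS' hq)) ?_
    have e1 := h3.dist_add mx
    have e2 := h2.dist_add my
    have e3 := dist_triangle4 x'' x y y''
    linarith
  · obtain ⟨H, hH, sH⟩ := h3.sub mx my
    exact fin H hH fun q hq => weak q (f3 q (sH hq))

lemma good_of_not_hyp (hX : GeodesicSpace X) (hn : ¬ GromovHyperbolic X) (δ : ℝ) (hδ : 0 < δ) :
    ∃ D, δ ≤ D ∧ Good X D := by
  unfold GromovHyperbolic at hn
  push Not at hn
  obtain ⟨x, y, z, g1, g2, g3, hg1, hg2, hg3, s, hs, hfar⟩ := hn (2 * δ) (by positivity)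
  set R := dist x y + dist y z + dist z x with hRdef
  set A : Set ℝ := {E | ∃ (x y z p : X) (S₁ S₂ S₃ : Set X), Side x y S₁ ∧ Side y z S₂ ∧
    Side z x S₃ ∧ dist x y + dist y z + dist z x ≤ R ∧ p ∈ S₁ ∧ ∀ q ∈ S₂ ∪ S₃, E ≤ dist p q} with hA
  have hA0 : 2 * δ ∈ A := ⟨x, y, z, g1 s, _, _, _, ⟨g1, hg1, rfl⟩, ⟨g2, hg2, rfl⟩, ⟨g3, hg3, rfl⟩,
    le_rfl, ⟨s, hs, rfl⟩, fun q hq => (hfar q hq).le⟩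
  have hAb : BddAbove A := by
    refine ⟨R, ?_⟩
    rintro E ⟨x, y, z, p, S₁, S₂, S₃, h1, h2, h3, hper, hp, hE⟩
    have e1 := hE y (Or.inl h2.left_mem)
    have e2 := h1.dist_add hp
    have e3 := dist_nonneg (x := x) (y := p)
    have e4 := dist_nonneg (x := y) (y := z)
    have e5 := dist_nonneg (x := z) (y := x)
    linarith
  have hsup : 2 * δ ≤ sSup A := le_csSup hAb hA0
  obtain ⟨D, hDA, hD⟩ := exists_lt_of_lt_csSup ⟨_, hA0⟩ (show sSup A / 2 < sSup A by linarith)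
  have hDδ : δ < D := by linarith
  refine ⟨D, hDδ.le, ?_⟩
  obtain ⟨x, y, z, p, S₁, S₂, S₃, h1, h2, h3, hper, hp, hE⟩ := hDA
  refine exists_good hX (R := R) (by linarith) ?_ h1 h2 h3 hper hp
    (fun q hq => hE q (Or.inl hq)) (fun q hq => hE q (Or.inr hq))
  intro x y z S₁ S₂ S₃ h1 h2 h3 hper p hp
  by_contra! hcon
  have : 3 * D ∈ A := ⟨x, y, z, p, S₁, S₂, S₃, h1, h2, h3, hper, hp, fun q hq => (hcon q hq).le⟩
  have := le_csSup hAb this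
  linarith

end comb

section stokes

lemma hseq_tendsto : Tendsto (fun n : ℕ => (1 / ((n:ℝ) + 1))) atTop (nhdsWithin 0 {0}ᶜ) := by
  refine tendsto_nhdsWithin_iff.2 ⟨tendsto_one_div_add_atTop_nhds_zero_nat, ?_⟩
  refine Eventually.of_forall fun n => ?_
  have : (0:ℝ) < 1 / ((n:ℝ) + 1) := by positivity
  exact this.ne'

/-- The discrete Jacobian. -/
noncomputable def dJ (u v : ℝ × ℝ → ℝ) (h : ℝ) (x : ℝ × ℝ) : ℝ :=
  (u (x.1 + h, x.2) - u x) * (v (x.1 + h, x.2 + h) - v (x.1 + h, x.2)) -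
    (u (x.1, x.2 + h) - u x) * (v (x.1 + h, x.2 + h) - v (x.1, x.2 + h))

lemma dJ_integral {u v : ℝ × ℝ → ℝ} (hu : Continuous u) (hv : Continuous v)
    (pu : ∀ r θ, u (r, θ + 2 * Real.pi) = u (r, θ)) (pv : ∀ r θ, v (r, θ + 2 * Real.pi) = v (r, θ))
    (u1 : ∀ r θ, 1 ≤ r → u (r, θ) = u (1, θ)) (v1 : ∀ r θ, 1 ≤ r → v (r, θ) = v (1, θ))
    (v0 : ∀ r θ, r ≤ 0 → v (r, θ) = v (0, 0)) {h : ℝ} (h0 : 0 < h) (h1 : h ≤ 1) :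
    ∫ r in (-1:ℝ)..1, ∫ θ in (-Real.pi)..Real.pi, dJ u v h (r, θ) =
      h * ∫ θ in (-Real.pi)..Real.pi, u (1, θ) * (v (1, θ + h) - v (1, θ)) := by
  set E1 : ℝ → ℝ → ℝ := fun r θ => u (r, θ) * (v (r + h, θ) - v (r, θ)) with hE1
  set E2 : ℝ → ℝ → ℝ := fun r θ => u (r, θ) * (v (r, θ + h) - v (r, θ)) with hE2
  set G : ℝ → ℝ := fun r => ∫ θ in (-Real.pi)..Real.pi, E2 r θ with hG
  have cE1 : Continuous (Function.uncurry E1) := by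
    simp only [hE1, Function.uncurry_def]; fun_prop
  have cE2 : Continuous (Function.uncurry E2) := by
    simp only [hE2, Function.uncurry_def]; fun_prop
  have cG : Continuous G :=
    intervalIntegral.continuous_parametric_intervalIntegral_of_continuous' cE2 _ _
  have e1 : ∀ r : ℝ, ∫ θ in (-Real.pi)..Real.pi, dJ u v h (r, θ) = G (r + h) - G r := by
    intro r
    have c1 : Continuous fun θ => E1 r θ := by simp only [hE1]; fun_prop
    have c1' : Continuous fun θ => E1 r (θ + h) := by simp only [hE1]; fun_prop
    have c2 : Continuous fun θ => E2 r θ := by simp only [hE2]; fun_prop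
    have c2' : Continuous fun θ => E2 (r + h) θ := by simp only [hE2]; fun_prop
    have : ∀ θ, dJ u v h (r, θ) = (E1 r θ - E1 r (θ + h)) + (E2 (r + h) θ - E2 r θ) := by
      intro θ; simp only [dJ, hE1, hE2]; ring
    simp only [this]
    have i1 : IntervalIntegrable (fun θ => E1 r θ - E1 r (θ + h)) volume (-Real.pi) Real.pi :=
      (c1.sub c1').intervalIntegrable _ _
    have i2 : IntervalIntegrable (fun θ => E2 (r + h) θ - E2 r θ) volume (-Real.pi) Real.pi :=
      (c2'.sub c2).intervalIntegrable _ _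
    rw [intervalIntegral.integral_add i1 i2, intervalIntegral.integral_sub
      (c1.intervalIntegrable _ _) (c1'.intervalIntegrable _ _), intervalIntegral.integral_sub
      (c2'.intervalIntegrable _ _) (c2.intervalIntegrable _ _),
      intervalIntegral.integral_comp_add_right (fun θ => E1 r θ)]
    have per : Function.Periodic (fun θ => E1 r θ) (2 * Real.pi) := by
      intro θ; simp only [hE1, pu, pv]
    have := per.intervalIntegral_add_eq (-Real.pi) (-Real.pi + h)
    rw [show -Real.pi + 2 * Real.pi = Real.pi by ring,
      show -Real.pi + h + 2 * Real.pi = Real.pi + h by ring] at this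
    rw [this]; simp only [hG]; ring
  simp only [e1]
  have cG' : Continuous fun r => G (r + h) := by fun_prop
  rw [intervalIntegral.integral_sub (cG'.intervalIntegrable _ _) (cG.intervalIntegrable _ _),
    intervalIntegral.integral_comp_add_right (fun r => G r),
    intervalIntegral.integral_interval_sub_interval_comm (cG.intervalIntegrable _ _)
      (cG.intervalIntegrable _ _) (cG.intervalIntegrable _ _)]
  have z : ∫ r in (-1 + h)..(-1), G r = ∫ r in (-1 + h)..(-1), (0:ℝ) := by
    apply intervalIntegral.integral_congr
    intro r hr
    rw [Set.uIcc_of_ge (by linarith)] at hr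
    have hr0 : r ≤ 0 := by linarith [hr.2]
    simp only [hG, hE2]
    simp [v0 r _ hr0]
  have o : ∫ r in (1 + h)..1, G r = ∫ r in (1 + h)..1, G 1 := by
    apply intervalIntegral.integral_congr
    intro r hr
    rw [Set.uIcc_of_ge (by linarith)] at hr
    simp only [hG, hE2]
    simp only [u1 r _ hr.1, v1 r _ hr.1]
  rw [z, o]
  simp [hG, hE2]

lemma quot_tendsto {f : ℝ × ℝ → ℝ} {x : ℝ × ℝ} (hf : DifferentiableAt ℝ f x) (w : ℝ × ℝ) :
    Tendsto (fun n : ℕ => (f (x + (1 / ((n:ℝ) + 1)) • w) - f x) / (1 / ((n:ℝ) + 1))) atTop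
      (nhds (fderiv ℝ f x w)) := by
  have := (hf.hasFDerivAt.hasLineDerivAt w).tendsto_slope_zero.comp hseq_tendsto
  refine this.congr fun n => ?_
  simp [div_eq_inv_mul]

/-- The Jacobian determinant. -/
noncomputable def detJ (u v : ℝ × ℝ → ℝ) (x : ℝ × ℝ) : ℝ :=
  fderiv ℝ u x (1, 0) * fderiv ℝ v x (0, 1) - fderiv ℝ u x (0, 1) * fderiv ℝ v x (1, 0)

lemma dJ_tendsto {u v : ℝ × ℝ → ℝ} {x : ℝ × ℝ} (hu : DifferentiableAt ℝ u x)
    (hv : DifferentiableAt ℝ v x) :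
    Tendsto (fun n : ℕ => dJ u v (1 / ((n:ℝ) + 1)) x / (1 / ((n:ℝ) + 1)) ^ 2) atTop
      (nhds (detJ u v x)) := by
  have a := quot_tendsto hu (1, 0)
  have b := quot_tendsto hu (0, 1)
  have c := quot_tendsto hv (1, 1)
  have d := quot_tendsto hv (1, 0)
  have e := quot_tendsto hv (0, 1)
  have key := (a.mul (c.sub d)).sub (b.mul (c.sub e))
  have hval : fderiv ℝ u x (1, 0) * (fderiv ℝ v x (1, 1) - fderiv ℝ v x (1, 0)) -
      fderiv ℝ u x (0, 1) * (fderiv ℝ v x (1, 1) - fderiv ℝ v x (0, 1)) = detJ u v x := by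
    have : fderiv ℝ v x (1, 1) = fderiv ℝ v x (1, 0) + fderiv ℝ v x (0, 1) := by
      rw [← map_add]; simp
    rw [this]; unfold detJ; ring
  rw [hval] at key
  refine key.congr fun n => ?_
  have hn : (0:ℝ) < 1 / ((n:ℝ) + 1) := by positivity
  generalize 1 / ((n:ℝ) + 1) = h at hn
  obtain ⟨r, θ⟩ := x
  simp only [dJ, Prod.smul_mk, smul_eq_mul, mul_one, mul_zero, Prod.mk_add_mk, add_zero]
  field_simp
  ring

lemma lip1 {f : ℝ × ℝ → ℝ} {K : ℝ≥0} (hf : LipschitzWith K f) (x y : ℝ × ℝ) (h : ℝ)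
    (hxy : dist x y ≤ h) : |f x - f y| ≤ K * h := by
  have := hf.dist_le_mul x y
  rw [Real.dist_eq] at this
  exact this.trans (by gcongr)

lemma dJ_bound {u v : ℝ × ℝ → ℝ} {K : ℝ≥0} (hu : LipschitzWith K u) (hv : LipschitzWith K v)
    {h : ℝ} (h0 : 0 < h) (x : ℝ × ℝ) : |dJ u v h x / h ^ 2| ≤ 2 * K ^ 2 := by
  rw [abs_div, abs_of_pos (by positivity : 0 < h ^ 2), div_le_iff₀ (by positivity)]
  obtain ⟨r, θ⟩ := x
  have a := lip1 hu (r + h, θ) (r, θ) h (by simp [Prod.dist_eq, abs_of_pos h0, h0.le])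
  have b := lip1 hu (r, θ + h) (r, θ) h (by simp [Prod.dist_eq, abs_of_pos h0, h0.le])
  have c := lip1 hv (r + h, θ + h) (r + h, θ) h (by simp [Prod.dist_eq, abs_of_pos h0, h0.le])
  have d := lip1 hv (r + h, θ + h) (r, θ + h) h (by simp [Prod.dist_eq, abs_of_pos h0, h0.le])
  simp only [dJ]
  refine (abs_sub _ _).trans ?_
  rw [abs_mul, abs_mul]
  have k1 := mul_le_mul a c (abs_nonneg _) (by positivity)
  have k2 := mul_le_mul b d (abs_nonneg _) (by positivity)
  nlinarith

lemma stokes {u v : ℝ × ℝ → ℝ} {K : ℝ≥0} (hu : LipschitzWith K u) (hv : LipschitzWith K v)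
    (pu : ∀ r θ, u (r, θ + 2 * Real.pi) = u (r, θ)) (pv : ∀ r θ, v (r, θ + 2 * Real.pi) = v (r, θ))
    (u1 : ∀ r θ, 1 ≤ r → u (r, θ) = u (1, θ)) (v1 : ∀ r θ, 1 ≤ r → v (r, θ) = v (1, θ))
    (v0 : ∀ r θ, r ≤ 0 → v (r, θ) = v (0, 0)) :
    IntegrableOn (detJ u v) (Set.Ioo (0:ℝ) 1 ×ˢ Set.Ioo (-Real.pi) Real.pi) ∧
    ∫ x in Set.Ioo (0:ℝ) 1 ×ˢ Set.Ioo (-Real.pi) Real.pi, detJ u v x =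
      ∫ θ in (-Real.pi)..Real.pi, u (1, θ) * deriv (fun t => v (1, t)) θ := by
  set B : Set (ℝ × ℝ) := Set.Ioc (-1:ℝ) 1 ×ˢ Set.Ioc (-Real.pi) Real.pi with hB
  set B' : Set (ℝ × ℝ) := Set.Ioo (0:ℝ) 1 ×ˢ Set.Ioo (-Real.pi) Real.pi with hB'
  have hpi := Real.pi_pos
  have mB : MeasurableSet B := measurableSet_Ioc.prod measurableSet_Ioc
  have fB : volume B < ⊤ := by
    rw [hB, Measure.volume_eq_prod, Measure.prod_prod]; simp [ENNReal.mul_lt_top]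
  haveI : IsFiniteMeasure (volume.restrict B) := ⟨by simpa using fB⟩
  have cJ : ∀ h, Continuous (dJ u v h) := by
    intro h
    have := hu.continuous
    have := hv.continuous
    unfold dJ; fun_prop
  have ae1 : ∀ᵐ x ∂(volume : Measure (ℝ × ℝ)), DifferentiableAt ℝ u x := hu.ae_differentiableAt
  have ae2 : ∀ᵐ x ∂(volume : Measure (ℝ × ℝ)), DifferentiableAt ℝ v x := hv.ae_differentiableAt
  -- measurability of detJ
  have mdet : Measurable (detJ u v) := by
    unfold detJ
    exact ((measurable_fderiv_apply_const ℝ u _).mul (measurable_fderiv_apply_const ℝ v _)).sub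
      ((measurable_fderiv_apply_const ℝ u _).mul (measurable_fderiv_apply_const ℝ v _))
  have bdet : ∀ᵐ x ∂(volume : Measure (ℝ × ℝ)), ‖detJ u v x‖ ≤ 2 * K ^ 2 := by
    filter_upwards [ae1, ae2] with x h1 h2
    refine le_of_tendsto (dJ_tendsto h1 h2).norm (Eventually.of_forall fun n => ?_)
    exact dJ_bound hu hv (by positivity) x
  have idet : IntegrableOn (detJ u v) B :=
    Integrable.of_bound mdet.aestronglyMeasurable (2 * K ^ 2) (ae_restrict_of_ae bdet)
  have sub : B' ⊆ B := Set.prod_mono (fun r hr => ⟨by linarith [hr.1], hr.2.le⟩) Set.Ioo_subset_Ioc_self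
  refine ⟨idet.mono_set sub, ?_⟩
  -- limit 1
  have L1 : Tendsto (fun n : ℕ => ∫ x in B, dJ u v (1 / ((n:ℝ) + 1)) x / (1 / ((n:ℝ) + 1)) ^ 2)
      atTop (nhds (∫ x in B, detJ u v x)) := by
    refine tendsto_integral_of_dominated_convergence (fun _ => 2 * (K:ℝ) ^ 2) ?_ ?_ ?_ ?_
    · intro n
      exact ((cJ _).div_const _).aestronglyMeasurable
    · exact integrable_const _
    · intro n
      exact Eventually.of_forall fun x => dJ_bound hu hv (by positivity) x
    · refine ae_restrict_of_ae ?_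
      filter_upwards [ae1, ae2] with x h1 h2
      exact dJ_tendsto h1 h2
  have hV : LipschitzWith K (fun t => v (1, t)) := by
    refine LipschitzWith.of_dist_le_mul fun s t => (hv.dist_le_mul _ _).trans_eq ?_
    simp [Prod.dist_eq]
  have L2 : Tendsto (fun n : ℕ => ∫ θ in (-Real.pi)..Real.pi,
      u (1, θ) * ((v (1, θ + 1 / ((n:ℝ) + 1)) - v (1, θ)) / (1 / ((n:ℝ) + 1)))) atTop
      (nhds (∫ θ in (-Real.pi)..Real.pi, u (1, θ) * deriv (fun t => v (1, t)) θ)) := by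
    have cu := hu.continuous
    have cv := hv.continuous
    refine intervalIntegral.tendsto_integral_filter_of_dominated_convergence
      (fun θ => |u (1, θ)| * K) ?_ ?_ ?_ ?_
    · refine Eventually.of_forall fun n => ?_
      have : Continuous fun θ => u (1, θ) * ((v (1, θ + 1 / ((n:ℝ) + 1)) - v (1, θ)) / (1 / ((n:ℝ) + 1))) := by
        fun_prop
      exact this.aestronglyMeasurable
    · refine Eventually.of_forall fun n => Eventually.of_forall fun θ _ => ?_
      have hn : (0:ℝ) < 1 / ((n:ℝ) + 1) := by positivity
      rw [norm_mul, Real.norm_eq_abs, Real.norm_eq_abs]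
      gcongr
      rw [abs_div, abs_of_pos hn, div_le_iff₀ hn]
      generalize 1 / ((n:ℝ) + 1) = h at hn
      exact lip1 hv _ _ _ (by simp [Prod.dist_eq, abs_of_pos hn, hn.le])
    · have : Continuous fun θ => |u (1, θ)| * K := by fun_prop
      exact this.intervalIntegrable _ _
    · have := hV.ae_differentiableAt (μ := volume)
      filter_upwards [this] with θ hθ _
      refine Tendsto.const_mul _ ?_
      have := hθ.hasDerivAt.tendsto_slope_zero.comp hseq_tendsto
      refine this.congr fun n => ?_
      simp [div_eq_inv_mul]
  have eq : ∀ n : ℕ, ∫ x in B, dJ u v (1 / ((n:ℝ) + 1)) x / (1 / ((n:ℝ) + 1)) ^ 2 =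
      ∫ θ in (-Real.pi)..Real.pi,
        u (1, θ) * ((v (1, θ + 1 / ((n:ℝ) + 1)) - v (1, θ)) / (1 / ((n:ℝ) + 1))) := by
    intro n
    have hn : (0:ℝ) < 1 / ((n:ℝ) + 1) := by positivity
    have hn1 : 1 / ((n:ℝ) + 1) ≤ 1 := by
      rw [div_le_one (by positivity)]; linarith [Nat.cast_nonneg (α := ℝ) n]
    generalize 1 / ((n:ℝ) + 1) = h at hn hn1
    have key := dJ_integral hu.continuous hv.continuous pu pv u1 v1 v0 hn hn1
    rw [integral_div]
    have : ∫ x in B, dJ u v h x = ∫ r in (-1:ℝ)..1, ∫ θ in (-Real.pi)..Real.pi, dJ u v h (r, θ) := by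
      rw [hB, Measure.volume_eq_prod, setIntegral_prod]
      · rw [intervalIntegral.integral_of_le (by norm_num)]
        simp only [intervalIntegral.integral_of_le (show -Real.pi ≤ Real.pi by linarith)]
      · have : IntegrableOn (dJ u v h) (Set.Icc (-1:ℝ) 1 ×ˢ Set.Icc (-Real.pi) Real.pi) :=
          (cJ h).continuousOn.integrableOn_compact (isCompact_Icc.prod isCompact_Icc)
        exact this.mono_set (Set.prod_mono Set.Ioc_subset_Icc_self Set.Ioc_subset_Icc_self)
    rw [this, key]
    simp only [← mul_div_assoc]
    rw [intervalIntegral.integral_div]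
    field_simp
  have fin := tendsto_nhds_unique L1 (by simpa only [eq] using L2)
  rw [← fin]
  -- restrict to the smaller box
  have zero : ∀ x ∈ B, x.1 < 0 → detJ u v x = 0 := by
    intro x _ hx
    have : v =ᶠ[nhds x] fun _ => v (0, 0) := by
      have : ∀ᶠ y : ℝ × ℝ in nhds x, y.1 < 0 := continuous_fst.continuousAt.eventually_lt_const hx
      filter_upwards [this] with y hy
      exact v0 y.1 y.2 hy.le
    simp [detJ, this.fderiv_eq]
  have hae : (B' ∪ (Set.Ioo (-1:ℝ) 0 ×ˢ Set.Ioo (-Real.pi) Real.pi) : Set (ℝ × ℝ)) =ᵐ[volume] B := by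
    have h1 : (Set.Ioo (0:ℝ) 1 ∪ Set.Ioo (-1:ℝ) 0 : Set ℝ) =ᵐ[volume] Set.Ioc (-1:ℝ) 1 := by
      have : Set.Ioc (-1:ℝ) 1 = Set.Ioc 0 1 ∪ Set.Ioc (-1) 0 := by
        rw [Set.union_comm, Set.Ioc_union_Ioc_eq_Ioc] <;> norm_num
      rw [this]
      exact Ioo_ae_eq_Ioc.union Ioo_ae_eq_Ioc
    rw [← Set.union_prod, hB, Measure.volume_eq_prod]
    exact Measure.set_prod_ae_eq h1 Ioo_ae_eq_Ioc
  rw [← setIntegral_congr_set hae, setIntegral_union]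
  · rw [setIntegral_eq_zero_of_forall_eq_zero (t := Set.Ioo (-1:ℝ) 0 ×ˢ Set.Ioo (-Real.pi) Real.pi),
      add_zero]
    intro x hx
    exact zero x ⟨⟨hx.1.1, by linarith [hx.1.2]⟩, Set.Ioo_subset_Ioc_self hx.2⟩ hx.1.2
  · rw [Set.disjoint_left]
    intro x hx hx'
    linarith [hx.1.1, hx'.1.2]
  · exact measurableSet_Ioo.prod measurableSet_Ioo
  · exact idet.mono_set sub
  · exact idet.mono_set (Set.prod_mono (fun r hr => ⟨hr.1, by linarith [hr.2]⟩) Set.Ioo_subset_Ioc_self)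

end stokes

section jac

/-- The open disc. -/
def U2 : Set (ℝ × ℝ) := {p | p.1 ^ 2 + p.2 ^ 2 < 1}

lemma isOpen_U2 : IsOpen U2 := isOpen_lt (by fun_prop) (by fun_prop)

lemma isClosed_D2 : IsClosed D2 := isClosed_le (by fun_prop) (by fun_prop)

lemma U2_sub : U2 ⊆ D2 := fun x hx =>
  le_of_lt (show x.1 ^ 2 + x.2 ^ 2 < 1 from hx)

lemma line_mem {x : ℝ × ℝ} (hx : x ∈ U2) (v : ℝ × ℝ) :
    ∀ᶠ r : ℝ in nhdsWithin 0 (Set.Ioi 0), x + r • v ∈ D2 := by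
  have c : ContinuousAt (fun r : ℝ => x + r • v) 0 := by fun_prop
  have : ∀ᶠ r : ℝ in nhds 0, x + r • v ∈ U2 :=
    c.eventually_mem (isOpen_U2.mem_nhds (by simpa using hx))
  exact (this.filter_mono nhdsWithin_le_nhds).mono fun r hr => U2_sub hr

variable {E : Type*} [PseudoMetricSpace E]

lemma quot_bound {φ : ℝ × ℝ → E} {K : ℝ≥0} (hφ : LipschitzOnWith K φ D2) {x : ℝ × ℝ}
    (hx : x ∈ U2) (v : ℝ × ℝ) :
    ∀ᶠ r : ℝ in nhdsWithin 0 (Set.Ioi 0), dist (φ (x + r • v)) (φ x) / r ≤ K * ‖v‖ := by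
  filter_upwards [line_mem hx v, self_mem_nhdsWithin] with r hr hr0
  have hr0 : 0 < r := hr0
  rw [div_le_iff₀ hr0]
  refine (hφ.dist_le_mul _ hr _ (U2_sub hx)).trans_eq ?_
  rw [dist_eq_norm, add_sub_cancel_left, norm_smul, Real.norm_eq_abs, abs_of_pos hr0]; ring

lemma quot_nonneg (φ : ℝ × ℝ → E) (x v : ℝ × ℝ) :
    ∀ᶠ r : ℝ in nhdsWithin 0 (Set.Ioi 0), 0 ≤ dist (φ (x + r • v)) (φ x) / r := by
  filter_upwards [self_mem_nhdsWithin] with r hr0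
  have hr0 : 0 < r := hr0
  positivity

lemma quot_cobdd (φ : ℝ × ℝ → E) (x v : ℝ × ℝ) :
    IsCoboundedUnder (· ≤ ·) (nhdsWithin (0:ℝ) (Set.Ioi 0))
      (fun r : ℝ => dist (φ (x + r • v)) (φ x) / r) :=
  isCoboundedUnder_le_of_eventually_le _ (quot_nonneg φ x v)

lemma mder_le {φ : ℝ × ℝ → E} {K : ℝ≥0} (hφ : LipschitzOnWith K φ D2) {x : ℝ × ℝ}
    (hx : x ∈ U2) (v : ℝ × ℝ) : mder φ x v ≤ K * ‖v‖ :=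
  limsup_le_of_le (quot_cobdd φ x v) (quot_bound hφ hx v)

lemma mder_lt {φ : ℝ × ℝ → E} {K : ℝ≥0} (hφ : LipschitzOnWith K φ D2) {x : ℝ × ℝ}
    (hx : x ∈ U2) {v : ℝ × ℝ} {c : ℝ} (hc : mder φ x v < c) :
    ∀ᶠ r : ℝ in nhdsWithin 0 (Set.Ioi 0), dist (φ (x + r • v)) (φ x) / r < c :=
  eventually_lt_of_limsup_lt hc (isBoundedUnder_of_eventually_le (quot_bound hφ hx v))

/-- Basic closed sets for measurability. -/
def Skr (φ : ℝ × ℝ → E) (k : ℕ) (r : ℝ) : Set ((ℝ × ℝ) × (ℝ × ℝ)) :=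
  {q | (q.1 ∈ D2 ∧ q.1 + r • q.2 ∈ D2) ∧
    dist (φ (q.1 + r • q.2)) (φ q.1) ≤ (1 + 1 / ((k:ℝ) + 1)) * r}

lemma isClosed_Skr {φ : ℝ × ℝ → E} (hφ : ContinuousOn φ D2) (k : ℕ) (r : ℝ) :
    IsClosed (Skr φ k r) := by
  have h1 : IsClosed {q : (ℝ × ℝ) × (ℝ × ℝ) | q.1 ∈ D2 ∧ q.1 + r • q.2 ∈ D2} :=
    (isClosed_D2.preimage continuous_fst).inter
      (isClosed_D2.preimage (by fun_prop : Continuous fun q : (ℝ × ℝ) × (ℝ × ℝ) => q.1 + r • q.2))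
  have h2 : ContinuousOn (fun q : (ℝ × ℝ) × (ℝ × ℝ) => dist (φ (q.1 + r • q.2)) (φ q.1))
      {q : (ℝ × ℝ) × (ℝ × ℝ) | q.1 ∈ D2 ∧ q.1 + r • q.2 ∈ D2} := by
    exact continuous_dist.comp_continuousOn (ContinuousOn.prodMk
      (hφ.comp (g := φ) (by fun_prop) fun q hq => hq.2)
      (hφ.comp (g := φ) (by fun_prop) fun q hq => hq.1))
  exact h2.preimage_isClosed_of_isClosed h1 isClosed_Iic

/-- The measurable set of pairs with metric derivative at most one. -/
def Gset (φ : ℝ × ℝ → E) : Set ((ℝ × ℝ) × (ℝ × ℝ)) :=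
  ⋂ k : ℕ, ⋃ n : ℕ, ⋂ r ∈ Set.Ioo (0:ℝ) (1 / ((n:ℝ) + 1)), Skr φ k r

lemma measurable_Gset {φ : ℝ × ℝ → E} (hφ : ContinuousOn φ D2) : MeasurableSet (Gset φ) := by
  refine MeasurableSet.iInter fun k => MeasurableSet.iUnion fun n => IsClosed.measurableSet ?_
  exact isClosed_biInter fun r _ => isClosed_Skr hφ k r

lemma mem_Gset {φ : ℝ × ℝ → E} {K : ℝ≥0} (hφ : LipschitzOnWith K φ D2) {x : ℝ × ℝ}
    (hx : x ∈ U2) (v : ℝ × ℝ) : (x, v) ∈ Gset φ ↔ mder φ x v ≤ 1 := by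
  simp only [Gset, Set.mem_iInter, Set.mem_iUnion]
  constructor
  · intro H
    refine le_of_forall_pos_le_add fun ε hε => ?_
    obtain ⟨k, hk⟩ := exists_nat_one_div_lt hε
    obtain ⟨n, hn⟩ := H k
    refine limsup_le_of_le (quot_cobdd φ x v) ?_
    have hn0 : (0:ℝ) < 1 / ((n:ℝ) + 1) := by positivity
    filter_upwards [Ioo_mem_nhdsGT hn0] with r hr
    rw [div_le_iff₀ hr.1]
    refine (hn r hr).2.trans ?_
    have := hr.1
    gcongr
  · intro H k
    have hk : mder φ x v < 1 + 1 / ((k:ℝ) + 1) := H.trans_lt (by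
      have : (0:ℝ) < 1 / ((k:ℝ) + 1) := by positivity
      linarith)
    have ev := (mder_lt hφ hx hk).and (line_mem hx v)
    obtain ⟨e, he, hs⟩ := mem_nhdsGT_iff_exists_Ioo_subset.1 ev
    obtain ⟨n, hn⟩ := exists_nat_one_div_lt (show (0:ℝ) < e from he)
    refine ⟨n, fun r hr => ?_⟩
    have h := hs ⟨hr.1, hr.2.trans hn⟩
    refine ⟨⟨U2_sub hx, h.2⟩, ?_⟩
    exact ((div_lt_iff₀ hr.1).1 h.1).le

lemma jac2_nonneg (s : ℝ × ℝ → ℝ) : 0 ≤ jac2 s := by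
  unfold jac2; split_ifs <;> positivity

lemma vol_ball_le {φ : ℝ × ℝ → E} {K : ℝ≥0} (hφ : LipschitzOnWith K φ D2) {x : ℝ × ℝ}
    (hx : x ∈ U2) :
    volume (Metric.closedBall (0 : ℝ × ℝ) (1 / (K + 1))) ≤ volume {v | mder φ x v ≤ 1} := by
  refine measure_mono fun v hv => ?_
  have hv : ‖v‖ ≤ 1 / (K + 1) := by simpa using hv
  refine (mder_le hφ hx v).trans ?_
  rw [le_div_iff₀ (by positivity)] at hv
  nlinarith [norm_nonneg v]

lemma vol_pos {φ : ℝ × ℝ → E} {K : ℝ≥0} (hφ : LipschitzOnWith K φ D2) {x : ℝ × ℝ}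
    (hx : x ∈ U2) : 0 < volume {v | mder φ x v ≤ 1} :=
  (Metric.measure_closedBall_pos volume _ (by positivity)).trans_le (vol_ball_le hφ hx)

lemma jac2_bdd {φ : ℝ × ℝ → E} {K : ℝ≥0} (hφ : LipschitzOnWith K φ D2) {x : ℝ × ℝ}
    (hx : x ∈ U2) : jac2 (mder φ x) ≤
      Real.pi / (volume (Metric.closedBall (0 : ℝ × ℝ) (1 / (K + 1)))).toReal := by
  unfold jac2
  split_ifs with h
  · have hp : 0 < (volume (Metric.closedBall (0 : ℝ × ℝ) (1 / (K + 1)))).toReal :=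
      ENNReal.toReal_pos (Metric.measure_closedBall_pos volume _ (by positivity)).ne'
        measure_closedBall_lt_top.ne
    have := ENNReal.toReal_mono h.ne (vol_ball_le hφ hx)
    have := Real.pi_pos
    gcongr
  · positivity

lemma integrable_jac2 {φ : ℝ × ℝ → E} {K : ℝ≥0} (hφ : LipschitzOnWith K φ D2) :
    IntegrableOn (fun x => jac2 (mder φ x)) U2 := by
  have mG := measurable_Gset hφ.continuousOn
  have mm : Measurable fun x => volume (Prod.mk x ⁻¹' Gset φ) := measurable_measure_prodMk_left mG
  have mF : Measurable fun x => if volume (Prod.mk x ⁻¹' Gset φ) < ⊤ then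
      Real.pi / (volume (Prod.mk x ⁻¹' Gset φ)).toReal else 0 :=
    Measurable.ite (measurableSet_lt mm measurable_const) (mm.ennreal_toReal.const_div _)
      measurable_const
  have eqF : ∀ x ∈ U2, jac2 (mder φ x) = if volume (Prod.mk x ⁻¹' Gset φ) < ⊤ then
      Real.pi / (volume (Prod.mk x ⁻¹' Gset φ)).toReal else 0 := by
    intro x hx
    have : Prod.mk x ⁻¹' Gset φ = {v | mder φ x v ≤ 1} := by
      ext v; exact mem_Gset hφ hx v
    rw [this]; rfl
  have fU : volume U2 < ⊤ := by
    refine (measure_mono (t := Metric.closedBall (0 : ℝ × ℝ) 1) fun x hx => ?_).trans_lt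
      measure_closedBall_lt_top
    have hx : x.1 ^ 2 + x.2 ^ 2 < 1 := hx
    rw [mem_closedBall_zero_iff, Prod.norm_def]
    refine max_le ?_ ?_ <;> rw [Real.norm_eq_abs, abs_le_one_iff_mul_self_le_one] <;>
      nlinarith [sq_nonneg x.1, sq_nonneg x.2]
  have : IsFiniteMeasure (volume.restrict U2) := ⟨by simpa using fU⟩
  have mU := isOpen_U2.measurableSet
  refine Integrable.of_bound (C := Real.pi /
    (volume (Metric.closedBall (0 : ℝ × ℝ) (1 / ((K:ℝ) + 1)))).toReal) ?_ ?_
  · refine mF.aestronglyMeasurable.congr ?_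
    filter_upwards [ae_restrict_mem mU] with x hx
    exact (eqF x hx).symm
  · filter_upwards [ae_restrict_mem mU] with x hx
    rw [Real.norm_eq_abs, abs_of_nonneg (jac2_nonneg _)]
    exact jac2_bdd hφ hx

lemma D2_ae : U2 =ᵐ[volume] D2 := by
  have nul : volume {p : ℝ × ℝ | p.1 ^ 2 + p.2 ^ 2 = 1} = 0 := by
    have mc : MeasurableSet {p : ℝ × ℝ | p.1 ^ 2 + p.2 ^ 2 = 1} :=
      (isClosed_eq (by fun_prop) (by fun_prop)).measurableSet
    rw [Measure.volume_eq_prod, Measure.measure_prod_null mc]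
    refine Eventually.of_forall fun x => ?_
    have : (Prod.mk x ⁻¹' {p : ℝ × ℝ | p.1 ^ 2 + p.2 ^ 2 = 1}) ⊆
        {Real.sqrt (1 - x ^ 2), -Real.sqrt (1 - x ^ 2)} := by
      intro y hy
      have hy : x ^ 2 + y ^ 2 = 1 := hy
      rw [show 1 - x ^ 2 = y ^ 2 by linarith, Real.sqrt_sq_eq_abs]
      rcases abs_choice y with h | h <;> simp [h]
    exact measure_mono_null this (Set.Finite.measure_zero (by simp) _)
  have : D2 = U2 ∪ {p : ℝ × ℝ | p.1 ^ 2 + p.2 ^ 2 = 1} := by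
    ext p; exact le_iff_lt_or_eq (a := p.1 ^ 2 + p.2 ^ 2)
  rw [this]
  exact (union_ae_eq_left_of_ae_eq_empty (ae_eq_empty.2 nul)).symm

lemma lipArea_eq (φ : ℝ × ℝ → E) : lipArea φ = ∫ x in U2, jac2 (mder φ x) :=
  (setIntegral_congr_set D2_ae).symm

/-- Pointwise bound for the differential. -/
lemma diff_le_mder {φ : ℝ × ℝ → E} {K : ℝ≥0} (hφ : LipschitzOnWith K φ D2) {f : E → ℝ}
    (hf : LipschitzWith 1 f) {Q : ℝ × ℝ → ℝ × ℝ} {x : ℝ × ℝ} {A : ℝ × ℝ →L[ℝ] ℝ × ℝ}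
    (hQ : HasFDerivAt Q A x) (hx : Q x ∈ U2)
    (hd : DifferentiableAt ℝ (fun p => f (φ (Q p))) x) (w : ℝ × ℝ) :
    |fderiv ℝ (fun p => f (φ (Q p))) x w| ≤ mder φ (Q x) (A w) := by
  refine le_of_forall_gt_imp_ge_of_dense fun c hc => ?_
  have t1 := ((hd.hasFDerivAt.hasLineDerivAt w).tendsto_slope_zero.mono_left
    (nhdsWithin_mono 0 (fun r (hr : r ∈ Set.Ioi (0:ℝ)) => ne_of_gt hr))).abs
  have t2 := ((hQ.hasLineDerivAt w).tendsto_slope_zero.mono_left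
    (nhdsWithin_mono 0 (fun r (hr : r ∈ Set.Ioi (0:ℝ)) => ne_of_gt hr)))
  have t3 : Tendsto (fun r : ℝ => c + K * ‖r⁻¹ • (Q (x + r • w) - Q x) - A w‖)
      (nhdsWithin 0 (Set.Ioi 0)) (nhds (c + K * ‖A w - A w‖)) :=
    ((t2.sub_const _).norm.const_mul _).const_add _
  rw [sub_self, norm_zero, mul_zero, add_zero] at t3
  refine le_of_tendsto_of_tendsto t1 t3 ?_
  have cQ : ContinuousAt (fun r : ℝ => Q (x + r • w)) 0 := by
    refine ContinuousAt.comp (g := Q) ?_ (by fun_prop)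
    simpa using hQ.continuousAt
  have evQ : ∀ᶠ r : ℝ in nhdsWithin 0 (Set.Ioi 0), Q (x + r • w) ∈ D2 := by
    have : ∀ᶠ r : ℝ in nhds 0, Q (x + r • w) ∈ U2 :=
      cQ.eventually_mem (isOpen_U2.mem_nhds (by simpa using hx))
    exact (this.filter_mono nhdsWithin_le_nhds).mono fun r hr => U2_sub hr
  filter_upwards [mder_lt hφ hx hc, line_mem hx (A w), evQ, self_mem_nhdsWithin] with r h1 h2 h3 h4
  have h4 : 0 < r := h4
  rw [div_lt_iff₀ h4] at h1
  have e1 : |f (φ (Q (x + r • w))) - f (φ (Q x))| ≤ dist (φ (Q (x + r • w))) (φ (Q x)) := by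
    simpa [Real.dist_eq] using hf.dist_le_mul (φ (Q (x + r • w))) (φ (Q x))
  have e2 := dist_triangle (φ (Q (x + r • w))) (φ (Q x + r • A w)) (φ (Q x))
  have e3 := hφ.dist_le_mul _ h3 _ h2
  have e4 : dist (Q (x + r • w)) (Q x + r • A w) =
      r * ‖r⁻¹ • (Q (x + r • w) - Q x) - A w‖ := by
    rw [dist_eq_norm, ← abs_of_pos h4, ← Real.norm_eq_abs, ← norm_smul, Real.norm_eq_abs,
      abs_of_pos h4, smul_sub, smul_smul, mul_inv_cancel₀ h4.ne', one_smul]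
    congr 1; abel
  rw [e4] at e3
  simp only [smul_eq_mul, abs_mul, abs_inv, abs_of_pos h4]
  rw [inv_mul_le_iff₀ h4]
  nlinarith

lemma det_prod (a b : ℝ × ℝ →L[ℝ] ℝ) : LinearMap.det ((a.prod b : ℝ × ℝ →L[ℝ] ℝ × ℝ) :
    ℝ × ℝ →ₗ[ℝ] ℝ × ℝ) = a (1, 0) * b (0, 1) - a (0, 1) * b (1, 0) := by
  rw [← LinearMap.det_toMatrix (Module.Basis.finTwoProd ℝ), Matrix.det_fin_two]
  simp [LinearMap.toMatrix_apply]

lemma jac_ineq {s : ℝ × ℝ → ℝ} {a b : ℝ × ℝ →L[ℝ] ℝ} {A : ℝ × ℝ →L[ℝ] ℝ × ℝ} {r : ℝ}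
    (ha : ∀ w, |a w| ≤ s (A w)) (hb : ∀ w, |b w| ≤ s (A w)) (hA : A.det = r) (hr : 0 < r)
    (hs : 0 < volume {v | s v ≤ 1}) :
    |a (1, 0) * b (0, 1) - a (0, 1) * b (1, 0)| ≤ 4 / Real.pi * (r * jac2 s) := by
  have hpi := Real.pi_pos
  have hj := jac2_nonneg s
  rw [← det_prod]
  by_cases hd : LinearMap.det ((a.prod b : ℝ × ℝ →L[ℝ] ℝ × ℝ) : ℝ × ℝ →ₗ[ℝ] ℝ × ℝ) = 0
  · rw [hd, abs_zero]; positivity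
  have m1 := Measure.addHaar_preimage_continuousLinearMap (volume : Measure (ℝ × ℝ)) hd
    (Metric.closedBall 0 1)
  have hA' : LinearMap.det (A : ℝ × ℝ →ₗ[ℝ] ℝ × ℝ) = r := hA
  have m2 := Measure.addHaar_preimage_continuousLinearMap (volume : Measure (ℝ × ℝ))
    (f := A) (by rw [hA']; exact hr.ne') {v | s v ≤ 1}
  have sub : A ⁻¹' {v | s v ≤ 1} ⊆ (a.prod b) ⁻¹' (Metric.closedBall 0 1) := by
    intro w hw
    have hw : s (A w) ≤ 1 := hw
    rw [Set.mem_preimage, mem_closedBall_zero_iff, Prod.norm_def]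
    exact max_le ((ha w).trans hw) ((hb w).trans hw)
  have vb : volume (Metric.closedBall (0 : ℝ × ℝ) 1) = ENNReal.ofReal 4 := by
    rw [← Prod.mk_zero_zero, ← closedBall_prod_same, Measure.volume_eq_prod, Measure.prod_prod]
    simp only [Real.volume_closedBall]
    rw [← ENNReal.ofReal_mul (by norm_num)]; norm_num
  have le := measure_mono (μ := volume) sub
  set d := LinearMap.det ((a.prod b : ℝ × ℝ →L[ℝ] ℝ × ℝ) : ℝ × ℝ →ₗ[ℝ] ℝ × ℝ) with hdd
  have hd0 : 0 < |d| := abs_pos.2 hd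
  rw [m1, m2, hA', vb, ← ENNReal.ofReal_mul (by positivity), abs_inv, abs_inv, abs_of_pos hr] at le
  set T := volume {v | s v ≤ 1} with hT
  have fin : T < ⊤ := by
    by_contra hcon
    rw [not_lt, top_le_iff] at hcon
    rw [hcon, ENNReal.mul_top (by simpa using hr)] at le
    exact ENNReal.ofReal_ne_top (top_le_iff.1 le)
  have hT0 : 0 < T.toReal := ENNReal.toReal_pos hs.ne' fin.ne
  have le2 := ENNReal.toReal_mono ENNReal.ofReal_ne_top le
  rw [ENNReal.toReal_mul, ENNReal.toReal_ofReal (by positivity),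
    ENNReal.toReal_ofReal (by positivity), inv_mul_le_iff₀ hr] at le2
  have jeq : jac2 s = Real.pi / T.toReal := by
    unfold jac2; rw [if_pos fin]
  rw [jeq]
  have : 4 / Real.pi * (r * (Real.pi / T.toReal)) = 4 * r / T.toReal := by field_simp
  rw [this, le_div_iff₀ hT0]
  calc |d| * T.toReal ≤ |d| * (r * (|d|⁻¹ * 4)) := by gcongr
    _ = 4 * r := by field_simp

end jac

section polar

/-- Clamp to the unit interval. -/
noncomputable def cl (r : ℝ) : ℝ := max 0 (min 1 r)

lemma cl_lip (r s : ℝ) : |cl r - cl s| ≤ |r - s| := by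
  unfold cl
  refine (abs_max_sub_max_le_max _ _ _ _).trans ?_
  rw [sub_self, abs_zero]
  refine max_le (abs_nonneg _) ((abs_min_sub_min_le_max _ _ _ _).trans ?_)
  rw [sub_self, abs_zero]
  exact max_le (abs_nonneg _) le_rfl

lemma cl_nonneg (r : ℝ) : 0 ≤ cl r := le_max_left _ _

lemma cl_le (r : ℝ) : cl r ≤ 1 := max_le zero_le_one (min_le_left _ _)

lemma cl_of_ge {r : ℝ} (h : 1 ≤ r) : cl r = 1 := by simp [cl, h]

lemma cl_of_le {r : ℝ} (h : r ≤ 0) : cl r = 0 := by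
  simp [cl, h]

lemma cl_of_mem {r : ℝ} (h0 : 0 ≤ r) (h : r ≤ 1) : cl r = r := by simp [cl, h, h0]

/-- Clamped polar coordinates. -/
noncomputable def Pc (p : ℝ × ℝ) : ℝ × ℝ := (cl p.1 * Real.cos p.2, cl p.1 * Real.sin p.2)

lemma Pc_mem (p : ℝ × ℝ) : Pc p ∈ D2 := by
  change (cl p.1 * Real.cos p.2) ^ 2 + (cl p.1 * Real.sin p.2) ^ 2 ≤ 1
  have h0 := cl_nonneg p.1
  have h1 := cl_le p.1
  have := Real.sin_sq_add_cos_sq p.2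
  calc _ = cl p.1 ^ 2 * (Real.sin p.2 ^ 2 + Real.cos p.2 ^ 2) := by ring
    _ ≤ 1 := by rw [this]; nlinarith

lemma Pc_lip : LipschitzWith 2 Pc := by
  refine LipschitzWith.of_dist_le_mul fun p q => ?_
  have h1 : |p.1 - q.1| ≤ dist p q := le_max_left _ _
  have h2 : |p.2 - q.2| ≤ dist p q := le_max_right _ _
  have h3 := cl_lip p.1 q.1
  have h0 := cl_nonneg q.1
  have h0' := cl_le q.1
  have gen : ∀ a b : ℝ, |a| ≤ 1 → |a - b| ≤ |p.2 - q.2| →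
      |cl p.1 * a - cl q.1 * b| ≤ 2 * dist p q := by
    intro a b ha hab
    have : cl p.1 * a - cl q.1 * b = (cl p.1 - cl q.1) * a + cl q.1 * (a - b) := by ring
    rw [this]
    refine (abs_add_le _ _).trans ?_
    rw [abs_mul, abs_mul, abs_of_nonneg h0]
    nlinarith [abs_nonneg (cl p.1 - cl q.1), abs_nonneg (a - b), abs_nonneg a]
  change max (dist _ _) (dist _ _) ≤ _
  refine max_le ?_ ?_
  · exact gen _ _ (Real.abs_cos_le_one _) (Real.abs_cos_sub_cos_le _ _)
  · exact gen _ _ (Real.abs_sin_le_one _) (Real.abs_sin_sub_sin_le _ _)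

variable {E : Type*} [PseudoMetricSpace E]

lemma area_lower {φ : ℝ × ℝ → E} {K : ℝ≥0} (hφ : LipschitzOnWith K φ D2) {f g : E → ℝ}
    (hf : LipschitzWith 1 f) (hg : LipschitzWith 1 g) :
    |∫ θ in (-Real.pi)..Real.pi, f (φ (Real.cos θ, Real.sin θ)) *
      deriv (fun t => g (φ (Real.cos t, Real.sin t))) θ| ≤ 4 / Real.pi * lipArea φ := by
  have hpi := Real.pi_pos
  have L : ∀ f : E → ℝ, LipschitzWith 1 f → LipschitzWith (1 * (K * 2)) fun p => f (φ (Pc p)) := by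
    intro f hf
    refine hf.comp ?_
    have := hφ.comp (Pc_lip.lipschitzOnWith (s := Set.univ)) fun p _ => Pc_mem p
    exact lipschitzOnWith_univ.1 this
  obtain ⟨iD, eD⟩ := stokes (L f hf) (L g hg) (by intro r θ; simp [Pc]) (by intro r θ; simp [Pc])
    (by intro r θ hr; simp [Pc, cl_of_ge hr, cl_of_ge le_rfl])
    (by intro r θ hr; simp [Pc, cl_of_ge hr, cl_of_ge le_rfl])
    (by intro r θ hr; simp [Pc, cl_of_le hr, cl_of_le le_rfl])
  have P1 : ∀ t, Pc (1, t) = (Real.cos t, Real.sin t) := by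
    intro t; simp [Pc, cl_of_ge le_rfl]
  simp only [P1] at eD
  rw [← eD]
  set B : Set (ℝ × ℝ) := Set.Ioo (0:ℝ) 1 ×ˢ Set.Ioo (-Real.pi) Real.pi with hB
  have mB : MeasurableSet B := measurableSet_Ioo.prod measurableSet_Ioo
  have subU : polarCoord.symm '' B ⊆ U2 := by
    rintro _ ⟨p, hp, rfl⟩
    have h1 := hp.1.1
    have h2 := hp.1.2
    change (p.1 * Real.cos p.2) ^ 2 + (p.1 * Real.sin p.2) ^ 2 < 1
    have := Real.sin_sq_add_cos_sq p.2
    calc _ = p.1 ^ 2 * (Real.sin p.2 ^ 2 + Real.cos p.2 ^ 2) := by ring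
      _ < 1 := by rw [this]; nlinarith
  have hder : ∀ x ∈ B, HasFDerivWithinAt polarCoord.symm (fderivPolarCoordSymm x) B x :=
    fun x _ => (hasFDerivAt_polarCoord_symm x).hasFDerivWithinAt
  have inj : Set.InjOn polarCoord.symm B := by
    refine polarCoord.symm.injOn.mono ?_
    exact Set.prod_mono (fun r hr => hr.1) subset_rfl
  have iU := integrable_jac2 hφ
  have iI := (integrableOn_image_iff_integrableOn_abs_det_fderiv_smul volume mB hder inj
    (fun x => jac2 (mder φ x))).1 (iU.mono_set subU)
  have eI := integral_image_eq_integral_abs_det_fderiv_smul volume mB hder inj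
    (fun x => jac2 (mder φ x))
  have le1 : ∫ x in polarCoord.symm '' B, jac2 (mder φ x) ≤ lipArea φ := by
    rw [lipArea_eq]
    exact setIntegral_mono_set iU (Eventually.of_forall fun x => jac2_nonneg _)
      (HasSubset.Subset.eventuallyLE subU)
  rw [eI] at le1
  refine le_trans ?_ (mul_le_mul_of_nonneg_left le1 (by positivity))
  rw [← integral_const_mul]
  refine (abs_integral_le_integral_abs).trans ?_
  refine integral_mono_ae iD.abs (iI.const_mul _) ?_
  have ae1 : ∀ᵐ x ∂(volume : Measure (ℝ × ℝ)), DifferentiableAt ℝ (fun p => f (φ (Pc p))) x :=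
    (L f hf).ae_differentiableAt
  have ae2 : ∀ᵐ x ∂(volume : Measure (ℝ × ℝ)), DifferentiableAt ℝ (fun p => g (φ (Pc p))) x :=
    (L g hg).ae_differentiableAt
  filter_upwards [ae_restrict_of_ae ae1, ae_restrict_of_ae ae2, ae_restrict_mem mB] with x d1 d2 hx
  have hev : Pc =ᶠ[nhds x] polarCoord.symm := by
    have : B ∈ nhds x := (isOpen_Ioo.prod isOpen_Ioo).mem_nhds hx
    filter_upwards [this] with p hp
    simp [Pc, cl_of_mem hp.1.1.le hp.1.2.le]
  have hQ : HasFDerivAt Pc (fderivPolarCoordSymm x) x :=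
    (hasFDerivAt_polarCoord_symm x).congr_of_eventuallyEq hev
  have hxx : Pc x = polarCoord.symm x := hev.eq_of_nhds
  have hxU : Pc x ∈ U2 := by rw [hxx]; exact subU ⟨x, hx, rfl⟩
  have := jac_ineq (diff_le_mder hφ hf hQ hxU d1) (diff_le_mder hφ hg hQ hxU d2)
    (det_fderivPolarCoordSymm x) hx.1.1 (vol_pos hφ hxU)
  rw [hxx] at this
  simp only [smul_eq_mul, det_fderivPolarCoordSymm, abs_of_pos hx.1.1]
  exact this

end polar

section bdry

lemma bdry_int {U V : ℝ → ℝ} {K : ℝ≥0} (hV : LipschitzWith K V) (hU : Continuous U)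
    (pU : Function.Periodic U (2 * Real.pi)) (pV : Function.Periodic V (2 * Real.pi))
    {θ₁ θ₂ c : ℝ} (h0 : 0 ≤ θ₁) (h12 : θ₁ ≤ θ₂) (h2 : θ₂ ≤ Real.pi)
    (V1 : ∀ θ ∈ Set.Icc 0 θ₁, V θ = V θ₁) (U2 : ∀ θ ∈ Set.Icc θ₁ θ₂, U θ = c)
    (V3 : ∀ θ ∈ Set.Icc θ₂ Real.pi, V θ = V θ₂)
    (U4 : ∀ θ ∈ Set.Icc Real.pi (2 * Real.pi), U θ = 0) :
    ∫ θ in (-Real.pi)..Real.pi, U θ * deriv V θ = c * (V θ₂ - V θ₁) := by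
  have hpi := Real.pi_pos
  have ac : ∀ a b, AbsolutelyContinuousOnInterval V a b := fun a b =>
    (hV.lipschitzOnWith).absolutelyContinuousOnInterval
  have ii : ∀ a b, IntervalIntegrable (fun θ => U θ * deriv V θ) volume a b := fun a b =>
    (ac a b).intervalIntegrable_deriv.continuousOn_mul hU.continuousOn
  have pd : Function.Periodic (fun θ => U θ * deriv V θ) (2 * Real.pi) := by
    intro θ
    have : deriv V (θ + 2 * Real.pi) = deriv V θ := by
      rw [← deriv_comp_add_const]
      congr 1; ext t; exact pV t
    simp only [pU θ, this]
  have e0 := pd.intervalIntegral_add_eq (-Real.pi) 0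
  rw [show -Real.pi + 2 * Real.pi = Real.pi by ring, zero_add] at e0
  have zd : ∀ a b v, a ≤ b → (∀ θ ∈ Set.Icc a b, V θ = v) → ∫ θ in a..b, U θ * deriv V θ = 0 := by
    intro a b v hab h
    rw [intervalIntegral.integral_of_le hab, integral_Ioc_eq_integral_Ioo]
    refine setIntegral_eq_zero_of_forall_eq_zero fun θ hθ => ?_
    have : V =ᶠ[nhds θ] fun _ => v := by
      filter_upwards [Ioo_mem_nhds hθ.1 hθ.2] with t ht
      exact h t (Set.Ioo_subset_Icc_self ht)
    simp [this.deriv_eq]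
  have i4 : ∫ θ in Real.pi..(2 * Real.pi), U θ * deriv V θ = 0 := by
    rw [intervalIntegral.integral_congr (g := fun _ => (0:ℝ))]
    · simp
    · intro θ hθ
      rw [Set.uIcc_of_le (by linarith)] at hθ
      simp [U4 θ hθ]
  have i2 : ∫ θ in θ₁..θ₂, U θ * deriv V θ = c * (V θ₂ - V θ₁) := by
    rw [intervalIntegral.integral_congr (g := fun θ => c * deriv V θ)]
    · rw [intervalIntegral.integral_const_mul, (ac θ₁ θ₂).integral_deriv_eq_sub]
    · intro θ hθ
      rw [Set.uIcc_of_le h12] at hθ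
      simp [U2 θ hθ]
  rw [e0, ← intervalIntegral.integral_add_adjacent_intervals (ii 0 Real.pi) (ii _ _), i4,
    ← intervalIntegral.integral_add_adjacent_intervals (ii 0 θ₁) (ii _ _), zd 0 θ₁ _ h0 V1,
    ← intervalIntegral.integral_add_adjacent_intervals (ii θ₁ θ₂) (ii _ _), i2,
    zd θ₂ Real.pi _ h2 V3]
  ring

/-- Clamp to an interval. -/
noncomputable def clp (lo hi r : ℝ) : ℝ := max lo (min hi r)

lemma clp_lip (lo hi r s : ℝ) : |clp lo hi r - clp lo hi s| ≤ |r - s| := by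
  unfold clp
  refine (abs_max_sub_max_le_max _ _ _ _).trans ?_
  rw [sub_self, abs_zero]
  refine max_le (abs_nonneg _) ((abs_min_sub_min_le_max _ _ _ _).trans ?_)
  rw [sub_self, abs_zero]
  exact max_le (abs_nonneg _) le_rfl

lemma clp_le {lo hi r : ℝ} (h : r ≤ lo) : clp lo hi r = lo :=
  max_eq_left ((min_le_right _ _).trans h)

lemma clp_ge {lo hi r : ℝ} (hlh : lo ≤ hi) (h : hi ≤ r) : clp lo hi r = hi := by
  rw [clp, min_eq_left h, max_eq_right hlh]

lemma kur_dist {X : Type u} [MetricSpace X] (x₀ x y : X) :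
    dist (kuratowski X x₀ x) (kuratowski X x₀ y) = dist x y := by
  have app : ∀ z, (kuratowski X x₀ x - kuratowski X x₀ y : Linfty X) z = dist x z - dist y z := by
    intro z
    rw [lp.coeFn_sub, Pi.sub_apply]
    change (dist x z - dist x₀ z) - (dist y z - dist x₀ z) = _
    ring
  rw [dist_eq_norm]
  apply le_antisymm
  · refine lp.norm_le_of_forall_le dist_nonneg fun z => ?_
    rw [app, Real.norm_eq_abs]
    exact abs_dist_sub_le x y z
  · have := lp.norm_apply_le_norm ENNReal.top_ne_zero (kuratowski X x₀ x - kuratowski X x₀ y : Linfty X) y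
    rw [app, dist_self, sub_zero, Real.norm_eq_abs, abs_of_nonneg dist_nonneg] at this
    exact this

lemma loop_of_good {X : Type u} [MetricSpace X] {D : ℝ} (hD : 0 < D) (h : Good X D) :
    ∃ (γ : ℝ → X) (a p : X) (l tp : ℝ), (∀ s t, dist (γ s) (γ t) ≤ 480 * D * |s - t|) ∧
      γ 0 = γ 1 ∧ D / 2 ≤ tp ∧ tp ≤ l - D / 2 ∧ dist (γ 0) (γ (1/2)) = l ∧
      (∀ s ∈ Set.Icc (0:ℝ) (1/2), dist (γ s) a = 2 * l * s ∧ dist (γ s) p = |2 * l * s - tp|) ∧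
      ∀ s ∈ Set.Icc (1/2:ℝ) 1, D / 2 ≤ dist (γ s) p := by
  obtain ⟨a, b, H, p, ⟨g, ⟨g0, g1, g2⟩, rfl⟩, ⟨tp, htp, rfl⟩, hab, β, b1, b2, b3, b4, b5, b6⟩ := h
  have hl : 0 ≤ dist a b := dist_nonneg
  set l := dist a b with hldef
  have m0 : (0:ℝ) ∈ Set.Icc 0 l := ⟨le_rfl, hl⟩
  have ml : l ∈ Set.Icc 0 l := ⟨hl, le_rfl⟩
  have fa : D / 2 ≤ dist (g tp) a := by have := b6 1; rw [b3] at this; exact this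
  have fb : D / 2 ≤ dist (g tp) b := by have := b6 0; rw [b2] at this; exact this
  have mcl : ∀ t, l * cl t ∈ Set.Icc 0 l := fun t =>
    ⟨mul_nonneg hl (cl_nonneg t), by nlinarith [cl_le t]⟩
  have fa' : D / 2 ≤ tp := by
    rw [← g0, g2 tp htp 0 m0, sub_zero, abs_of_nonneg htp.1] at fa; exact fa
  have fb' : tp ≤ l - D / 2 := by
    rw [← g1, g2 tp htp l ml, abs_of_nonpos (by linarith [htp.2])] at fb; linarith
  have h1 : ∀ s t, dist (g (l * cl s)) (g (l * cl t)) ≤ 240 * D * |s - t| := by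
    intro s t
    rw [g2 _ (mcl s) _ (mcl t), ← mul_sub, abs_mul, abs_of_nonneg hl]
    have := cl_lip s t
    have := abs_nonneg (cl s - cl t)
    nlinarith
  have e0 : g (l * cl 0) = a := by rw [cl_of_le le_rfl, mul_zero, g0]
  have e1 : g (l * cl 1) = b := by rw [cl_of_ge le_rfl, mul_one, g1]
  have key : ∀ s t, s ≤ 1/2 → 1/2 ≤ t →
      dist (g (l * cl (2 * s))) (β (2 * t - 1)) ≤ 480 * D * |s - t| := by
    intro s t hs ht
    have k1 := h1 (2 * s) 1
    have k2 := b1 0 (2 * t - 1)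
    rw [e1] at k1
    rw [b2] at k2
    rw [abs_of_nonpos (by linarith)] at k1 k2 ⊢
    have := dist_triangle (g (l * cl (2 * s))) b (β (2 * t - 1))
    linarith
  have pos : ∀ s : ℝ, s ∈ Set.Icc (0:ℝ) (1/2) → l * cl (2 * s) = 2 * l * s := by
    intro s hs
    rw [cl_of_mem (by linarith [hs.1]) (by linarith [hs.2])]; ring
  refine ⟨fun t => if t ≤ 1/2 then g (l * cl (2 * t)) else β (2 * t - 1), a, g tp, l, tp,
    ?_, ?_, fa', fb', ?_, ?_, ?_⟩
  · intro s t
    by_cases hs : s ≤ 1/2 <;> by_cases ht : t ≤ 1/2 <;> simp only [hs, ht, if_true, if_false]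
    · refine (h1 _ _).trans_eq ?_
      rw [← mul_sub, abs_mul, abs_two]; ring
    · exact key s t hs (by linarith)
    · rw [dist_comm, abs_sub_comm]; exact key t s ht (by linarith)
    · refine (b1 _ _).trans_eq ?_
      rw [show 2 * s - 1 - (2 * t - 1) = 2 * (s - t) by ring, abs_mul, abs_two]; ring
  · have : β (2 * 1 - 1) = a := b5 _ (by norm_num)
    dsimp only
    rw [if_pos (by norm_num), if_neg (by norm_num), this, mul_zero, e0]
  · dsimp only
    rw [if_pos (by norm_num), if_pos le_rfl, mul_zero, e0,
      show (2:ℝ) * (1 / 2) = 1 by norm_num, e1]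
  · intro s hs
    have ms := mcl (2 * s)
    simp only [hs.2, if_true]
    rw [← g0, g2 _ ms _ m0, g2 _ ms _ htp, pos s hs, sub_zero,
      abs_of_nonneg (by have := hs.1; positivity)]
    exact ⟨rfl, rfl⟩
  · intro s hs
    dsimp only
    split_ifs with h
    · have : s = 1/2 := le_antisymm h hs.1
      rw [this, show (2:ℝ) * (1 / 2) = 1 by norm_num, e1, dist_comm]; exact fb
    · rw [dist_comm]; exact b6 _

end bdry

section final

lemma area_bound {X : Type u} [MetricSpace X] (x₀ : X) {γ : ℝ → X} {a p : X} {D l tp : ℝ}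
    (hD : 0 < D) (h1 : D / 2 ≤ tp) (h2 : tp ≤ l - D / 2)
    (hg : ∀ s ∈ Set.Icc (0:ℝ) (1/2), dist (γ s) a = 2 * l * s ∧ dist (γ s) p = |2 * l * s - tp|)
    (hb : ∀ s ∈ Set.Icc (1/2:ℝ) 1, D / 2 ≤ dist (γ s) p)
    {φ : ℝ × ℝ → Linfty X} (hφ : BoundsLoop φ (fun s => kuratowski X x₀ (γ s))) :
    3 / 32 * D ^ 2 ≤ 4 / Real.pi * lipArea φ := by
  obtain ⟨⟨K, hK⟩, hbd⟩ := hφ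
  have hpi := Real.pi_pos
  have hl : 0 < l := by linarith
  set f : Linfty X → ℝ := fun ξ => D / 2 - clp (D / 8) (D / 2) (dist ξ (kuratowski X x₀ p)) with hf
  set g : Linfty X → ℝ := fun ξ =>
    clp (tp - D / 8) (tp + D / 8) (dist ξ (kuratowski X x₀ a)) with hgd
  have lf : LipschitzWith 1 f := by
    refine LipschitzWith.of_dist_le_mul fun ξ η => ?_
    rw [Real.dist_eq, NNReal.coe_one, one_mul]
    simp only [hf]
    rw [sub_sub_sub_cancel_left, abs_sub_comm]
    exact (clp_lip _ _ _ _).trans (abs_dist_sub_le _ _ _)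
  have lg : LipschitzWith 1 g := by
    refine LipschitzWith.of_dist_le_mul fun ξ η => ?_
    rw [Real.dist_eq, NNReal.coe_one, one_mul]
    exact (clp_lip _ _ _ _).trans (abs_dist_sub_le _ _ _)
  have key := area_lower hK lf lg
  have lc : LipschitzWith (K * 2) fun t : ℝ => φ (Real.cos t, Real.sin t) := by
    have L1 : LipschitzWith (K * 2) fun q => φ (Pc q) :=
      lipschitzOnWith_univ.1
        (hK.comp (Pc_lip.lipschitzOnWith (s := Set.univ)) fun q _ => Pc_mem q)
    refine LipschitzWith.of_dist_le_mul fun s t => ?_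
    have := L1.dist_le_mul (1, s) (1, t)
    simpa [Pc, cl_of_ge le_rfl, Prod.dist_eq] using this
  have bd : ∀ θ ∈ Set.Icc (0:ℝ) (2 * Real.pi),
      φ (Real.cos θ, Real.sin θ) = kuratowski X x₀ (γ (θ / (2 * Real.pi))) := by
    intro θ hθ
    have := hbd (θ / (2 * Real.pi)) ⟨by have := hθ.1; positivity, by
      rw [div_le_one (by positivity)]; exact hθ.2⟩
    rw [show 2 * Real.pi * (θ / (2 * Real.pi)) = θ by field_simp] at this
    exact this
  have V : ∀ θ ∈ Set.Icc (0:ℝ) Real.pi, g (φ (Real.cos θ, Real.sin θ)) =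
      clp (tp - D / 8) (tp + D / 8) (l * θ / Real.pi) ∧ f (φ (Real.cos θ, Real.sin θ)) =
      D / 2 - clp (D / 8) (D / 2) |l * θ / Real.pi - tp| := by
    intro θ hθ
    have m : θ / (2 * Real.pi) ∈ Set.Icc (0:ℝ) (1/2) := by
      refine ⟨by have := hθ.1; positivity, ?_⟩
      rw [div_le_div_iff₀ (by positivity) (by norm_num)]; linarith [hθ.2]
    have e : 2 * l * (θ / (2 * Real.pi)) = l * θ / Real.pi := by field_simp
    simp only [hf, hgd, bd θ ⟨hθ.1, by linarith [hθ.2]⟩, kur_dist, (hg _ m).1, (hg _ m).2, e]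
    exact ⟨trivial, trivial⟩
  have B1 : ∀ θ z, θ ≤ Real.pi * z / l → l * θ / Real.pi ≤ z := by
    intro θ z h
    rw [le_div_iff₀ hl] at h
    rw [div_le_iff₀ hpi]; linarith
  have B2 : ∀ θ z, Real.pi * z / l ≤ θ → z ≤ l * θ / Real.pi := by
    intro θ z h
    rw [div_le_iff₀ hl] at h
    rw [le_div_iff₀ hpi]; linarith
  have n0 : 0 ≤ tp - D / 8 := by linarith
  set θ₁ := Real.pi * (tp - D / 8) / l with hθ₁
  set θ₂ := Real.pi * (tp + D / 8) / l with hθ₂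
  have o0 : 0 ≤ θ₁ := by positivity
  have o1 : θ₁ ≤ θ₂ := by
    rw [hθ₁, hθ₂]; gcongr; linarith
  have o2 : θ₂ ≤ Real.pi := by
    rw [hθ₂, div_le_iff₀ hl]; gcongr; linarith
  have W1 : ∀ θ ∈ Set.Icc 0 θ₁, g (φ (Real.cos θ, Real.sin θ)) = tp - D / 8 := by
    intro θ hθ
    rw [(V θ ⟨hθ.1, by linarith [hθ.2]⟩).1]
    exact clp_le (B1 _ _ hθ.2)
  have W2 : ∀ θ ∈ Set.Icc θ₂ Real.pi, g (φ (Real.cos θ, Real.sin θ)) = tp + D / 8 := by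
    intro θ hθ
    rw [(V θ ⟨by linarith [hθ.1], hθ.2⟩).1]
    exact clp_ge (by linarith) (B2 _ _ hθ.1)
  have V1 := W1 θ₁ ⟨o0, le_rfl⟩
  have V2 := W2 θ₂ ⟨le_rfl, o2⟩
  have I := bdry_int (U := fun θ => f (φ (Real.cos θ, Real.sin θ)))
    (V := fun θ => g (φ (Real.cos θ, Real.sin θ))) (lg.comp lc) (lf.comp lc).continuous
    (by intro θ; simp) (by intro θ; simp) (θ₁ := θ₁) (θ₂ := θ₂) (c := 3 / 8 * D) o0 o1 o2
    (by intro θ hθ; simp only [W1 θ hθ, V1])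
    (by
      intro θ hθ
      simp only [(V θ ⟨by linarith [hθ.1], by linarith [hθ.2]⟩).2]
      rw [clp_le]
      · ring
      · rw [abs_le]
        have b1 := B1 _ _ hθ.2
        have b2 := B2 _ _ hθ.1
        constructor <;> linarith)
    (by intro θ hθ; simp only [W2 θ hθ, V2])
    (by
      intro θ hθ
      have m : θ / (2 * Real.pi) ∈ Set.Icc (1/2:ℝ) 1 := by
        refine ⟨?_, ?_⟩
        · rw [div_le_div_iff₀ (by norm_num) (by positivity)]; linarith [hθ.1]
        · rw [div_le_one (by positivity)]; exact hθ.2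
      simp only [hf, bd θ ⟨by linarith [hθ.1], hθ.2⟩, kur_dist]
      rw [clp_ge (by linarith) (hb _ m), sub_self])
  rw [I] at key
  simp only [V1, V2] at key
  refine le_trans ?_ key
  refine le_trans (le_of_eq ?_) (le_abs_self _)
  ring

lemma length_bounds {X : Type u} [MetricSpace X] {γ : ℝ → X} {C : ℝ} (hC : 0 ≤ C)
    (h : ∀ s t, dist (γ s) (γ t) ≤ C * |s - t|) :
    (∃ K : ℝ≥0, LipschitzOnWith K γ (Set.Icc 0 1)) ∧ loopLength γ ≤ C ∧
      dist (γ 0) (γ (1/2)) ≤ loopLength γ := by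
  have hL : LipschitzWith C.toNNReal γ := LipschitzWith.of_dist_le_mul fun s t => by
    simpa [Real.dist_eq, hC] using h s t
  have e1 : eVariationOn γ (Set.Icc 0 1) ≤ ENNReal.ofReal C := by
    have k := (hL.lipschitzOnWith (s := Set.univ)).comp_eVariationOn_le (f := γ) (g := id)
      (s := Set.Icc (0:ℝ) 1) (fun _ _ => Set.mem_univ _)
    have m := (monotoneOn_id (s := Set.Icc (0:ℝ) 1)).eVariationOn_eq
      (a := 0) (b := 1) ⟨le_rfl, zero_le_one⟩ ⟨zero_le_one, le_rfl⟩
    rw [Set.inter_self] at m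
    refine k.trans ((mul_le_mul_right m.le _).trans ?_)
    simp [ENNReal.ofReal]
  refine ⟨⟨_, hL.lipschitzOnWith⟩, ENNReal.toReal_le_of_le_ofReal hC e1, ?_⟩
  have e2 := eVariationOn.edist_le γ (s := Set.Icc (0:ℝ) 1) (x := 0) (y := 1/2)
    ⟨le_rfl, zero_le_one⟩ ⟨by norm_num, by norm_num⟩
  rw [dist_edist]
  exact ENNReal.toReal_mono (e1.trans_lt ENNReal.ofReal_lt_top).ne e2

end final

/-- Theorem 5.4: let `X` be a geodesic metric space (no
admissibility assumption).  If for every `ν > 0` there is `s₀ > 0` such that every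
Lipschitz loop `γ` in `X` of length at least `s₀` bounds a singular Lipschitz disc of
area at most `ν·length(γ)²` in `L^∞(X)` (via the Kuratowski embedding), then `X`
is Gromov hyperbolic. -/
theorem subquadratic_hyperbolic {X : Type u} [MetricSpace X] (x₀ : X)
    (hX : GeodesicSpace X)
    (h : ∀ ν > (0:ℝ), ∃ s₀ > (0:ℝ), ∀ γ : ℝ → X, IsLipLoop γ → s₀ ≤ loopLength γ →
      ∃ φ : ℝ × ℝ → Linfty X, BoundsLoop φ (fun s => kuratowski X x₀ (γ s)) ∧
        lipArea φ ≤ ν * (loopLength γ) ^ 2) :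
    GromovHyperbolic X := by
  by_contra hn
  obtain ⟨s₀, hs₀, H⟩ := h (1 / 10 ^ 7) (by norm_num)
  obtain ⟨D, hD, hG⟩ := good_of_not_hyp hX hn s₀ hs₀
  have hD0 : 0 < D := hs₀.trans_le hD
  obtain ⟨γ, a, p, l, tp, h1, h2, h3, h4, h5, h6, h7⟩ := loop_of_good hD0 hG
  obtain ⟨k1, k2, k3⟩ := length_bounds (by positivity) h1
  rw [h5] at k3
  obtain ⟨φ, hφ, hA⟩ := H γ ⟨k1, h2⟩ (by linarith)
  have low := area_bound x₀ hD0 h3 h4 h6 h7 hφ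
  have hpi := Real.pi_gt_three
  have sq : loopLength γ ^ 2 ≤ (480 * D) ^ 2 := pow_le_pow_left₀ (by linarith) k2 2
  rw [div_mul_eq_mul_div 4, le_div_iff₀ Real.pi_pos] at low
  have hD2 : 0 < D ^ 2 := by positivity
  nlinarith

end SharpIsop
end

section
/- Let X be a geodesic metric space which admits a disc-thickening with a quadratic isoperimetric inequality. Suppose there exist ε ∈ (0,1) and s₀>0 such that every Lipschitz loop γ in X with length(γ) ≥ s₀ bounds a singular Lipschitz disc φ in L^∞(X) (with boundary κ∘γ) whose image is contained in the closed (1−ε)·(3/32)·length(γ)-neighborhood of κ(γ([0,1])). Then X is Gromov hyperbolic. -/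
open scoped NNReal ENNReal
open MeasureTheory Filter

universe u v

namespace SharpIsop

lemma winding (F : ℝ × ℝ → ℂ) (hF : ContinuousOn F D2) (h0 : ∀ w ∈ D2, F w ≠ 0)
    (hb : ∀ s ∈ Set.Icc (0:ℝ) 1,
      F (Real.cos (2 * Real.pi * s), Real.sin (2 * Real.pi * s)) *
        Complex.exp (-(2 * Real.pi * s * Complex.I)) ∈ Complex.slitPlane) : False := by
  set ret : ℝ × ℝ → ℝ × ℝ := fun w => (max 1 (Real.sqrt (w.1^2+w.2^2)))⁻¹ • w with hret
  have hpos : ∀ w : ℝ × ℝ, 0 < max 1 (Real.sqrt (w.1^2+w.2^2)) := fun w => by positivity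
  have hretc : Continuous ret := by
    refine Continuous.smul (Continuous.inv₀ (by fun_prop) (fun w => (hpos w).ne')) continuous_id
  have hretD : ∀ w, ret w ∈ D2 := by
    intro w
    have h1 := hpos w
    set M := max 1 (Real.sqrt (w.1^2+w.2^2)) with hM
    have h2 : w.1^2+w.2^2 ≤ M^2 := by
      rw [← Real.sq_sqrt (show 0 ≤ w.1^2+w.2^2 by positivity)]
      have := le_max_right 1 (Real.sqrt (w.1^2+w.2^2))
      gcongr
    show (M⁻¹ * w.1)^2 + (M⁻¹ * w.2)^2 ≤ 1
    rw [mul_pow, mul_pow, ← mul_add, inv_pow, inv_mul_le_iff₀ (by positivity)]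
    linarith
  have hretid : ∀ s : ℝ, ret (Real.cos s, Real.sin s) = (Real.cos s, Real.sin s) := by
    intro s; simp [hret]
  have hsc : IsSimplyConnected (Set.univ : Set (ℝ × ℝ)) := by
    have : ContractibleSpace (Set.univ : Set (ℝ × ℝ)) :=
      convex_univ.contractibleSpace ⟨0, trivial⟩
    exact (inferInstance : SimplyConnectedSpace (Set.univ : Set (ℝ × ℝ)))
  obtain ⟨f, hfc, hf⟩ := Complex.exists_continuousOn_eqOn_exp_comp hsc isOpen_univ
    (g := fun w => F (ret w))
    (hF.comp_continuous hretc hretD).continuousOn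
    (by rintro ⟨w, -, hw⟩; exact h0 _ (hretD w) hw)
  rw [continuousOn_univ] at hfc
  have hf' : ∀ s : ℝ, Complex.exp (f (Real.cos s, Real.sin s)) = F (Real.cos s, Real.sin s) := by
    intro s
    have := hf (Set.mem_univ (Real.cos s, Real.sin s))
    simpa [hretid] using this
  have hcirc : ∀ s : ℝ, ((Real.cos s, Real.sin s) : ℝ × ℝ) ∈ D2 := by
    intro s; show (Real.cos s)^2 + (Real.sin s)^2 ≤ 1; simp
  set G : ℝ → ℂ := fun s => F (Real.cos (2 * Real.pi * s), Real.sin (2 * Real.pi * s)) *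
        Complex.exp (-(2 * Real.pi * s * Complex.I)) with hG
  have hGc : ContinuousOn G (Set.Icc 0 1) := by
    refine ContinuousOn.mul ?_ (by fun_prop)
    exact hF.comp (by fun_prop) (fun s _ => hcirc _)
  set k : ℝ → ℂ := fun s => (f (Real.cos (2 * Real.pi * s), Real.sin (2 * Real.pi * s))
    - Complex.log (G s) - 2 * Real.pi * s * Complex.I) / (2 * Real.pi * Complex.I) with hk
  have hkc : ContinuousOn k (Set.Icc 0 1) := by
    refine ContinuousOn.div_const (ContinuousOn.sub (ContinuousOn.sub ?_ ?_) (by fun_prop)) _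
    · exact (hfc.comp (by fun_prop)).continuousOn
    · exact hGc.clog hb
  have hkint : ∀ s ∈ Set.Icc (0:ℝ) 1, ∃ n : ℤ, k s = n := by
    intro s hs
    have hG0 : G s ≠ 0 := Complex.slitPlane_ne_zero (hb s hs)
    have : Complex.exp (f (Real.cos (2 * Real.pi * s), Real.sin (2 * Real.pi * s))
      - Complex.log (G s) - 2 * Real.pi * s * Complex.I) = 1 := by
      rw [Complex.exp_sub, Complex.exp_sub, Complex.exp_log hG0, hf']
      have hF0 := h0 _ (hcirc (2 * Real.pi * s))
      simp only [hG, Complex.exp_neg]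
      field_simp
    obtain ⟨n, hn⟩ := Complex.exp_eq_one_iff.1 this
    refine ⟨n, ?_⟩
    simp only [hk]
    rw [hn]
    have : (2 * Real.pi * Complex.I : ℂ) ≠ 0 := Complex.two_pi_I_ne_zero
    field_simp
  have hconst : k 0 = k 1 := by
    have hre : ContinuousOn (fun s => (k s).re) (Set.Icc 0 1) :=
      Complex.continuous_re.comp_continuousOn hkc
    obtain ⟨n0, hn0⟩ := hkint 0 (by simp)
    obtain ⟨n1, hn1⟩ := hkint 1 (by simp)
    have hr : ∀ s ∈ Set.Icc (0:ℝ) 1, ∃ n : ℤ, (k s).re = n := by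
      intro s hs; obtain ⟨n, hn⟩ := hkint s hs; exact ⟨n, by simp [hn]⟩
    have hsub : Set.MapsTo (fun s => (k s).re) (Set.Icc 0 1) (Set.range ((↑) : ℤ → ℝ)) := by
      intro s hs; obtain ⟨n, hn⟩ := hr s hs; exact ⟨n, hn.symm⟩
    have := (isPreconnected_Icc (a := (0:ℝ)) (b := 1)).image _ hre
    have ht : IsTotallyDisconnected (Set.range ((↑) : ℤ → ℝ)) :=
      (Set.countable_range _).isTotallyDisconnected
    have hss := ht _ (Set.mapsTo_iff_image_subset.1 hsub) this
    have e := hss (Set.mem_image_of_mem _ (by simp : (0:ℝ) ∈ Set.Icc (0:ℝ) 1))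
      (Set.mem_image_of_mem _ (by simp : (1:ℝ) ∈ Set.Icc (0:ℝ) 1))
    simp only [hn0, hn1, Complex.intCast_re] at e
    rw [hn0, hn1]; exact_mod_cast e
  have hG01 : G 0 = G 1 := by
    simp [hG, Complex.exp_neg, Complex.exp_two_pi_mul_I]
  have : (2 * Real.pi * Complex.I : ℂ) ≠ 0 := Complex.two_pi_I_ne_zero
  simp only [hk, hG01] at hconst
  rw [div_left_inj' this] at hconst
  simp at hconst
  exact this (by linear_combination hconst)


lemma central {ι : Type*} (T : Finset ι) (hT : T.Nonempty) (x w : ι → ℝ)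
    (hx : ∀ i ∈ T, 0 ≤ x i ∧ x i < 1) (hw : ∀ i ∈ T, 0 < w i)
    (hs : ∀ c : ℝ, ∑ i ∈ T, w i * Real.cos (2 * Real.pi * (x i - c)) = 0) :
    ∃ i ∈ T, ∃ j ∈ T, ∃ k ∈ T, x i ≤ x j ∧ x j ≤ x k ∧ x j - x i ≤ 1/2 ∧ x k - x j ≤ 1/2 ∧
      1/2 ≤ x k - x i := by
  classical
  have key : ∀ c : ℝ, ¬ ∀ i ∈ T, 0 < Real.cos (2 * Real.pi * (x i - c)) := by
    intro c hc
    have : 0 < ∑ i ∈ T, w i * Real.cos (2 * Real.pi * (x i - c)) :=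
      Finset.sum_pos (fun i hi => mul_pos (hw i hi) (hc i hi)) hT
    linarith [hs c]
  have hcos : ∀ y : ℝ, |y| < 1/4 → 0 < Real.cos (2 * Real.pi * y) := by
    intro y hy
    have hp := Real.pi_pos
    rw [abs_lt] at hy
    apply Real.cos_pos_of_mem_Ioo
    constructor <;> nlinarith
  obtain ⟨i, hi, himin⟩ := T.exists_min_image x hT
  obtain ⟨j, hj, hjmax⟩ := (T.filter (fun t => x t ≤ x i + 1/2)).exists_max_image x
    ⟨i, by simp [hi]⟩
  rw [Finset.mem_filter] at hj
  by_cases hB : (T.filter (fun t => x i + 1/2 < x t)).Nonempty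
  · obtain ⟨k, hk, hkmin⟩ := Finset.exists_min_image _ x hB
    rw [Finset.mem_filter] at hk
    refine ⟨i, hi, j, hj.1, k, hk.1, himin j hj.1, by linarith, by linarith, ?_, by linarith⟩
    by_contra hcon
    push Not at hcon
    apply key ((x k + x j + 1)/2)
    intro t ht
    have h1 := hx t ht
    have h2 := hx k hk.1
    have h3 := hx j hj.1
    by_cases htB : x i + 1/2 < x t
    · have := hkmin t (by simp only [Finset.mem_filter]; exact ⟨ht, htB⟩)
      apply hcos
      rw [abs_lt]
      constructor <;> linarith
    · push Not at htB
      have := hjmax t (by simp only [Finset.mem_filter]; exact ⟨ht, htB⟩)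
      have e : 2 * Real.pi * (x t - (x k + x j + 1)/2)
        = 2 * Real.pi * (x t + 1 - (x k + x j + 1)/2) - 2 * Real.pi := by ring
      rw [e, Real.cos_sub_two_pi]
      apply hcos
      rw [abs_lt]
      constructor <;> linarith
  · rw [Finset.not_nonempty_iff_eq_empty, Finset.filter_eq_empty_iff] at hB
    have hall : ∀ t ∈ T, x t ≤ x j := by
      intro t ht
      exact hjmax t (by simp only [Finset.mem_filter]; exact ⟨ht, not_lt.1 (hB ht)⟩)
    refine ⟨i, hi, j, hj.1, j, hj.1, himin j hj.1, le_rfl, by linarith, by norm_num, ?_⟩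
    by_contra hcon
    push Not at hcon
    apply key ((x i + x j)/2)
    intro t ht
    have := hall t ht
    have := himin t ht
    apply hcos
    rw [abs_lt]
    constructor <;> linarith


lemma hull {X : Type u} [MetricSpace X] (x₀ : X) (p : ℕ → X) (n : ℕ) (hn : 0 < n) (R : ℝ)
    (z : Linfty X) (lam s' : ℝ) (hl : 0 ≤ lam) (hs0 : 0 ≤ s') (hs1 : s' < 1)
    (hz : 0 < lam → dist z (kuratowski X x₀ (p ⌊n * s'⌋₊)) < R)
    (hpos : ∃ i < n, dist z (kuratowski X x₀ (p i)) < R)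
    (hsum : ∀ c : ℝ, ∑ i ∈ Finset.range n, max 0 (R - dist z (kuratowski X x₀ (p i))) *
        Real.cos (2 * Real.pi * ((i:ℝ) / n - c)) + lam * Real.cos (2 * Real.pi * (s' - c)) = 0) :
    ∃ i j k : ℕ, i ≤ j ∧ j ≤ k ∧ k < n ∧ 2 * j ≤ 2 * i + n + 2 ∧ 2 * k ≤ 2 * j + n + 2 ∧
      2 * i + n ≤ 2 * k + 2 ∧ dist (p i) (p j) < 2 * R ∧ dist (p j) (p k) < 2 * R ∧
      dist (p i) (p k) < 2 * R := by
  classical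
  have hn' : (0:ℝ) < n := by exact_mod_cast hn
  let x : Option ℕ → ℝ := fun o => o.elim s' (fun i => (i:ℝ)/n)
  let w : Option ℕ → ℝ := fun o => o.elim lam (fun i => max 0 (R - dist z (kuratowski X x₀ (p i))))
  let T : Finset (Option ℕ) := (Finset.insertNone (Finset.range n)).filter (fun o => 0 < w o)
  let idx : Option ℕ → ℕ := fun o => ⌊n * x o⌋₊
  have hw0 : ∀ o, 0 ≤ w o := by
    rintro (_ | i)
    · exact hl
    · exact le_max_left _ _
  have hxT : ∀ o ∈ T, 0 ≤ x o ∧ x o < 1 := by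
    rintro (_ | i) ho
    · exact ⟨hs0, hs1⟩
    · simp only [T, Finset.mem_filter, Finset.some_mem_insertNone, Finset.mem_range] at ho
      refine ⟨by show 0 ≤ (i:ℝ)/n; positivity, ?_⟩
      show (i:ℝ)/n < 1
      rw [div_lt_one hn']; exact_mod_cast ho.1
  have hd : ∀ o ∈ T, dist z (kuratowski X x₀ (p (idx o))) < R := by
    rintro (_ | i) ho
    · simp only [T, Finset.mem_filter] at ho
      exact hz ho.2
    · simp only [T, Finset.mem_filter] at ho
      have h1 : 0 < max 0 (R - dist z (kuratowski X x₀ (p i))) := ho.2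
      have h2 : idx (some i) = i := by
        show ⌊(n:ℝ) * ((i:ℝ)/n)⌋₊ = i
        rw [mul_div_cancel₀ _ hn'.ne']; simp
      rw [h2]
      rcases lt_max_iff.1 h1 with h | h
      · exact absurd h (lt_irrefl _)
      · linarith
  have hTn : T.Nonempty := by
    obtain ⟨i, hi, hid⟩ := hpos
    refine ⟨some i, ?_⟩
    simp only [T, Finset.mem_filter, Finset.some_mem_insertNone, Finset.mem_range]
    exact ⟨hi, lt_max_of_lt_right (by linarith)⟩
  obtain ⟨a, ha, b, hb, c, hc, h1, h2, h3, h4, h5⟩ := central T hTn x w hxT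
    (by intro o ho; exact (Finset.mem_filter.1 ho).2) (by
      intro c
      rw [Finset.sum_filter_of_ne, Finset.sum_insertNone]
      · rw [add_comm]; exact hsum c
      · intro o _ h
        exact lt_of_le_of_ne (hw0 o) (fun h' => h (by rw [← h', zero_mul])))
  have hpd : ∀ o ∈ T, ∀ o' ∈ T, dist (p (idx o)) (p (idx o')) < 2 * R := by
    intro o ho o' ho'
    rw [← kur_dist x₀]
    have := dist_triangle_left (kuratowski X x₀ (p (idx o))) (kuratowski X x₀ (p (idx o'))) z
    linarith [hd o ho, hd o' ho']
  have hfl : ∀ o ∈ T, (idx o : ℝ) ≤ n * x o ∧ n * x o < idx o + 1 := by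
    intro o ho
    exact ⟨Nat.floor_le (mul_nonneg hn'.le (hxT o ho).1), Nat.lt_floor_add_one _⟩
  have fa := hfl a ha
  have fb := hfl b hb
  have fc := hfl c hc
  refine ⟨idx a, idx b, idx c, ?_, ?_, ?_, ?_, ?_, ?_, hpd a ha b hb, hpd b hb c hc, hpd a ha c hc⟩
  · exact Nat.floor_mono (by gcongr)
  · exact Nat.floor_mono (by gcongr)
  · have : (idx c : ℝ) < n := by nlinarith [(hxT c hc).2]
    exact_mod_cast this
  · have : (2 * idx b : ℝ) < 2 * idx a + n + 2 := by nlinarith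
    exact_mod_cast this.le
  · have : (2 * idx c : ℝ) < 2 * idx b + n + 2 := by nlinarith
    exact_mod_cast this.le
  · have : (2 * idx a + n : ℝ) < 2 * idx c + 2 := by nlinarith
    exact_mod_cast this.le

lemma triple_disc {X : Type u} [MetricSpace X] (x₀ : X) (p : ℕ → X) (n : ℕ) (hn : 0 < n) (r : ℝ)
    (γ : ℝ → X) (hγ : ∀ s, 0 ≤ s → s < 1 → dist (γ s) (p ⌊n * s⌋₊) ≤ 1) (h01 : γ 0 = γ 1)
    (hr : 0 ≤ r)
    (φ : ℝ × ℝ → Linfty X) (hφ : BoundsLoop φ (fun s => kuratowski X x₀ (γ s)))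
    (hnear : ∀ w ∈ D2, Metric.infDist (φ w) (kuratowski X x₀ '' (γ '' Set.Icc 0 1)) ≤ r) :
    ∃ i j k : ℕ, i ≤ j ∧ j ≤ k ∧ k < n ∧ 2 * j ≤ 2 * i + n + 2 ∧ 2 * k ≤ 2 * j + n + 2 ∧
      2 * i + n ≤ 2 * k + 2 ∧ dist (p i) (p j) < 2 * (r + 2) ∧ dist (p j) (p k) < 2 * (r + 2) ∧
      dist (p i) (p k) < 2 * (r + 2) := by
  classical
  have hn' : (0:ℝ) < n := by exact_mod_cast hn
  by_contra hcon
  have hpos : ∀ w ∈ D2, ∃ i < n, dist (φ w) (kuratowski X x₀ (p i)) < r + 2 := by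
    intro w hw
    have hne : (kuratowski X x₀ '' (γ '' Set.Icc 0 1)).Nonempty :=
      ⟨_, _, ⟨0, by simp, rfl⟩, rfl⟩
    obtain ⟨y, ⟨_, ⟨s, hs, rfl⟩, rfl⟩, hy⟩ :=
      (Metric.infDist_lt_iff hne).1 (lt_of_le_of_lt (hnear w hw) (lt_add_one r))
    obtain ⟨s2, h20, h21, h2e⟩ : ∃ s2, 0 ≤ s2 ∧ s2 < 1 ∧ γ s2 = γ s := by
      rcases hs.2.lt_or_eq with h | h
      · exact ⟨s, hs.1, h, rfl⟩
      · exact ⟨0, le_rfl, one_pos, by rw [h01, h]⟩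
    refine ⟨⌊n * s2⌋₊, ?_, ?_⟩
    · rw [Nat.floor_lt (by positivity)]; nlinarith
    · have := hγ s2 h20 h21
      rw [← kur_dist x₀, h2e] at this
      have := dist_triangle (φ w) (kuratowski X x₀ (γ s)) (kuratowski X x₀ (p ⌊n * s2⌋₊))
      linarith
  set F : ℝ × ℝ → ℂ := fun w => ∑ i ∈ Finset.range n,
    ((max 0 (r + 2 - dist (φ w) (kuratowski X x₀ (p i))) : ℝ) : ℂ) *
      Complex.exp (((2 * Real.pi * ((i:ℝ)/n) : ℝ) : ℂ) * Complex.I) with hF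
  have hre : ∀ w, ∀ c : ℝ, (F w * Complex.exp (-((2 * Real.pi * c : ℝ) : ℂ) * Complex.I)).re =
      ∑ i ∈ Finset.range n, max 0 (r + 2 - dist (φ w) (kuratowski X x₀ (p i))) *
        Real.cos (2 * Real.pi * ((i:ℝ) / n - c)) := by
    intro w c
    rw [hF, Finset.sum_mul, Complex.re_sum]
    refine Finset.sum_congr rfl fun i _ => ?_
    rw [mul_assoc, ← Complex.exp_add, Complex.re_ofReal_mul]
    congr 1
    rw [← Complex.exp_ofReal_mul_I_re]
    congr 2
    push_cast; ring
  obtain ⟨⟨K, hK⟩, hbd⟩ := hφ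
  have hcirc : ∀ s : ℝ, ((Real.cos s, Real.sin s) : ℝ × ℝ) ∈ D2 := by
    intro s; show (Real.cos s)^2 + (Real.sin s)^2 ≤ 1; simp
  apply winding F
  · have hφc : ContinuousOn φ D2 := hK.continuousOn
    rw [hF]
    refine continuousOn_finsetSum _ fun i _ => ContinuousOn.mul ?_ continuousOn_const
    refine Complex.continuous_ofReal.comp_continuousOn ?_
    exact continuousOn_const.sup (continuousOn_const.sub ((continuous_id.dist continuous_const).comp_continuousOn hφc))
  · intro w hw h0
    apply hcon
    refine hull x₀ p n hn (r+2) (φ w) 0 0 le_rfl le_rfl one_pos (fun h => absurd h (lt_irrefl _))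
      (hpos w hw) ?_
    intro c
    rw [← hre, h0]; simp
  · intro s hs
    by_contra hns
    rw [Complex.mem_slitPlane_iff, not_or, not_lt, not_not] at hns
    set w : ℝ × ℝ := (Real.cos (2 * Real.pi * s), Real.sin (2 * Real.pi * s)) with hw
    have hwD : w ∈ D2 := hcirc _
    set G := F w * Complex.exp (-(2 * Real.pi * s * Complex.I)) with hG
    obtain ⟨s2, h20, h21, h2e, h2c⟩ : ∃ s2, 0 ≤ s2 ∧ s2 < 1 ∧ γ s2 = γ s ∧
        ∀ c, Real.cos (2 * Real.pi * (s2 - c)) = Real.cos (2 * Real.pi * (s - c)) := by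
      rcases hs.2.lt_or_eq with h | h
      · exact ⟨s, hs.1, h, rfl, fun _ => rfl⟩
      · refine ⟨0, le_rfl, one_pos, by rw [h01, h], fun c => ?_⟩
        rw [h, ← Real.cos_add_two_pi]; congr 1; ring
    have hGr : G = ((G.re : ℝ) : ℂ) := by
      apply Complex.ext <;> simp [hns.2]
    have hFw : F w = (G.re : ℂ) * Complex.exp (((2 * Real.pi * s : ℝ) : ℂ) * Complex.I) := by
      rw [← hGr, hG, mul_assoc, ← Complex.exp_add]
      push_cast
      simp
    apply hcon
    refine hull x₀ p n hn (r+2) (φ w) (-G.re) s2 (by linarith) h20 h21 (fun _ => ?_) (hpos w hwD) ?_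
    · rw [hbd s hs, kur_dist, ← h2e]
      linarith [hγ s2 h20 h21]
    · intro c
      rw [← hre, hFw, mul_assoc, ← Complex.exp_add, Complex.re_ofReal_mul, h2c,
        ← Complex.exp_ofReal_mul_I_re (2 * Real.pi * (s - c))]
      have : (((2 * Real.pi * s : ℝ) : ℂ) * Complex.I + -((2 * Real.pi * c : ℝ) : ℂ) * Complex.I)
        = ((2 * Real.pi * (s - c) : ℝ) : ℂ) * Complex.I := by push_cast; ring
      rw [this]; ring


def IsLoop {X : Type u} [MetricSpace X] (p : ℕ → X) (n : ℕ) : Prop :=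
  p n = p 0 ∧ ∀ t < n, dist (p t) (p (t+1)) ≤ 1

lemma steps_le {X : Type u} [MetricSpace X] (p : ℕ → X) (n : ℕ)
    (h : ∀ t < n, dist (p t) (p (t+1)) ≤ 1) (i j : ℕ) (hij : i ≤ j) (hj : j ≤ n) :
    dist (p i) (p j) ≤ (j:ℝ) - i := by
  induction j, hij using Nat.le_induction with
  | base => simp
  | succ j hij ih =>
    have := dist_triangle (p i) (p j) (p (j+1))
    have := h j (by omega)
    have := ih (by omega)
    push_cast
    linarith

lemma exists_curve {X : Type u} [MetricSpace X] (hX : GeodesicSpace X) (p : ℕ → X) (n : ℕ)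
    (hn : 0 < n) (hp : IsLoop p n) :
    ∃ γ : ℝ → X, LipschitzOnWith n γ (Set.Icc 0 1) ∧ γ 0 = γ 1 ∧
      (∀ s, 0 ≤ s → s < 1 → dist (γ s) (p ⌊n * s⌋₊) ≤ 1) ∧
      ∀ i ≤ n, γ ((i:ℝ)/n) = p i := by
  have hn' : (0:ℝ) < n := by exact_mod_cast hn
  choose e he0 he1 hed using fun i : ℕ => hX (p i) (p (i+1))
  set G : ℝ → X := fun u => e ⌊u⌋₊ ((u - ⌊u⌋₊) * dist (p ⌊u⌋₊) (p (⌊u⌋₊+1))) with hG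
  have hGi : ∀ i : ℕ, G i = p i := by
    intro i; simp [hG, he0]
  have hmem : ∀ u : ℝ, 0 ≤ u → (u - ⌊u⌋₊) * dist (p ⌊u⌋₊) (p (⌊u⌋₊+1)) ∈
      Set.Icc (0:ℝ) (dist (p ⌊u⌋₊) (p (⌊u⌋₊+1))) := by
    intro u hu
    have h1 := Nat.floor_le hu
    have h2 := Nat.lt_floor_add_one u
    have h3 : 0 ≤ dist (p ⌊u⌋₊) (p (⌊u⌋₊+1)) := dist_nonneg
    constructor
    · exact mul_nonneg (by linarith) h3
    · nlinarith
  have hlt : ∀ u : ℝ, 0 ≤ u → u < n → dist (p ⌊u⌋₊) (p (⌊u⌋₊+1)) ≤ 1 := by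
    intro u hu hun
    exact hp.2 _ ((Nat.floor_lt hu).2 hun)
  have hL : ∀ u : ℝ, 0 ≤ u → u < n → dist (p ⌊u⌋₊) (G u) ≤ u - ⌊u⌋₊ := by
    intro u hu hun
    have h1 := Nat.floor_le hu
    have h0 : dist (p ⌊u⌋₊) (G u) = dist (e ⌊u⌋₊ 0) (G u) := by rw [he0]
    rw [h0, hed _ _ ⟨le_rfl, dist_nonneg⟩ _ (hmem u hu), zero_sub, abs_neg,
      abs_of_nonneg (hmem u hu).1]
    have := hlt u hu hun
    nlinarith
  have hR : ∀ u : ℝ, 0 ≤ u → u < n → dist (G u) (p (⌊u⌋₊+1)) ≤ ⌊u⌋₊ + 1 - u := by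
    intro u hu hun
    have h2 := Nat.lt_floor_add_one u
    have h0 : dist (G u) (p (⌊u⌋₊+1)) = dist (G u) (e ⌊u⌋₊ (dist (p ⌊u⌋₊) (p (⌊u⌋₊+1)))) := by
      rw [he1]
    rw [h0, hed _ _ (hmem u hu) _ ⟨dist_nonneg, le_rfl⟩, abs_sub_comm,
      abs_of_nonneg (by linarith [(hmem u hu).2])]
    have := hlt u hu hun
    nlinarith
  have hlip' : ∀ u v : ℝ, 0 ≤ u → u ≤ v → v < n → dist (G u) (G v) ≤ v - u := by
    intro u v hu huv hv
    have hv0 := hu.trans huv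
    rcases (Nat.floor_mono huv).eq_or_lt with h | h
    · have := hlt v hv0 hv
      have e2 : G u = e ⌊v⌋₊ ((u - ⌊v⌋₊) * dist (p ⌊v⌋₊) (p (⌊v⌋₊+1))) := by
        simp only [hG, h]
      have m2 := hmem u hu
      rw [h] at m2
      rw [e2, hed _ _ m2 _ (hmem v hv0), ← sub_mul, abs_mul, abs_of_nonneg dist_nonneg,
        abs_sub_comm, abs_of_nonneg (by linarith)]
      have h5 : v - ⌊v⌋₊ - (u - ⌊v⌋₊) = v - u := by ring
      rw [h5]
      nlinarith
    · have h1 := hR u hu (by linarith)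
      have h2 := hL v hv0 hv
      have h3 := steps_le p n hp.2 (⌊u⌋₊+1) ⌊v⌋₊ h ((Nat.floor_lt hv0).2 hv).le
      have h4 := dist_triangle4 (G u) (p (⌊u⌋₊+1)) (p ⌊v⌋₊) (G v)
      push_cast at h3
      linarith
  have hlip : ∀ u v : ℝ, 0 ≤ u → u ≤ v → v ≤ n → dist (G u) (G v) ≤ v - u := by
    intro u v hu huv hv
    rcases hv.lt_or_eq with h | h
    · exact hlip' u v hu huv h
    · rcases huv.eq_or_lt with h' | h'
      · rw [h']; simp
      · rw [h, hGi]
        have hun : u < n := by linarith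
        have h1 := hR u hu hun
        have hfl : ⌊u⌋₊ + 1 ≤ n := (Nat.floor_lt hu).2 hun
        have h3 := steps_le p n hp.2 (⌊u⌋₊+1) n hfl le_rfl
        have h4 := dist_triangle (G u) (p (⌊u⌋₊+1)) (p n)
        push_cast at h3
        linarith
  refine ⟨fun s => G (n * s), ?_, ?_, ?_, ?_⟩
  · apply LipschitzOnWith.of_dist_le_mul
    have key : ∀ s ∈ Set.Icc (0:ℝ) 1, ∀ t ∈ Set.Icc (0:ℝ) 1, s ≤ t →
        dist (G (n * s)) (G (n * t)) ≤ n * dist s t := by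
      intro s hs t ht hst
      rw [dist_comm s t, Real.dist_eq, abs_of_nonneg (by linarith)]
      have := hlip (n * s) (n * t) (mul_nonneg hn'.le hs.1) (by gcongr) (by nlinarith [ht.2])
      linarith
    intro s hs t ht
    rcases le_total s t with h | h
    · simpa using key s hs t ht h
    · rw [dist_comm, dist_comm s t]; simpa using key t ht s hs h
  · show G (n * 0) = G (n * 1)
    have h0 := hGi 0
    have h1 := hGi n
    simp only [Nat.cast_zero] at h0
    rw [mul_zero, mul_one, h0, h1, hp.1]
  · intro s h0 h1
    have hns : (n:ℝ) * s < n := by nlinarith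
    have := hL (n*s) (by positivity) hns
    have := Nat.lt_floor_add_one (n * s)
    rw [dist_comm]; show dist (p _) (G _) ≤ 1; linarith
  · intro i _
    show G (n * ((i:ℝ)/n)) = p i
    rw [mul_div_cancel₀ _ hn'.ne', hGi]

lemma loop_triple {X : Type u} [MetricSpace X] (x₀ : X)
    (hX : GeodesicSpace X)
    (h : ∃ ε : ℝ, 0 < ε ∧ ε < 1 ∧ ∃ s₀ > (0:ℝ), ∀ γ : ℝ → X, IsLipLoop γ →
      s₀ ≤ loopLength γ →
      ∃ φ : ℝ × ℝ → Linfty X, BoundsLoop φ (fun s => kuratowski X x₀ (γ s)) ∧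
        ∀ w ∈ D2, Metric.infDist (φ w) (kuratowski X x₀ '' (γ '' Set.Icc 0 1)) ≤
          (1 - ε) * (3 / 32) * loopLength γ) :
    ∃ N : ℕ, ∀ n ≥ N, ∀ p : ℕ → X, IsLoop p n → 
    ∃ i j k : ℕ, i ≤ j ∧ j ≤ k ∧ k < n ∧ 2 * j ≤ 2 * i + n + 2 ∧ 2 * k ≤ 2 * j + n + 2 ∧
      2 * i + n ≤ 2 * k + 2 ∧ dist (p i) (p j) ≤ 3 / 16 * n - 1 ∧ 
      dist (p j) (p k) ≤ 3 / 16 * n - 1 ∧ dist (p i) (p k) ≤ 3 / 16 * n - 1 := by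
  obtain ⟨ε, hε, hε1, s₀, hs₀, h⟩ := h
  obtain ⟨N1, hN1⟩ := exists_nat_gt (80 / (3 * ε))
  obtain ⟨N2, hN2⟩ := exists_nat_gt (16 * (s₀ + 1) / 3)
  refine ⟨max 1 (max N1 N2), fun n hn p hp => ?_⟩
  have hn0 : 0 < n := lt_of_lt_of_le one_pos ((le_max_left _ _).trans hn)
  have hn1 : (N1:ℝ) ≤ n := by
    exact_mod_cast ((le_max_left _ _).trans (le_max_right _ _)).trans hn
  have hn2 : (N2:ℝ) ≤ n := by
    exact_mod_cast ((le_max_right _ _).trans (le_max_right _ _)).trans hn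
  have hn' : (0:ℝ) < n := by exact_mod_cast hn0
  have b1 : 80 < n * (3 * ε) := by
    rw [div_lt_iff₀ (by positivity)] at hN1
    nlinarith
  have b2 : 16 * (s₀ + 1) / 3 < n := by linarith
  obtain ⟨γ, hγL, hγ01, hγn, hγv⟩ := exists_curve hX p n hn0 hp
  have hvar : eVariationOn γ (Set.Icc 0 1) ≤ n := by
    have h1 := hγL.comp_eVariationOn_le (g := id) (s := Set.Icc (0:ℝ) 1) (fun x hx => hx)
    have h2 := (monotoneOn_id (s := Set.Icc (0:ℝ) 1)).eVariationOn_le (a := 0) (b := 1)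
      (by simp) (by simp)
    simp only [Set.inter_self, id, sub_zero, ENNReal.ofReal_one] at h2
    calc _ ≤ _ := h1
      _ ≤ (n:ℝ≥0∞) * 1 := by
        gcongr
        · simp
      _ = n := mul_one _
  have hfin : eVariationOn γ (Set.Icc 0 1) ≠ ⊤ := ne_top_of_le_ne_top (by simp) hvar
  have hlen : loopLength γ ≤ n := by
    unfold loopLength
    exact ENNReal.toReal_le_of_le_ofReal hn'.le (by simpa using hvar)
  have hlen0 : 0 ≤ loopLength γ := ENNReal.toReal_nonneg
  rcases lt_or_ge (loopLength γ) s₀ with hs | hs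
  · have hd : ∀ i ≤ n, ∀ j ≤ n, dist (p i) (p j) ≤ 3/16 * n - 1 := by
      intro i hi j hj
      have hm : ∀ i ≤ n, (i:ℝ)/n ∈ Set.Icc (0:ℝ) 1 := by
        intro i hi
        refine ⟨by positivity, ?_⟩
        rw [div_le_one hn']; exact_mod_cast hi
      have := eVariationOn.edist_le γ (hm i hi) (hm j hj)
      rw [hγv i hi, hγv j hj] at this
      have h2 : dist (p i) (p j) ≤ loopLength γ := by
        rw [dist_edist]
        exact ENNReal.toReal_mono hfin this
      linarith
    refine ⟨0, n/3, 2*n/3, by omega, by omega, by omega, by omega, by omega, by omega,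
      hd _ (by omega) _ (by omega), hd _ (by omega) _ (by omega), hd _ (by omega) _ (by omega)⟩
  · obtain ⟨φ, hφ, hφn⟩ := h γ ⟨⟨n, hγL⟩, hγ01⟩ hs
    have hr0 : 0 ≤ (1 - ε) * (3 / 32) * loopLength γ := by
      have : 0 < 1 - ε := by linarith
      positivity
    obtain ⟨i, j, k, h1, h2, h3, h4, h5, h6, h7, h8, h9⟩ :=
      triple_disc x₀ p n hn0 _ γ hγn hγ01 hr0 φ hφ hφn
    have hb : 2 * ((1 - ε) * (3 / 32) * loopLength γ + 2) ≤ 3/16 * n - 1 := by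
      have : (1 - ε) * loopLength γ ≤ (1 - ε) * n := by
        apply mul_le_mul_of_nonneg_left hlen; linarith
      nlinarith
    exact ⟨i, j, k, h1, h2, h3, h4, h5, h6, by linarith, by linarith, by linarith⟩


def Steps {X : Type u} [MetricSpace X] (p : ℕ → X) (n : ℕ) : Prop :=
  ∀ t < n, dist (p t) (p (t+1)) ≤ 1

def JJ {X : Type u} (E : X → X → ℝ) (p : ℕ → X) (n : ℕ) : ℝ :=
  ∑ t ∈ Finset.range n, E (p t) (p (t+1))

def cat {X : Type u} (p : ℕ → X) (n : ℕ) (q : ℕ → X) : ℕ → X :=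
  fun t => if t ≤ n then p t else q (t - n)

def shf {X : Type u} (p : ℕ → X) (i : ℕ) : ℕ → X := fun t => p (i + t)

def rev {X : Type u} (r : ℕ → X) (m : ℕ) : ℕ → X := fun t => r (m - t)

lemma cat_le {X : Type u} (p : ℕ → X) (n : ℕ) (q : ℕ → X) {t : ℕ} (h : t ≤ n) :
    cat p n q t = p t := by simp [cat, h]

lemma cat_add {X : Type u} (p : ℕ → X) (n : ℕ) (q : ℕ → X) (h : p n = q 0) (t : ℕ) :
    cat p n q (n + t) = q t := by
  rcases Nat.eq_zero_or_pos t with rfl | ht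
  · simp [cat, h]
  · have : ¬ (n + t ≤ n) := by omega
    simp [cat, this]

lemma JJ_cat {X : Type u} (E : X → X → ℝ) (p : ℕ → X) (n : ℕ) (q : ℕ → X) (h : p n = q 0) (m : ℕ) :
    JJ E (cat p n q) (n + m) = JJ E p n + JJ E q m := by
  unfold JJ
  rw [Finset.sum_range_add]
  congr 1
  · refine Finset.sum_congr rfl fun t ht => ?_
    rw [Finset.mem_range] at ht
    rw [cat_le _ _ _ ht.le, cat_le _ _ _ ht]
  · refine Finset.sum_congr rfl fun t ht => ?_
    rw [add_assoc, cat_add _ _ _ h, cat_add _ _ _ h]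

lemma Steps_cat {X : Type u} [MetricSpace X] {p : ℕ → X} {n : ℕ} {q : ℕ → X} (h : p n = q 0) {m : ℕ}
    (hp : Steps p n) (hq : Steps q m) : Steps (cat p n q) (n + m) := by
  intro t ht
  rcases lt_or_ge t n with h1 | h1
  · rw [cat_le _ _ _ h1.le, cat_le _ _ _ h1]; exact hp t h1
  · obtain ⟨s, rfl⟩ := Nat.exists_eq_add_of_le h1
    rw [add_assoc, cat_add _ _ _ h, cat_add _ _ _ h]; exact hq s (by omega)

lemma JJ_rev {X : Type u} (E : X → X → ℝ) (hE : ∀ x y, E y x = - E x y) (r : ℕ → X) (m : ℕ) :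
    JJ E (rev r m) m = - JJ E r m := by
  unfold JJ
  rw [← Finset.sum_range_reflect, ← Finset.sum_neg_distrib]
  refine Finset.sum_congr rfl fun t ht => ?_
  rw [Finset.mem_range] at ht
  unfold rev
  rw [show m - (m - 1 - t) = t + 1 by omega, show m - (m - 1 - t + 1) = t by omega, hE]

lemma Steps_rev {X : Type u} [MetricSpace X] {r : ℕ → X} {m : ℕ} (h : Steps r m) :
    Steps (rev r m) m := by
  intro t ht
  unfold rev
  have := h (m - (t+1)) (by omega)
  rw [show m - (t+1) + 1 = m - t by omega, dist_comm] at this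
  exact this

lemma JJ_shift {X : Type u} (E : X → X → ℝ) (p : ℕ → X) (i m : ℕ) :
    JJ E p (i + m) = JJ E p i + JJ E (shf p i) m := by
  unfold JJ; rw [Finset.sum_range_add]; rfl

lemma Steps_shift {X : Type u} [MetricSpace X] {p : ℕ → X} {i m n : ℕ} (h : Steps p n)
    (hm : i + m ≤ n) : Steps (shf p i) m := by
  intro t ht
  exact h (i + t) (by omega)

lemma rotate {X : Type u} [MetricSpace X] (p : ℕ → X) (n i : ℕ) (hi : i ≤ n) (hp : IsLoop p n) :
    ∃ q : ℕ → X, IsLoop q n ∧ (∀ E : X → X → ℝ, JJ E q n = JJ E p n) ∧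
      (∀ t, i + t ≤ n → q t = p (i + t)) ∧ ∀ t, q (n - i + t) = p t := by
  have h0 : (shf p i) (n - i) = p 0 := by
    show p (i + (n - i)) = p 0
    rw [show i + (n - i) = n by omega, hp.1]
  have hc : ∀ t, cat (shf p i) (n - i) p (n - i + t) = p t := cat_add _ _ _ h0
  refine ⟨cat (shf p i) (n - i) p, ⟨?_, ?_⟩, ?_, ?_, hc⟩
  · have := hc i
    rw [show n - i + i = n by omega] at this
    rw [this, cat_le _ _ _ (Nat.zero_le _)]; rfl
  · have h1 : Steps (shf p i) (n - i) := Steps_shift (n := n) hp.2 (by omega)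
    have h2 : Steps p i := fun t ht => hp.2 t (by omega)
    have := Steps_cat h0 h1 h2
    rw [show n - i + i = n by omega] at this
    exact this
  · intro E
    have := JJ_cat E _ _ _ h0 i
    rw [show n - i + i = n by omega] at this
    rw [this]
    have h3 := JJ_shift E p i (n - i)
    rw [show i + (n - i) = n by omega] at h3
    rw [h3, add_comm]
  · intro t ht
    rw [cat_le _ _ _ (by omega)]; rfl

lemma split {X : Type u} [MetricSpace X] (p : ℕ → X) (n i j m : ℕ) (r : ℕ → X) (hij : i ≤ j)
    (hj : j ≤ n) (hp : IsLoop p n) (hr : Steps r m) (h0 : r 0 = p i) (h1 : r m = p j) :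
    ∃ q q' : ℕ → X, IsLoop q (j - i + m) ∧ IsLoop q' (i + m + (n - j)) ∧
      (∀ E : X → X → ℝ, (∀ x y, E y x = - E x y) →
        JJ E p n = JJ E q (j - i + m) + JJ E q' (i + m + (n - j))) ∧
      (∀ t ≤ j - i, q t = p (i + t)) ∧ (∀ t, q (j - i + t) = r (m - t)) := by
  have c1 : (shf p i) (j - i) = rev r m 0 := by
    show p (i + (j - i)) = r (m - 0)
    rw [show i + (j - i) = j by omega, Nat.sub_zero, h1]
  have c2 : p i = r 0 := h0.symm
  have c3 : cat p i r (i + m) = (shf p j) 0 := by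
    rw [cat_add _ _ _ c2]; exact h1
  refine ⟨cat (shf p i) (j - i) (rev r m), cat (cat p i r) (i + m) (shf p j),
    ⟨?_, ?_⟩, ⟨?_, ?_⟩, ?_, ?_, ?_⟩
  · rw [cat_add _ _ _ c1, cat_le _ _ _ (Nat.zero_le _)]
    simp [rev, shf, h0]
  · exact Steps_cat c1 (Steps_shift (n := n) hp.2 (by omega)) (Steps_rev hr)
  · rw [cat_add _ _ _ c3, cat_le _ _ _ (Nat.zero_le _), cat_le _ _ _ (Nat.zero_le _)]
    show p (j + (n - j)) = p 0
    rw [show j + (n - j) = n by omega, hp.1]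
  · exact Steps_cat c3 (Steps_cat c2 (fun t ht => hp.2 t (by omega)) hr)
      (Steps_shift (n := n) hp.2 (by omega))
  · intro E hE
    rw [JJ_cat _ _ _ _ c1, JJ_cat _ _ _ _ c3, JJ_cat _ _ _ _ c2, JJ_rev E hE]
    have h3 := JJ_shift E p j (n - j)
    have h4 := JJ_shift E p i (j - i)
    rw [show j + (n - j) = n by omega] at h3
    rw [show i + (j - i) = j by omega] at h4
    rw [h3, h4]; ring
  · intro t ht; rw [cat_le _ _ _ ht]; rfl
  · intro t; rw [cat_add _ _ _ c1]; rfl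

lemma chord {X : Type u} [MetricSpace X] (hX : GeodesicSpace X) (x y : X) :
    ∃ (m : ℕ) (r : ℕ → X), (m:ℝ) < dist x y + 1 ∧ dist x y ≤ m ∧ Steps r m ∧ r 0 = x ∧ r m = y ∧
      ∀ s t, s ≤ t → t ≤ m → (t:ℝ) - s ≤ dist (r s) (r t) + 1 := by
  obtain ⟨g, g0, g1, gd⟩ := hX x y
  have hd : 0 ≤ dist x y := dist_nonneg
  set m := ⌈dist x y⌉₊ with hm
  have hlt : (m:ℝ) < dist x y + 1 := Nat.ceil_lt_add_one hd
  have hle : dist x y ≤ m := Nat.le_ceil _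
  rcases Nat.eq_zero_or_pos m with h0 | hpos
  · refine ⟨m, fun _ => x, hlt, hle, ?_, rfl, ?_, ?_⟩
    · intro t ht; simp
    · rw [h0] at hle
      exact dist_le_zero.1 (by simpa using hle)
    · intro s t hst htm
      have : t = 0 := by omega
      have : s = 0 := by omega
      subst_vars; simp
  · have hm' : (0:ℝ) < m := by exact_mod_cast hpos
    set c := dist x y / m with hc
    have hcm : c * m = dist x y := div_mul_cancel₀ _ hm'.ne'
    have hc0 : 0 ≤ c := by positivity
    have hc1 : c ≤ 1 := (div_le_one hm').2 hle
    have hmem : ∀ t : ℕ, t ≤ m → c * t ∈ Set.Icc (0:ℝ) (dist x y) := by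
      intro t ht
      have : (t:ℝ) ≤ m := by exact_mod_cast ht
      exact ⟨by positivity, by rw [← hcm]; gcongr⟩
    have hdd : ∀ s t : ℕ, s ≤ t → t ≤ m → dist (g (c * s)) (g (c * t)) = c * (t - s) := by
      intro s t hst ht
      have : (s:ℝ) ≤ t := by exact_mod_cast hst
      rw [gd _ (hmem s (by omega)) _ (hmem t ht), abs_sub_comm, ← mul_sub, abs_of_nonneg]
      exact mul_nonneg hc0 (by linarith)
    refine ⟨m, fun t => g (c * t), hlt, hle, ?_, by simpa using g0, by show g (c * m) = y; rw [hcm]; exact g1, ?_⟩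
    · intro t ht
      show dist (g (c * t)) (g (c * ((t+1:ℕ):ℝ))) ≤ 1
      rw [hdd t (t+1) (by omega) (by omega)]
      push_cast; linarith
    · intro s t hst ht
      show _ ≤ dist (g (c * s)) (g (c * t)) + 1
      rw [hdd s t hst ht]
      have h1 : (s:ℝ) ≤ t := by exact_mod_cast hst
      have h2 : (t:ℝ) ≤ m := by exact_mod_cast ht
      have h3 : (0:ℝ) ≤ s := by positivity
      have h4 : (1 - c) * m ≤ 1 := by nlinarith
      nlinarith

lemma largest {X : Type u} [MetricSpace X] (p : ℕ → X) (n : ℕ) (hp : IsLoop p n) (D : ℝ)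
    (h : ∃ i j k : ℕ, i ≤ j ∧ j ≤ k ∧ k < n ∧ 2 * j ≤ 2 * i + n + 2 ∧ 2 * k ≤ 2 * j + n + 2 ∧
      2 * i + n ≤ 2 * k + 2 ∧ dist (p i) (p j) ≤ D ∧
      dist (p j) (p k) ≤ D ∧ dist (p i) (p k) ≤ D) :
    ∃ q a, IsLoop q n ∧ (∀ E : X → X → ℝ, JJ E q n = JJ E p n) ∧ a ≤ n ∧ n ≤ 3 * a ∧ 2 * a ≤ n + 2 ∧
      dist (q 0) (q a) ≤ D := by
  obtain ⟨i, j, k, h1, h2, h3, h4, h5, h6, h7, h8, h9⟩ := h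
  by_cases c1 : n ≤ 3 * (j - i)
  · obtain ⟨q, hq, hJ, hl, hr⟩ := rotate p n i (by omega) hp
    refine ⟨q, j - i, hq, hJ, by omega, c1, by omega, ?_⟩
    rw [hl 0 (by omega), hl (j - i) (by omega), show i + (j - i) = j by omega]
    exact h7
  by_cases c2 : n ≤ 3 * (k - j)
  · obtain ⟨q, hq, hJ, hl, hr⟩ := rotate p n j (by omega) hp
    refine ⟨q, k - j, hq, hJ, by omega, c2, by omega, ?_⟩
    rw [hl 0 (by omega), hl (k - j) (by omega), show j + (k - j) = k by omega]
    exact h8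
  · obtain ⟨q, hq, hJ, hl, hr⟩ := rotate p n k (by omega) hp
    refine ⟨q, n - k + i, hq, hJ, by omega, by omega, by omega, ?_⟩
    rw [hl 0 (by omega), hr, dist_comm]
    exact h9

def Bd (X : Type u) [MetricSpace X] (𝓔 : Set (X → X → ℝ)) (κ C : ℝ) : Prop :=
  ∀ (p : ℕ → X) (n : ℕ), IsLoop p n → ∀ E ∈ 𝓔, |JJ E p n| ≤ κ * (n:ℝ)^2 + C

lemma split_bd {X : Type u} [MetricSpace X] (hX : GeodesicSpace X) (𝓔 : Set (X → X → ℝ))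
    (h𝓔 : ∀ E ∈ 𝓔, ∀ x y, E y x = - E x y) (κ C : ℝ) (hκ : 0 ≤ κ) (hB : Bd X 𝓔 κ C)
    (p : ℕ → X) (n i j : ℕ) (hij : i ≤ j) (hj : j ≤ n) (hp : IsLoop p n) (M : ℝ)
    (hM : dist (p i) (p j) ≤ M - 1) (e : ℝ) (he : (e:ℝ) = (j:ℝ) - i) (E) (hE : E ∈ 𝓔) :
    |JJ E p n| ≤ κ * ((e + M)^2 + (n - e + M)^2) + 2 * C := by
  obtain ⟨m, r, hm1, hm2, hr, hr0, hrm, _⟩ := chord hX (p i) (p j)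
  obtain ⟨q, q', hq, hq', hJ, _⟩ := split p n i j m r hij hj hp hr hr0 hrm
  rw [hJ E (h𝓔 E hE)]
  have a1 := hB _ _ hq E hE
  have a2 := hB _ _ hq' E hE
  have a3 := abs_add_le (JJ E q (j - i + m)) (JJ E q' (i + m + (n - j)))
  push_cast [hij, hj] at a1 a2
  have hmM : (m:ℝ) ≤ M := by linarith
  have hij' : (i:ℝ) ≤ j := by exact_mod_cast hij
  have hjn' : (j:ℝ) ≤ n := by exact_mod_cast hj
  have hi0 : (0:ℝ) ≤ i := by positivity
  have b1 : ((j:ℝ) - i + m)^2 ≤ (e + M)^2 := by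
    apply pow_le_pow_left₀ <;> [skip; linarith]
    have : (0:ℝ) ≤ m := by positivity
    linarith
  have b2 : ((i:ℝ) + m + (n - j))^2 ≤ (n - e + M)^2 := by
    apply pow_le_pow_left₀ <;> [skip; linarith]
    have : (0:ℝ) ≤ m := by positivity
    linarith
  nlinarith


lemma arith1 (n a M : ℝ) (hn : 10^6 ≤ n) (h1 : n ≤ 3 * a) (h2 : 2 * a ≤ n + 2) (h0 : 0 ≤ M)
    (hM : M ≤ 3/16 * n) (h : 9999/10000 * n^2 < (a + M)^2 + (n - a + M)^2) :
    a ≤ 0.335 * n ∧ 0.187 * n + 1 ≤ M := by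
  norm_num at hn
  constructor
  · by_contra hc
    push Not at hc
    have k1 : (a - 0.335 * n) * (0.665 * n - a) ≥ 0 :=
      mul_nonneg (by linarith) (by linarith)
    have k2 : M * n ≤ 3/16 * n * n := by nlinarith
    have k3 : M * M ≤ (3/16 * n) * (3/16 * n) := by nlinarith
    nlinarith
  · by_contra hc
    push Not at hc
    have hc' : M ≤ 0.18701 * n := by linarith
    have k1 : (a - n/3) * (2/3 * n - a) ≥ 0 :=
      mul_nonneg (by linarith) (by linarith)
    have k2 : M * n ≤ 0.18701 * n * n := by nlinarith
    have k3 : M * M ≤ (0.18701 * n) * (0.18701 * n) := by nlinarith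
    nlinarith

lemma arith2 (n e M : ℝ) (hn : 10^6 ≤ n) (h1 : 0.1232 * n ≤ e) (h2 : e ≤ 0.8768 * n) (h0 : 0 ≤ M)
    (hM : M ≤ 0.098 * n) :
    (e + M)^2 + (n - e + M)^2 ≤ 9999/10000 * n^2 := by
  norm_num at hn
  have k1 : (e - 0.1232 * n) * (0.8768 * n - e) ≥ 0 :=
    mul_nonneg (by linarith) (by linarith)
  have k2 : M * n ≤ 0.098 * n * n := by nlinarith
  have k3 : M * M ≤ (0.098 * n) * (0.098 * n) := by nlinarith
  nlinarith

lemma arith3 (n a m e b : ℝ) (hn : 10^6 ≤ n) (h1 : n ≤ 3 * a) (h2 : a ≤ 0.335 * n)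
    (h4 : m ≤ 3/16 * n) (h4' : 0 ≤ m) (h5 : e ≤ 0.1232 * n) (h6 : a + m - e ≤ 2 * b)
    (h7 : 2 * b ≤ a + m + 2) :
    (b + 3/16 * (a+m))^2 + (a + m - b + 3/16 * (a+m))^2 + (n - a + m)^2 ≤ 9999/10000 * n^2 := by
  norm_num at hn
  have k1 : ((a+m)/2 - b) * ((a+m)/2 - b) ≤ (0.0616 * n) * (0.0616 * n) := by
    have p1 : (a+m)/2 - b ≤ 0.0616 * n := by linarith
    have p2 : -(0.0616 * n) ≤ (a+m)/2 - b := by linarith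
    nlinarith
  have k2 : (a+m) * (a+m) ≤ (0.5225 * n) * (0.5225 * n) := by
    apply mul_self_le_mul_self <;> linarith
  have k3 : (n-a+m)* (n-a+m) ≤ (0.85417 * n) * (0.85417 * n) := by
    apply mul_self_le_mul_self <;> linarith
  have e1 : (b + 3/16 * (a+m))^2 + (a + m - b + 3/16 * (a+m))^2 =
    2 * (((a+m)/2 - b) * ((a+m)/2 - b)) + (1/2 + 3/8 + 9/128) * ((a+m) * (a+m)) := by ring
  rw [e1]
  nlinarith

lemma decay {X : Type u} [MetricSpace X] (hX : GeodesicSpace X) (𝓔 : Set (X → X → ℝ))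
    (h𝓔 : ∀ E ∈ 𝓔, ∀ x y, E y x = - E x y) (N : ℕ)
    (hN : ∀ n ≥ N, ∀ p : ℕ → X, IsLoop p n →
      ∃ i j k : ℕ, i ≤ j ∧ j ≤ k ∧ k < n ∧ 2 * j ≤ 2 * i + n + 2 ∧ 2 * k ≤ 2 * j + n + 2 ∧
      2 * i + n ≤ 2 * k + 2 ∧ dist (p i) (p j) ≤ 3 / 16 * n - 1 ∧
      dist (p j) (p k) ≤ 3 / 16 * n - 1 ∧ dist (p i) (p k) ≤ 3 / 16 * n - 1)
    (κ C : ℝ) (hκ : 0 ≤ κ) (hC : 0 ≤ C) (hB : Bd X 𝓔 κ C) (n : ℕ) (hn : 2 * N + 10^6 ≤ n)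
    (p₀ : ℕ → X) (hp₀ : IsLoop p₀ n) (E) (hE : E ∈ 𝓔) :
    |JJ E p₀ n| ≤ κ * (9999/10000) * (n:ℝ)^2 + 3 * C := by
  obtain ⟨p, a, hp, hJ, han, ha1, ha2, hd⟩ := largest p₀ n hp₀ _ (hN n (by omega) p₀ hp₀)
  rw [← hJ]
  clear hJ hp₀ p₀
  have hn' : (10:ℝ)^6 ≤ n := by
    have : 10^6 ≤ n := by omega
    exact_mod_cast this
  have ha1' : (n:ℝ) ≤ 3 * a := by exact_mod_cast ha1
  have ha2' : (2:ℝ) * a ≤ n + 2 := by exact_mod_cast ha2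
  have fin : ∀ Q K : ℝ, |JJ E p n| ≤ κ * Q + K → Q ≤ 9999/10000 * (n:ℝ)^2 → K ≤ 3 * C →
      |JJ E p n| ≤ κ * (9999/10000) * (n:ℝ)^2 + 3 * C := by
    intro Q K h1 h2 h3
    have := mul_le_mul_of_nonneg_left h2 hκ
    linarith
  obtain ⟨m, r, hm1, hm2, hr, hr0, hrm, hgeo⟩ := chord hX (p 0) (p a)
  rcases le_or_gt (((a:ℝ) + (dist (p 0) (p a) + 1))^2 + (n - a + (dist (p 0) (p a) + 1))^2)
    (9999/10000 * (n:ℝ)^2) with c1 | c1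
  · exact fin _ _ (split_bd hX 𝓔 h𝓔 κ C hκ hB p n 0 a (Nat.zero_le _) han hp
      (dist (p 0) (p a) + 1) (by linarith) a (by simp) E hE) c1 (by linarith)
  obtain ⟨u1, u2⟩ := arith1 n a _ hn' ha1' ha2' (by positivity) (by linarith) c1
  have hm0 : (0:ℝ) ≤ m := by positivity
  have hmu : (m:ℝ) ≤ 3/16 * n := by linarith
  obtain ⟨q, q', hq, hq', hJ, hqc, hqg⟩ := split p n 0 a m r (Nat.zero_le _) han hp hr hr0 hrm
  simp only [Nat.sub_zero, zero_add] at hq hq' hJ hqc hqg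
  have hn1 : N ≤ a + m := by
    have : (0.5:ℝ) * n ≤ a + m := by norm_num at hn'; linarith
    have : (n:ℝ) ≤ 2 * (a + m : ℕ) := by push_cast; linarith
    have : n ≤ 2 * (a + m) := by exact_mod_cast this
    omega
  obtain ⟨i, j, k, g1, g2, g3, g4, g5, g6, g7, g8, g9⟩ := hN (a+m) hn1 q hq
  push_cast at g7 g8 g9
  have g1' : (i:ℝ) ≤ j := by exact_mod_cast g1
  have g2' : (j:ℝ) ≤ k := by exact_mod_cast g2
  have g3' : (k:ℝ) ≤ a + m := by exact_mod_cast g3.le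
  have g4' : (2:ℝ) * j ≤ 2 * i + (a+m) + 2 := by exact_mod_cast g4
  have g5' : (2:ℝ) * k ≤ 2 * j + (a+m) + 2 := by exact_mod_cast g5
  have g6' : (2:ℝ) * i + (a+m) ≤ 2 * k + 2 := by exact_mod_cast g6
  -- the split of the small loop
  have key : ∀ s t : ℕ, ∀ e b : ℝ, s ≤ t → t ≤ a + m → dist (q s) (q t) ≤ 3/16 * ((a:ℝ) + m) - 1 →
      e ≤ 0.1232 * n → (b = t - s ∨ b = a + m - (t - s)) → (a:ℝ) + m - e ≤ 2 * b →
      2 * b ≤ a + m + 2 → |JJ E p n| ≤ κ * (9999/10000) * (n:ℝ)^2 + 3 * C := by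
    intro s t e b hst ht hdist he hb hb1 hb2
    have s1 := split_bd hX 𝓔 h𝓔 κ C hκ hB q (a+m) s t hst ht hq _ hdist _ rfl E hE
    have s2 := hB q' _ hq' E hE
    have s3 := abs_add_le (JJ E q (a+m)) (JJ E q' (m + (n-a)))
    rw [hJ E (h𝓔 E hE)] at fin ⊢
    push_cast [han] at s1 s2
    have s4 := arith3 n a m e b hn' ha1' u1 hmu hm0 he hb1 hb2
    refine fin _ (3 * C) ?_ s4 le_rfl
    have e1 : (m + ((n:ℝ) - a))^2 = (n - a + m)^2 := by ring
    rw [e1] at s2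
    rcases hb with hb | hb
    · rw [← hb] at s1
      linarith
    · have hb' : (t:ℝ) - s = a + m - b := by linarith
      rw [hb'] at s1
      have e2 : (a:ℝ) + m - (a + m - b) = b := by ring
      rw [e2] at s1
      linarith
  rcases le_total j a with hja | hja
  · rcases le_or_gt (0.1232 * (n:ℝ)) ((j:ℝ) - i) with c2 | c2
    · rw [hqc i (by omega), hqc j hja] at g7
      refine fin _ _ (split_bd hX 𝓔 h𝓔 κ C hκ hB p n i j g1 (by omega) hp
        (3/16 * ((a:ℝ) + m)) (by linarith) _ rfl E hE) ?_ (by linarith)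
      apply arith2 _ _ _ hn' c2
      · norm_num at hn'; linarith
      · positivity
      · linarith
    · rcases le_total ((k:ℝ) - j) (a + m - (k - i)) with c3 | c3
      · exact key i k ((j:ℝ) - i) _ (by omega) (by omega) g9 c2.le (Or.inr rfl) (by linarith)
          (by linarith)
      · exact key j k ((j:ℝ) - i) _ (by omega) (by omega) g8 c2.le (Or.inl rfl) (by linarith)
          (by linarith)
  · have he : (k:ℝ) - j ≤ 0.1232 * n := by
      obtain ⟨j', rfl⟩ := Nat.exists_eq_add_of_le hja
      obtain ⟨k', rfl⟩ := Nat.exists_eq_add_of_le (hja.trans g2)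
      rw [hqg, hqg] at g8
      have h1 := hgeo (m - k') (m - j') (by omega) (by omega)
      rw [dist_comm, Nat.cast_sub (by omega), Nat.cast_sub (by omega)] at h1
      push_cast
      linarith
    rcases le_total ((j:ℝ) - i) (a + m - (k - i)) with c3 | c3
    · exact key i k ((k:ℝ) - j) _ (by omega) (by omega) g9 he (Or.inr rfl) (by linarith)
          (by linarith)
    · exact key i j ((k:ℝ) - j) _ (by omega) (by omega) g7 he (Or.inl rfl) (by linarith)
          (by linarith)

lemma subquad {X : Type u} [MetricSpace X] (hX : GeodesicSpace X) (𝓔 : Set (X → X → ℝ))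
    (h𝓔 : ∀ E ∈ 𝓔, ∀ x y, E y x = - E x y) (N : ℕ)
    (hN : ∀ n ≥ N, ∀ p : ℕ → X, IsLoop p n →
      ∃ i j k : ℕ, i ≤ j ∧ j ≤ k ∧ k < n ∧ 2 * j ≤ 2 * i + n + 2 ∧ 2 * k ≤ 2 * j + n + 2 ∧
      2 * i + n ≤ 2 * k + 2 ∧ dist (p i) (p j) ≤ 3 / 16 * n - 1 ∧
      dist (p j) (p k) ≤ 3 / 16 * n - 1 ∧ dist (p i) (p k) ≤ 3 / 16 * n - 1)
    (h1 : Bd X 𝓔 1 0) (κ : ℝ) (hκ : 0 < κ) : ∃ C, 0 ≤ C ∧ Bd X 𝓔 κ C := by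
  obtain ⟨Q, hQ⟩ : ∃ Q, Q = 2 * N + 10^6 := ⟨_, rfl⟩
  have main : ∀ k : ℕ, ∃ C, 0 ≤ C ∧ Bd X 𝓔 ((9999/10000:ℝ)^k) C := by
    intro k
    induction k with
    | zero => exact ⟨0, le_rfl, by simpa using h1⟩
    | succ k ih =>
      obtain ⟨C, hC, hB⟩ := ih
      refine ⟨3 * C + (Q:ℝ)^2, by positivity, ?_⟩
      intro p n hp E hE
      rcases le_or_gt Q n with hn | hn
      · have := decay hX 𝓔 h𝓔 N hN _ C (by positivity) hC hB n (hQ ▸ hn) p hp E hE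
        rw [pow_succ]
        have : 0 ≤ (Q:ℝ)^2 := by positivity
        linarith
      · have h2 := h1 p n hp E hE
        have h3 : (n:ℝ)^2 ≤ (Q:ℝ)^2 := by
          gcongr
        have : 0 ≤ (9999/10000:ℝ)^(k+1) * (n:ℝ)^2 := by positivity
        linarith
  obtain ⟨k, hk⟩ := exists_pow_lt_of_lt_one hκ (show (9999/10000:ℝ) < 1 by norm_num)
  obtain ⟨C, hC, hB⟩ := main k
  refine ⟨C, hC, fun p n hp E hE => (hB p n hp E hE).trans ?_⟩
  gcongr

noncomputable def EE {X : Type u} (f g : X → ℝ) : X → X → ℝ := fun x y => (f x + f y) / 2 * (g y - g x)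

def ES (X : Type u) [MetricSpace X] : Set (X → X → ℝ) :=
  {E | ∃ f g : X → ℝ, (∀ x y, |f x - f y| ≤ dist x y) ∧ (∀ x y, |g x - g y| ≤ dist x y) ∧ E = EE f g}

lemma ES_anti {X : Type u} [MetricSpace X] : ∀ E ∈ ES X, ∀ x y, E y x = - E x y := by
  rintro E ⟨f, g, _, _, rfl⟩ x y
  unfold EE; ring

lemma ES_base {X : Type u} [MetricSpace X] : Bd X (ES X) 1 0 := by
  rintro p n hp E ⟨f, g, hf, hg, rfl⟩
  have tel : ∑ t ∈ Finset.range n, (g (p (t+1)) - g (p t)) = 0 := by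
    rw [Finset.sum_range_sub (fun t => g (p t)), hp.1, sub_self]
  have e1 : JJ (EE f g) p n = ∑ t ∈ Finset.range n,
      ((f (p t) + f (p (t+1))) / 2 - f (p 0)) * (g (p (t+1)) - g (p t)) := by
    have : ∀ t, ((f (p t) + f (p (t+1))) / 2 - f (p 0)) * (g (p (t+1)) - g (p t)) =
      EE f g (p t) (p (t+1)) - f (p 0) * (g (p (t+1)) - g (p t)) := by
      intro t; unfold EE; ring
    simp_rw [this]
    rw [Finset.sum_sub_distrib, ← Finset.mul_sum, tel, mul_zero, sub_zero]; rfl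
  rw [e1]
  have hfd : ∀ t ≤ n, |f (p t) - f (p 0)| ≤ n := by
    intro t ht
    have h1 := steps_le p n hp.2 0 t (Nat.zero_le _) ht
    have h2 := hf (p t) (p 0)
    rw [dist_comm] at h2
    have : (t:ℝ) ≤ n := by exact_mod_cast ht
    simp at h1
    linarith
  calc _ ≤ ∑ t ∈ Finset.range n,
      |((f (p t) + f (p (t+1))) / 2 - f (p 0)) * (g (p (t+1)) - g (p t))| :=
        Finset.abs_sum_le_sum_abs _ _
    _ ≤ ∑ t ∈ Finset.range n, (n:ℝ) := by
        refine Finset.sum_le_sum fun t ht => ?_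
        rw [Finset.mem_range] at ht
        rw [abs_mul]
        have a1 := abs_le.1 (hfd t ht.le)
        have a2 := abs_le.1 (hfd (t+1) ht)
        have a3 : |(f (p t) + f (p (t+1))) / 2 - f (p 0)| ≤ n := by
          rw [abs_le]; constructor <;> linarith [a1.1, a1.2, a2.1, a2.2]
        have a4 : |g (p (t+1)) - g (p t)| ≤ 1 := by
          have := hg (p (t+1)) (p t)
          rw [dist_comm] at this
          exact this.trans (hp.2 t ht)
        have := mul_le_mul a3 a4 (abs_nonneg _) (by positivity)
        linarith
    _ = 1 * (n:ℝ)^2 + 0 := by simp; ring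


def OC {X : Type u} [MetricSpace X] (P : X → Prop) (x y : X) (L : ℝ) : Prop :=
  ∃ (n : ℕ) (r : ℕ → X), (n:ℝ) ≤ L ∧ r 0 = x ∧ r n = y ∧ Steps r n ∧ ∀ t ≤ n, P (r t)

lemma OC_cat {X : Type u} [MetricSpace X] {P : X → Prop} {x y z : X} {L L' : ℝ}
    (h : OC P x y L) (h' : OC P y z L') : OC P x z (L + L') := by
  obtain ⟨n, r, a1, a2, a3, a4, a5⟩ := h
  obtain ⟨m, q, b1, b2, b3, b4, b5⟩ := h'
  have c : r n = q 0 := by rw [a3, b2]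
  refine ⟨n + m, cat r n q, by push_cast; linarith, ?_, ?_, Steps_cat c a4 b4, ?_⟩
  · rw [cat_le _ _ _ (Nat.zero_le _), a2]
  · rw [cat_add _ _ _ c, b3]
  · intro t ht
    rcases le_total t n with h1 | h1
    · rw [cat_le _ _ _ h1]; exact a5 t h1
    · obtain ⟨s, rfl⟩ := Nat.exists_eq_add_of_le h1
      rw [cat_add _ _ _ c]; exact b5 s (by omega)

lemma OC_rev {X : Type u} [MetricSpace X] {P : X → Prop} {x y : X} {L : ℝ}
    (h : OC P x y L) : OC P y x L := by
  obtain ⟨n, r, a1, a2, a3, a4, a5⟩ := h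
  refine ⟨n, rev r n, a1, ?_, ?_, Steps_rev a4, ?_⟩
  · simp [rev, a3]
  · simp [rev, a2]
  · intro t ht; exact a5 _ (by omega)

lemma partition (α β : ℝ) (h : α ≤ β) : ∃ (m : ℕ) (τ : ℕ → ℝ), (m:ℝ) ≤ β - α + 1 ∧ τ 0 = α ∧
    τ m = β ∧ (∀ t, τ t ∈ Set.Icc α β) ∧ ∀ t, τ t ≤ τ (t+1) ∧ τ (t+1) ≤ τ t + 1 := by
  refine ⟨⌈β - α⌉₊, fun t => min β (α + t), (Nat.ceil_lt_add_one (by linarith)).le, ?_, ?_, ?_, ?_⟩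
  · simp [h]
  · have := Nat.le_ceil (β - α)
    exact min_eq_left (by linarith)
  · intro t
    have : (0:ℝ) ≤ t := by positivity
    exact ⟨le_min h (by linarith), min_le_left _ _⟩
  · intro t
    push_cast
    constructor
    · exact min_le_min le_rfl (by linarith)
    · rw [← min_add_add_right]
      exact min_le_min (by linarith) (by linarith)

lemma OC_curve {X : Type u} [MetricSpace X] {P : X → Prop} (c : ℝ → X) (α β : ℝ) (h : α ≤ β)
    (hc : ∀ s ∈ Set.Icc α β, ∀ t ∈ Set.Icc α β, dist (c s) (c t) ≤ |s - t|)
    (hP : ∀ s ∈ Set.Icc α β, P (c s)) : OC P (c α) (c β) (β - α + 1) := by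
  obtain ⟨m, τ, h1, h2, h3, h4, h5⟩ := partition α β h
  refine ⟨m, fun t => c (τ t), h1, by simp only [h2], by simp only [h3], ?_, fun t _ => hP _ (h4 t)⟩
  intro t ht
  refine (hc _ (h4 t) _ (h4 (t+1))).trans ?_
  rw [abs_le]; constructor <;> linarith [(h5 t).1, (h5 t).2]

lemma OC_side {X : Type u} [MetricSpace X] (hX : GeodesicSpace X) (p x y : X) (D : ℝ)
    (h1 : dist x y ≤ D) (h2 : 2 * D ≤ dist p x ∨ (x = y ∧ D ≤ dist p x)) :
    OC (fun w => D ≤ dist p w) x y (D + 1) := by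
  obtain ⟨g, g0, g1, gd⟩ := hX x y
  have := OC_curve (P := fun w => D ≤ dist p w) g 0 (dist x y) dist_nonneg
    (fun s hs t ht => (gd s hs t ht).le) (by
      intro s hs
      have e := gd 0 ⟨le_rfl, dist_nonneg⟩ s hs
      rw [g0, zero_sub, abs_neg, abs_of_nonneg hs.1] at e
      rcases h2 with h2 | ⟨h2, h3⟩
      · have := dist_triangle_right p x (g s)
        have := hs.2
        linarith
      · have h4 := hs.2
        have h5 := hs.1
        rw [h2, dist_self] at h4
        have : s = 0 := le_antisymm h4 h5
        rw [this, g0]; exact h3)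
  rw [g0, g1] at this
  obtain ⟨n, r, a1, a2⟩ := this
  exact ⟨n, r, by linarith, a2⟩

lemma clip_lip (a b u v : ℝ) : |min a (max b u) - min a (max b v)| ≤ |u - v| := by
  rcases le_total u v with h | h
  · have h1 : min a (max b u) ≤ min a (max b v) := min_le_min le_rfl (max_le_max le_rfl h)
    rw [abs_sub_comm, abs_of_nonneg (by linarith), abs_sub_comm, abs_of_nonneg (by linarith)]
    rcases le_total b u with h2 | h2 <;> rcases le_total b v with h3 | h3 <;>
    rcases le_total a u with h4 | h4 <;> rcases le_total a v with h5 | h5 <;>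
    rcases le_total a b with h6 | h6 <;> simp [*] <;> linarith
  · have h1 : min a (max b v) ≤ min a (max b u) := min_le_min le_rfl (max_le_max le_rfl h)
    rw [abs_of_nonneg (by linarith), abs_of_nonneg (by linarith)]
    rcases le_total b u with h2 | h2 <;> rcases le_total b v with h3 | h3 <;>
    rcases le_total a u with h4 | h4 <;> rcases le_total a v with h5 | h5 <;>
    rcases le_total a b with h6 | h6 <;> simp [*] <;> linarith

/-- area lower bound -/
lemma area_lower_s3 {X : Type u} [MetricSpace X] (κ C : ℝ) (hκ : κ = 1/2500) (hC : 0 ≤ C)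
    (hB : Bd X (ES X) κ C) (x z : X) (G : ℝ → X) (hG : IsGeodesicSeg x z G) (D s0 sm sp : ℝ)
    (h0 : 0 ≤ sm) (h1 : sm + D ≤ s0) (h2 : s0 + D ≤ sp) (h3 : sp ≤ dist x z) (hw : sp ≤ sm + 4 * D)
    (hoff : OC (fun w => D ≤ dist (G s0) w) (G sp) (G sm) (20 * D + 3)) : D ≤ C + 8 := by
  by_contra hcon
  push Not at hcon
  have hD : 8 < D := by linarith
  obtain ⟨g0, g1, gd⟩ := hG
  obtain ⟨m1, τ, t1, t2, t3, t4, t5⟩ := partition sm sp (by linarith)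
  obtain ⟨m2, q, q1, q2, q3, q4, q5⟩ := hoff
  have hI : ∀ t ∈ Set.Icc sm sp, t ∈ Set.Icc 0 (dist x z) := fun t ht =>
    ⟨by linarith [ht.1], by linarith [ht.2]⟩
  set f : X → ℝ := fun w => min (D/2) (max 0 (D - dist (G s0) w)) with hf
  set g : X → ℝ := fun w => min D (max 0 (dist (G sm) w - (s0 - sm - D/2))) with hg
  have hfl : ∀ x y, |f x - f y| ≤ dist x y := by
    intro a b
    refine (clip_lip _ _ _ _).trans ?_
    have := abs_dist_sub_le b a (G s0)
    rw [dist_comm b (G s0), dist_comm a (G s0), dist_comm b a] at this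
    rwa [show D - dist (G s0) a - (D - dist (G s0) b) = dist (G s0) b - dist (G s0) a by ring]
  have hgl : ∀ x y, |g x - g y| ≤ dist x y := by
    intro a b
    refine (clip_lip _ _ _ _).trans ?_
    have := abs_dist_sub_le a b (G sm)
    rw [dist_comm b (G sm), dist_comm a (G sm)] at this
    rwa [show dist (G sm) a - (s0 - sm - D/2) - (dist (G sm) b - (s0 - sm - D/2)) =
      dist (G sm) a - dist (G sm) b by ring]
  set r : ℕ → X := fun t => G (τ t) with hr
  have c : r m1 = q 0 := by rw [hr, q2]; simp only [t3]
  have hrs : Steps r m1 := by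
    intro t ht
    show dist (G (τ t)) (G (τ (t+1))) ≤ 1
    rw [gd _ (hI _ (t4 t)) _ (hI _ (t4 (t+1)))]
    rw [abs_le]; constructor <;> linarith [(t5 t).1, (t5 t).2]
  have hloop : IsLoop (cat r m1 q) (m1 + m2) := by
    refine ⟨?_, Steps_cat c hrs q4⟩
    rw [cat_add _ _ _ c, q3, cat_le _ _ _ (Nat.zero_le _), hr]; simp only [t2]
  have hb := hB _ _ hloop (EE f g) ⟨f, g, hfl, hgl, rfl⟩
  rw [JJ_cat _ _ _ _ c] at hb
  have hq0 : JJ (EE f g) q m2 = 0 := by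
    refine Finset.sum_eq_zero fun t ht => ?_
    rw [Finset.mem_range] at ht
    have a1 : ∀ w, D ≤ dist (G s0) w → f w = 0 := by
      intro w hw
      have : max 0 (D - dist (G s0) w) = 0 := max_eq_left (by linarith)
      simp only [hf, this]
      exact min_eq_right (by linarith)
    unfold EE
    rw [a1 _ (q5 t ht.le), a1 _ (q5 (t+1) ht)]; simp
  have hs0 : s0 ∈ Set.Icc sm sp := ⟨by linarith, by linarith⟩
  have fv : ∀ σ ∈ Set.Icc sm sp, f (G σ) = min (D/2) (max 0 (D - |s0 - σ|)) := by
    intro σ hσ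
    simp only [hf, gd _ (hI _ hs0) _ (hI _ hσ)]
  have gv : ∀ σ ∈ Set.Icc sm sp, g (G σ) = min D (max 0 (σ - s0 + D/2)) := by
    intro σ hσ
    have hsm : sm ∈ Set.Icc sm sp := ⟨le_rfl, by linarith⟩
    simp only [hg, gd _ (hI _ hsm) _ (hI _ hσ)]
    rw [abs_sub_comm, abs_of_nonneg (by linarith [hσ.1])]
    congr 2; ring
  have hlow : (D/2 - 1) * D ≤ JJ (EE f g) r m1 := by
    have tel : ∑ t ∈ Finset.range m1, (g (r (t+1)) - g (r t)) = D := by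
      rw [Finset.sum_range_sub (fun t => g (r t))]
      simp only [hr, t2, t3]
      rw [gv sp ⟨by linarith, le_rfl⟩, gv sm ⟨le_rfl, by linarith⟩, max_eq_right (by linarith),
        min_eq_left (by linarith), max_eq_left (by linarith), min_eq_right (by linarith), sub_zero]
    have : (D/2 - 1) * D = ∑ t ∈ Finset.range m1, (D/2 - 1) * (g (r (t+1)) - g (r t)) := by
      rw [← Finset.mul_sum, tel]
    rw [this]
    refine Finset.sum_le_sum fun t ht => ?_
    unfold EE
    have u1 := t4 t
    have u2 := t4 (t+1)
    have u3 := t5 t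
    simp only [hr]
    generalize τ t = σ at *
    generalize τ (t+1) = σ' at *
    have mono : g (G σ) ≤ g (G σ') := by
      rw [gv _ u1, gv _ u2]
      exact min_le_min le_rfl (max_le_max le_rfl (by linarith))
    rcases mono.eq_or_lt with h | h
    · rw [h]; simp
    · have a1 : σ < s0 + D/2 := by
        by_contra hh
        push Not at hh
        have : g (G σ) = D := by
          rw [gv _ u1, max_eq_right (by linarith), min_eq_left (by linarith)]
        rw [this, gv _ u2] at h
        exact absurd (min_le_left _ _) (not_le.2 h)
      have a2 : s0 - D/2 < σ' := by
        by_contra hh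
        push Not at hh
        have : g (G σ') = 0 := by
          rw [gv _ u2, max_eq_left (by linarith), min_eq_right (by linarith)]
        rw [this, gv _ u1] at h
        exact absurd (le_min (by linarith) (le_max_left _ _)) (not_le.2 h)
      have b1 : D/2 - 1 ≤ f (G σ) := by
        rw [fv _ u1]
        refine le_min (by linarith) (le_max_of_le_right ?_)
        have : |s0 - σ| ≤ D/2 + 1 := by rw [abs_le]; constructor <;> linarith [u3.1, u3.2]
        linarith
      have b2 : D/2 - 1 ≤ f (G σ') := by
        rw [fv _ u2]
        refine le_min (by linarith) (le_max_of_le_right ?_)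
        have : |s0 - σ'| ≤ D/2 + 1 := by rw [abs_le]; constructor <;> linarith [u3.1, u3.2]
        linarith
      have : D/2 - 1 ≤ (f (G σ) + f (G σ'))/2 := by linarith
      exact mul_le_mul_of_nonneg_right this (by linarith)
  rw [hq0, add_zero] at hb
  have hb2 := (le_abs_self _).trans hb
  have hlen : ((m1 + m2 : ℕ):ℝ) ≤ 25 * D := by push_cast; linarith
  have hsq : ((m1 + m2 : ℕ):ℝ)^2 ≤ (25 * D)^2 := pow_le_pow_left₀ (by positivity) hlen 2
  rw [hκ] at hb2
  nlinarith


lemma morse1 {X : Type u} [MetricSpace X] (hX : GeodesicSpace X) (κ C : ℝ) (hκ : κ = 1/2500)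
    (hC : 0 ≤ C) (hB : Bd X (ES X) κ C) (x z : X) (G : ℝ → X) (hG : IsGeodesicSeg x z G)
    (l : ℝ) (hl : 0 ≤ l) (c : ℝ → X) (c0 : c 0 = x) (c1 : c l = z)
    (hc : ∀ s ∈ Set.Icc 0 l, ∀ t ∈ Set.Icc 0 l, dist (c s) (c t) ≤ |s - t|)
    (hc3 : ∀ s ∈ Set.Icc 0 l, ∀ t ∈ Set.Icc 0 l, |s - t| ≤ 3 * dist (c s) (c t))
    (s : ℝ) (hs : s ∈ Set.Icc 0 (dist x z)) : ∃ t ∈ Set.Icc 0 l, dist (G s) (c t) ≤ C + 8 := by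
  have ccont : ContinuousOn c (Set.Icc 0 l) := by
    have : LipschitzOnWith 1 c (Set.Icc 0 l) := LipschitzOnWith.of_dist_le_mul (by
      intro a ha b hb; simpa [Real.dist_eq] using hc a ha b hb)
    exact this.continuousOn
  have gcont : ContinuousOn G (Set.Icc 0 (dist x z)) := by
    have : LipschitzOnWith 1 G (Set.Icc 0 (dist x z)) := LipschitzOnWith.of_dist_le_mul (by
      intro a ha b hb; simpa [Real.dist_eq] using (hG.2.2 a ha b hb).le)
    exact this.continuousOn
  have hK : IsCompact (c '' Set.Icc 0 l) := isCompact_Icc.image_of_continuousOn ccont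
  have hKne : (c '' Set.Icc 0 l).Nonempty := ⟨c 0, 0, ⟨le_rfl, hl⟩, rfl⟩
  have hd0 : 0 ≤ dist x z := dist_nonneg
  obtain ⟨s0, hs0, hmax⟩ := isCompact_Icc.exists_isMaxOn (s := Set.Icc 0 (dist x z)) ⟨0, le_rfl, hd0⟩
    ((Metric.continuous_infDist_pt (c '' Set.Icc 0 l)).comp_continuousOn gcont)
  set D := Metric.infDist (G s0) (c '' Set.Icc 0 l) with hD
  have hD0 : 0 ≤ D := Metric.infDist_nonneg
  have near : ∀ s ∈ Set.Icc 0 (dist x z), ∃ t ∈ Set.Icc 0 l, dist (G s) (c t) ≤ D := by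
    intro s hs
    obtain ⟨y, ⟨t, ht, rfl⟩, hy⟩ := hK.exists_infDist_eq_dist hKne (G s)
    exact ⟨t, ht, hy ▸ hmax hs⟩
  have far : ∀ t ∈ Set.Icc 0 l, D ≤ dist (G s0) (c t) := fun t ht =>
    Metric.infDist_le_dist_of_mem ⟨t, ht, rfl⟩
  obtain ⟨g0, g1, gd⟩ := hG
  have f0 : D ≤ s0 := by
    have := far 0 ⟨le_rfl, hl⟩
    rwa [c0, ← g0, gd _ hs0 _ ⟨le_rfl, hd0⟩, sub_zero, abs_of_nonneg hs0.1] at this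
  have f1 : s0 + D ≤ dist x z := by
    have := far l ⟨hl, le_rfl⟩
    rw [c1, ← g1, gd _ hs0 _ ⟨hd0, le_rfl⟩, abs_sub_comm,
      abs_of_nonneg (by linarith [hs0.2])] at this
    linarith
  -- left endpoint
  obtain ⟨sm, a1, a2, a3, tu, htu, a4, a5⟩ : ∃ sm, 0 ≤ sm ∧ sm + D ≤ s0 ∧ s0 ≤ sm + 2 * D ∧
      ∃ t ∈ Set.Icc 0 l, dist (G sm) (c t) ≤ D ∧ (2 * D ≤ dist (G s0) (G sm) ∨
        (G sm = c t ∧ D ≤ dist (G s0) (G sm))) := by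
    rcases le_total (2 * D) s0 with h | h
    · have hm : s0 - 2 * D ∈ Set.Icc 0 (dist x z) := ⟨by linarith, by linarith [hs0.2]⟩
      obtain ⟨t, ht, hh⟩ := near _ hm
      refine ⟨s0 - 2 * D, hm.1, by linarith, by linarith, t, ht, hh, Or.inl ?_⟩
      rw [gd _ hs0 _ hm]
      refine le_trans (le_of_eq ?_) (le_abs_self _)
      ring
    · refine ⟨0, le_rfl, by linarith, by linarith, 0, ⟨le_rfl, hl⟩, ?_, Or.inr ⟨by rw [g0, c0], ?_⟩⟩
      · rw [g0, c0, dist_self]; exact hD0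
      · rw [gd _ hs0 _ ⟨le_rfl, hd0⟩, sub_zero]; exact f0.trans (le_abs_self _)
  obtain ⟨sp, b1, b2, b3, tv, htv, b4, b5⟩ : ∃ sp, sp ≤ dist x z ∧ s0 + D ≤ sp ∧ sp ≤ s0 + 2 * D ∧
      ∃ t ∈ Set.Icc 0 l, dist (G sp) (c t) ≤ D ∧ (2 * D ≤ dist (G s0) (G sp) ∨
        (G sp = c t ∧ D ≤ dist (G s0) (G sp))) := by
    rcases le_total (s0 + 2 * D) (dist x z) with h | h
    · have hm : s0 + 2 * D ∈ Set.Icc 0 (dist x z) := ⟨by linarith [hs0.1], h⟩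
      obtain ⟨t, ht, hh⟩ := near _ hm
      refine ⟨s0 + 2 * D, hm.2, by linarith, by linarith, t, ht, hh, Or.inl ?_⟩
      rw [gd _ hs0 _ hm]
      refine le_trans (le_of_eq ?_) (neg_le_abs _)
      ring
    · refine ⟨dist x z, le_rfl, by linarith, by linarith, l, ⟨hl, le_rfl⟩, ?_,
        Or.inr ⟨by rw [g1, c1], ?_⟩⟩
      · rw [g1, c1, dist_self]; exact hD0
      · rw [gd _ hs0 _ ⟨hd0, le_rfl⟩, abs_sub_comm]
        exact le_trans (by linarith) (le_abs_self _)
  have hsm : sm ∈ Set.Icc 0 (dist x z) := ⟨a1, by linarith⟩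
  have hsp : sp ∈ Set.Icc 0 (dist x z) := ⟨by linarith, b1⟩
  have huv : |tv - tu| ≤ 18 * D := by
    have h1 := hc3 tv htv tu htu
    have h2 := dist_triangle4 (c tv) (G sp) (G sm) (c tu)
    rw [dist_comm (c tv) (G sp), gd _ hsp _ hsm, abs_of_nonneg (by linarith)] at h2
    linarith
  have o1 := OC_side hX (G s0) (G sp) (c tv) D b4 b5
  have o3 := OC_rev (OC_side hX (G s0) (G sm) (c tu) D a4 a5)
  have o2 : OC (fun w => D ≤ dist (G s0) w) (c tv) (c tu) (18 * D + 1) := by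
    have aux : ∀ a ∈ Set.Icc 0 l, ∀ b ∈ Set.Icc 0 l, a ≤ b → b - a ≤ 18 * D →
        OC (fun w => D ≤ dist (G s0) w) (c a) (c b) (18 * D + 1) := by
      intro a ha b hb hab hlen
      have hI : ∀ t ∈ Set.Icc a b, t ∈ Set.Icc 0 l := fun t ht =>
        ⟨ha.1.trans ht.1, ht.2.trans hb.2⟩
      obtain ⟨n, r, q1, q2⟩ := OC_curve (P := fun w => D ≤ dist (G s0) w) c a b hab
        (fun s hs t ht => hc s (hI s hs) t (hI t ht)) (fun s hs => far s (hI s hs))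
      exact ⟨n, r, by linarith, q2⟩
    rcases le_total tv tu with h | h
    · exact aux tv htv tu htu h (by rw [abs_sub_comm, abs_of_nonneg (by linarith)] at huv; exact huv)
    · exact OC_rev (aux tu htu tv htv h (by rw [abs_of_nonneg (by linarith)] at huv; exact huv))
  have o := OC_cat (OC_cat o1 o2) o3
  have hfin := area_lower_s3 κ C hκ hC hB x z G ⟨g0, g1, gd⟩ D s0 sm sp a1 a2 b2 b1 (by linarith) (by
    obtain ⟨n, r, q1, q2⟩ := o
    exact ⟨n, r, by linarith, q2⟩)
  obtain ⟨t, ht, hh⟩ := near s hs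
  exact ⟨t, ht, hh.trans hfin⟩

lemma morse2 {X : Type u} [MetricSpace X] (hX : GeodesicSpace X) (κ C : ℝ) (hκ : κ = 1/2500)
    (hC : 0 ≤ C) (hB : Bd X (ES X) κ C) (x z : X) (G : ℝ → X) (hG : IsGeodesicSeg x z G)
    (l : ℝ) (hl : 0 ≤ l) (c : ℝ → X) (c0 : c 0 = x) (c1 : c l = z)
    (hc : ∀ s ∈ Set.Icc 0 l, ∀ t ∈ Set.Icc 0 l, dist (c s) (c t) ≤ |s - t|)
    (hc3 : ∀ s ∈ Set.Icc 0 l, ∀ t ∈ Set.Icc 0 l, |s - t| ≤ 3 * dist (c s) (c t))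
    (t : ℝ) (ht : t ∈ Set.Icc 0 l) :
    ∃ s ∈ Set.Icc 0 (dist x z), dist (c t) (G s) ≤ 7 * (C + 8) + 3 := by
  have hm := morse1 hX κ C hκ hC hB x z G hG l hl c c0 c1 hc hc3
  obtain ⟨g0, g1, gd⟩ := hG
  have hd0 : 0 ≤ dist x z := dist_nonneg
  set R := C + 8 with hR
  have hR0 : 0 ≤ R := by linarith
  set A : Set ℝ := {s | s ∈ Set.Icc 0 (dist x z) ∧ ∃ t1 ∈ Set.Icc 0 t, dist (G s) (c t1) ≤ R} with hA
  have hA0 : (0:ℝ) ∈ A := ⟨⟨le_rfl, hd0⟩, 0, ⟨le_rfl, ht.1⟩, by rw [g0, c0, dist_self]; exact hR0⟩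
  have hbd : BddAbove A := ⟨dist x z, fun s hs => hs.1.2⟩
  obtain ⟨s, hsA, hs⟩ := exists_lt_of_lt_csSup ⟨0, hA0⟩ (show sSup A - 1/2 < sSup A by linarith)
  have hsle := le_csSup hbd hsA
  obtain ⟨s', hs', hss, t2, ht2, hd2⟩ : ∃ s' ∈ Set.Icc 0 (dist x z), |s - s'| ≤ 1 ∧
      ∃ t2 ∈ Set.Icc t l, dist (G s') (c t2) ≤ R := by
    rcases le_or_gt (dist x z) (sSup A + 1/2) with h | h
    · refine ⟨dist x z, ⟨hd0, le_rfl⟩, ?_, l, ⟨ht.2, le_rfl⟩, by rw [g1, c1, dist_self]; exact hR0⟩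
      rw [abs_sub_comm, abs_of_nonneg (by linarith [hsA.1.2])]
      linarith
    · have h1 : sSup A + 1/2 ∈ Set.Icc 0 (dist x z) :=
        ⟨by linarith [hsA.1.1], h.le⟩
      refine ⟨sSup A + 1/2, h1, ?_, ?_⟩
      · rw [abs_sub_comm, abs_of_nonneg (by linarith)]; linarith
      · obtain ⟨t2, ht2, hh⟩ := hm _ h1
        refine ⟨t2, ⟨?_, ht2.2⟩, hh⟩
        by_contra hlt
        push Not at hlt
        have := le_csSup hbd (show sSup A + 1/2 ∈ A from ⟨h1, t2, ⟨ht2.1, hlt.le⟩, hh⟩)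
        linarith
  obtain ⟨hsI, t1, ht1, hd1⟩ := hsA
  have i1 : t1 ∈ Set.Icc 0 l := ⟨ht1.1, ht1.2.trans ht.2⟩
  have i2 : t2 ∈ Set.Icc 0 l := ⟨ht.1.trans ht2.1, ht2.2⟩
  refine ⟨s, hsI, ?_⟩
  have e1 := dist_triangle4 (c t2) (G s') (G s) (c t1)
  rw [dist_comm (c t2) (G s'), gd _ hs' _ hsI, abs_sub_comm] at e1
  have e2 := hc3 t2 i2 t1 i1
  rw [abs_of_nonneg (by linarith [ht1.2, ht2.1])] at e2
  have e3 := hc t ht t1 i1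
  rw [abs_of_nonneg (by linarith [ht1.2])] at e3
  have e4 := dist_triangle_right (c t) (G s) (c t1)
  linarith [ht2.1]

lemma half {X : Type u} [MetricSpace X] (hX : GeodesicSpace X) (κ C : ℝ) (hκ : κ = 1/2500)
    (hC : 0 ≤ C) (hB : Bd X (ES X) κ C) (x y z : X) (g G : ℝ → X) (hg : IsGeodesicSeg x y g)
    (hG : IsGeodesicSeg x z G) (sw : ℝ) (hsw : sw ∈ Set.Icc 0 (dist x y))
    (hmin : ∀ s ∈ Set.Icc 0 (dist x y), dist (g sw) z ≤ dist (g s) z) (s : ℝ) (hs0 : 0 ≤ s)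
    (hs : s ≤ sw) : ∃ s' ∈ Set.Icc 0 (dist x z), dist (g s) (G s') ≤ 7 * (C + 8) + 3 := by
  obtain ⟨g0, g1, gd⟩ := hg
  obtain ⟨h, h0, h1, hd⟩ := hX (g sw) z
  set w := g sw with hw
  have hwz : 0 ≤ dist w z := dist_nonneg
  set c : ℝ → X := fun t => if t ≤ sw then g t else h (t - sw) with hcdef
  have cl : ∀ t, t ≤ sw → c t = g t := fun t ht => by simp [hcdef, ht]
  have cr : ∀ t, sw ≤ t → c t = h (t - sw) := by
    intro t ht
    rcases ht.eq_or_lt with e | e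
    · rw [cl t e.symm.le, ← e, sub_self, h0]
    · simp [hcdef, e]
  have dw : ∀ t, 0 ≤ t → t ≤ sw → dist (g t) w = sw - t := by
    intro t ht hts
    rw [hw, gd t ⟨ht, hts.trans hsw.2⟩ sw hsw, abs_sub_comm, abs_of_nonneg (by linarith)]
  have key : ∀ a ∈ Set.Icc 0 (sw + dist w z), ∀ b ∈ Set.Icc 0 (sw + dist w z), a ≤ b →
      dist (c a) (c b) ≤ b - a ∧ b - a ≤ 3 * dist (c a) (c b) := by
    intro a ha b hb hab
    rcases le_total b sw with hbs | hbs
    · rw [cl a (hab.trans hbs), cl b hbs, gd a ⟨ha.1, (hab.trans hbs).trans hsw.2⟩ b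
        ⟨hb.1, hbs.trans hsw.2⟩, abs_sub_comm, abs_of_nonneg (by linarith)]
      constructor <;> linarith
    · have ib : b - sw ∈ Set.Icc 0 (dist w z) := ⟨by linarith, by linarith [hb.2]⟩
      rcases le_total sw a with has | has
      · rw [cr a has, cr b hbs, hd (a - sw) ⟨by linarith, by linarith [ha.2]⟩ (b - sw) ib,
          abs_sub_comm, abs_of_nonneg (by linarith)]
        constructor <;> linarith
      · rw [cl a has, cr b hbs]
        have e1 := dw a ha.1 has
        have e2 := hd 0 ⟨le_rfl, hwz⟩ (b - sw) ib
        rw [h0, zero_sub, abs_neg, abs_of_nonneg ib.1] at e2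
        have e3 := hd (b - sw) ib (dist w z) ⟨hwz, le_rfl⟩
        rw [h1, abs_sub_comm, abs_of_nonneg (by linarith [ib.2])] at e3
        have e4 := hmin a ⟨ha.1, has.trans hsw.2⟩
        have e5 := dist_triangle (g a) (h (b - sw)) z
        have e6 := dist_triangle (g a) w (h (b - sw))
        have e7 := dist_triangle_right (g a) w (h (b - sw))
        constructor <;> linarith
  have res := morse2 hX κ C hκ hC hB x z G hG (sw + dist w z) (by linarith [hsw.1]) c
    (by rw [cl 0 hsw.1, g0]) (by rw [cr _ (by linarith), add_sub_cancel_left, h1]) (by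
      intro a ha b hb
      rcases le_total a b with hab | hab
      · rw [abs_sub_comm, abs_of_nonneg (by linarith)]; exact (key a ha b hb hab).1
      · rw [dist_comm, abs_of_nonneg (by linarith)]; exact (key b hb a ha hab).1) (by
      intro a ha b hb
      rcases le_total a b with hab | hab
      · rw [abs_sub_comm, abs_of_nonneg (by linarith)]; exact (key a ha b hb hab).2
      · rw [dist_comm, abs_of_nonneg (by linarith)]; exact (key b hb a ha hab).2) s
      ⟨hs0, by linarith⟩
  rw [cl s hs] at res
  exact res

lemma geod_rev {X : Type u} [MetricSpace X] (x y : X) (g : ℝ → X) (hg : IsGeodesicSeg x y g) :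
    IsGeodesicSeg y x (fun s => g (dist x y - s)) := by
  obtain ⟨g0, g1, gd⟩ := hg
  refine ⟨by simpa using g1, by simp [dist_comm y x, g0], ?_⟩
  intro s hs t ht
  rw [dist_comm y x] at hs ht
  show dist (g (dist x y - s)) (g (dist x y - t)) = _
  rw [gd _ ⟨by linarith [hs.2], by linarith [hs.1]⟩ _ ⟨by linarith [ht.2], by linarith [ht.1]⟩,
    abs_sub_comm]
  congr 1; ring

lemma hyp_of_bd {X : Type u} [MetricSpace X] (hX : GeodesicSpace X) (C : ℝ)
    (hC : 0 ≤ C) (hB : Bd X (ES X) (1/2500) C) : GromovHyperbolic X := by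
  refine ⟨7 * (C + 8) + 3, by linarith, ?_⟩
  intro x y z gxy gyz gzx hxy hyz hzx s hs
  have gcont : ContinuousOn gxy (Set.Icc 0 (dist x y)) := by
    have : LipschitzOnWith 1 gxy (Set.Icc 0 (dist x y)) := LipschitzOnWith.of_dist_le_mul (by
      intro a ha b hb; simpa [Real.dist_eq] using (hxy.2.2 a ha b hb).le)
    exact this.continuousOn
  obtain ⟨sw, hsw, hmin⟩ := isCompact_Icc.exists_isMinOn (s := Set.Icc 0 (dist x y))
    ⟨0, le_rfl, dist_nonneg⟩ ((continuous_id.dist (continuous_const (y := z))).comp_continuousOn gcont)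
  have hmin' : ∀ s ∈ Set.Icc 0 (dist x y), dist (gxy sw) z ≤ dist (gxy s) z := fun s hs => hmin hs
  rcases le_total s sw with h | h
  · obtain ⟨s', hs', hd⟩ := half hX _ C rfl hC hB x y z gxy _ hxy (geod_rev z x gzx hzx) sw hsw
      hmin' s hs.1 h
    rw [dist_comm x z] at hs'
    exact ⟨_, Or.inr ⟨dist z x - s', ⟨by linarith [hs'.2], by linarith [hs'.1]⟩, rfl⟩, hd⟩
  · obtain ⟨s', hs', hd⟩ := half hX _ C rfl hC hB y x z _ gyz (geod_rev x y gxy hxy) hyz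
      (dist x y - sw) (by rw [dist_comm y x]; exact ⟨by linarith [hsw.2], by linarith [hsw.1]⟩)
      (by
        intro t ht
        rw [dist_comm y x] at ht
        show dist (gxy (dist x y - (dist x y - sw))) z ≤ dist (gxy (dist x y - t)) z
        rw [sub_sub_cancel]
        exact hmin' _ ⟨by linarith [ht.2], by linarith [ht.1]⟩)
      (dist x y - s) (by linarith [hs.2]) (by linarith)
    simp only [sub_sub_cancel] at hd
    exact ⟨_, Or.inl ⟨s', hs', rfl⟩, hd⟩

/-- Theorem 6.2, filling radius version: let `X` be a geodesic
metric space admitting a disc-thickening with a quadratic isoperimetric inequality.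
If there are `ε ∈ (0,1)` and `s₀ > 0` such that every Lipschitz loop `γ` in `X` of
length at least `s₀` bounds a singular Lipschitz disc in `L^∞(X)` whose image is
contained in the closed `(1-ε)·(3/32)·length(γ)`-neighborhood of the image of
`κ ∘ γ`, then `X` is Gromov hyperbolic. -/
theorem fillrad_hyperbolic {X : Type u} [MetricSpace X] (x₀ : X)
    (hX : GeodesicSpace X) (hadm : HasDiscThickeningQII X)
    (h : ∃ ε : ℝ, 0 < ε ∧ ε < 1 ∧ ∃ s₀ > (0:ℝ), ∀ γ : ℝ → X, IsLipLoop γ →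
      s₀ ≤ loopLength γ →
      ∃ φ : ℝ × ℝ → Linfty X, BoundsLoop φ (fun s => kuratowski X x₀ (γ s)) ∧
        ∀ w ∈ D2, Metric.infDist (φ w) (kuratowski X x₀ '' (γ '' Set.Icc 0 1)) ≤
          (1 - ε) * (3 / 32) * loopLength γ) :
    GromovHyperbolic X := by
  obtain ⟨N, hN⟩ := loop_triple x₀ hX h
  obtain ⟨C, hC, hB⟩ := subquad hX (ES X) ES_anti N hN ES_base (1/2500) (by norm_num)
  exact hyp_of_bd hX C hC hB

end SharpIsop
end
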